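/- Let q = p^f be a power of a prime p, let n ≥ 2 and suppose GL_n(q) is not solvable. Let π be a set of primes with 2 ∈ π, 3 ∈ π and p ∉ π, and let H be a solvable Hall π-subgroup of GL_n(q). Set G = H·SL_n(q). Then there exist x, y, z ∈ G such that H ∩ H^x ∩ H^y ∩ H^z is contained in the center Z(GL_n(q)), i.e. consists of scalar matrices. -/

import Mathlib

open Matrix Pointwise

/-- `H^x = x⁻¹ H x`. -/
def conjBy {G : Type*} [Group G] (H : Subgroup G) (x : G) : Subgroup G :=
  Subgroup.map ((MulAut.conj x⁻¹).toMonoidHom) H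

/-- Hall π-subgroup of the whole group. -/
def IsHallSubgroup {G : Type*} [Group G] (π : Set ℕ) (H : Subgroup G) : Prop :=
  (∀ r : ℕ, r.Prime → r ∣ Nat.card H → r ∈ π) ∧ ∀ r ∈ π, ¬ r ∣ H.index

/-- Hall π-subgroup of the subgroup `K`. -/
def IsHallSubgroupIn {G : Type*} [Group G] (π : Set ℕ) (K H : Subgroup G) : Prop :=
  H ≤ K ∧ (∀ r : ℕ, r.Prime → r ∣ Nat.card H → r ∈ π) ∧ ∀ r ∈ π, ¬ r ∣ H.relIndex K

/-- The subgroup `SL_n` of `GL_n`. -/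
def SLsub (n : ℕ) (F : Type*) [Field F] : Subgroup (GL (Fin n) F) where
  carrier := {g | Matrix.det (g : Matrix (Fin n) (Fin n) F) = 1}
  one_mem' := by simp
  mul_mem' := by
    intro a b ha hb
    simp only [Set.mem_setOf_eq, Units.val_mul, Matrix.det_mul] at *
    rw [ha, hb, one_mul]
  inv_mem' := by
    intro g hg
    simp only [Set.mem_setOf_eq] at *
    have h1 : ((g⁻¹ : GL (Fin n) F) : Matrix (Fin n) (Fin n) F) *
        (g : Matrix (Fin n) (Fin n) F) = 1 := g.inv_mul
    have := congrArg Matrix.det h1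
    rw [Matrix.det_mul, Matrix.det_one, hg, mul_one] at this
    exact this

/-- The group of similitudes of the bilinear form `B` (acting on row vectors). -/
def similitudeGroup {n : ℕ} {F : Type*} [Field F]
    (B : (Fin n → F) → (Fin n → F) → F) : Subgroup (GL (Fin n) F) where
  carrier := {g | ∃ c : Fˣ, ∀ u v : Fin n → F,
    B (Matrix.vecMul u (g : Matrix (Fin n) (Fin n) F))
      (Matrix.vecMul v (g : Matrix (Fin n) (Fin n) F)) = (c : F) * B u v}
  one_mem' := ⟨1, by simp⟩
  mul_mem' := by
    rintro a b ⟨c, hc⟩ ⟨d, hd⟩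
    refine ⟨c * d, fun u v => ?_⟩
    simp only [Units.val_mul, ← Matrix.vecMul_vecMul, hd, hc]
    ring
  inv_mem' := by
    rintro g ⟨c, hc⟩
    refine ⟨c⁻¹, fun u v => ?_⟩
    have h1 : ∀ w : Fin n → F, Matrix.vecMul
        (Matrix.vecMul w ((g⁻¹ : GL (Fin n) F) : Matrix (Fin n) (Fin n) F))
        (g : Matrix (Fin n) (Fin n) F) = w := by
      intro w
      rw [Matrix.vecMul_vecMul, g.inv_mul, Matrix.vecMul_one]
    have h2 := hc (Matrix.vecMul u ((g⁻¹ : GL (Fin n) F) : Matrix (Fin n) (Fin n) F))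
      (Matrix.vecMul v ((g⁻¹ : GL (Fin n) F) : Matrix (Fin n) (Fin n) F))
    rw [h1, h1] at h2
    rw [h2, Units.val_inv_eq_inv_val, inv_mul_cancel_left₀ (by exact_mod_cast c.ne_zero)]

/-- The isometry group of the bilinear form `B` (acting on row vectors). -/
def isometryGroup {n : ℕ} {F : Type*} [Field F]
    (B : (Fin n → F) → (Fin n → F) → F) : Subgroup (GL (Fin n) F) where
  carrier := {g | ∀ u v : Fin n → F,
    B (Matrix.vecMul u (g : Matrix (Fin n) (Fin n) F))
      (Matrix.vecMul v (g : Matrix (Fin n) (Fin n) F)) = B u v}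
  one_mem' := by simp
  mul_mem' := by
    intro a b ha hb u v
    simp only [Set.mem_setOf_eq] at ha hb
    simp only [Units.val_mul, ← Matrix.vecMul_vecMul]
    rw [hb, ha]
  inv_mem' := by
    intro g hg u v
    have h1 : ∀ w : Fin n → F, Matrix.vecMul
        (Matrix.vecMul w ((g⁻¹ : GL (Fin n) F) : Matrix (Fin n) (Fin n) F))
        (g : Matrix (Fin n) (Fin n) F) = w := by
      intro w
      rw [Matrix.vecMul_vecMul, g.inv_mul, Matrix.vecMul_one]
    have h2 := hg (Matrix.vecMul u ((g⁻¹ : GL (Fin n) F) : Matrix (Fin n) (Fin n) F))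
      (Matrix.vecMul v ((g⁻¹ : GL (Fin n) F) : Matrix (Fin n) (Fin n) F))
    rw [h1, h1] at h2
    exact h2.symm

/-- The group of similitudes of the quadratic form `Q` (acting on row vectors). -/
def qSimilitudeGroup {n : ℕ} {F : Type*} [Field F]
    (Q : (Fin n → F) → F) : Subgroup (GL (Fin n) F) where
  carrier := {g | ∃ c : Fˣ, ∀ v : Fin n → F,
    Q (Matrix.vecMul v (g : Matrix (Fin n) (Fin n) F)) = (c : F) * Q v}
  one_mem' := ⟨1, by simp⟩
  mul_mem' := by
    rintro a b ⟨c, hc⟩ ⟨d, hd⟩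
    refine ⟨c * d, fun v => ?_⟩
    simp only [Units.val_mul, ← Matrix.vecMul_vecMul, hd, hc]
    ring
  inv_mem' := by
    rintro g ⟨c, hc⟩
    refine ⟨c⁻¹, fun v => ?_⟩
    have h1 : ∀ w : Fin n → F, Matrix.vecMul
        (Matrix.vecMul w ((g⁻¹ : GL (Fin n) F) : Matrix (Fin n) (Fin n) F))
        (g : Matrix (Fin n) (Fin n) F) = w := by
      intro w
      rw [Matrix.vecMul_vecMul, g.inv_mul, Matrix.vecMul_one]
    have h2 := hc (Matrix.vecMul v ((g⁻¹ : GL (Fin n) F) : Matrix (Fin n) (Fin n) F))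
    rw [h1] at h2
    rw [h2, Units.val_inv_eq_inv_val, inv_mul_cancel_left₀ (by exact_mod_cast c.ne_zero)]

/-- The unitary group `GU_n` with respect to the field automorphism `φ`. -/
def GUgrp (n : ℕ) {K : Type*} [Field K] (φ : K →+* K) : Subgroup (GL (Fin n) K) where
  carrier := {g | ((g : Matrix (Fin n) (Fin n) K).map φ)ᵀ * (g : Matrix (Fin n) (Fin n) K) = 1}
  one_mem' := by
    simp [Matrix.map_one φ φ.map_zero φ.map_one]
  mul_mem' := by
    intro a b ha hb
    simp only [Set.mem_setOf_eq, Units.val_mul, Matrix.map_mul, Matrix.transpose_mul] at *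
    calc ((b : Matrix (Fin n) (Fin n) K).map φ)ᵀ * ((a : Matrix (Fin n) (Fin n) K).map φ)ᵀ *
          ((a : Matrix (Fin n) (Fin n) K) * (b : Matrix (Fin n) (Fin n) K))
        = ((b : Matrix (Fin n) (Fin n) K).map φ)ᵀ *
          (((a : Matrix (Fin n) (Fin n) K).map φ)ᵀ * (a : Matrix (Fin n) (Fin n) K)) *
          (b : Matrix (Fin n) (Fin n) K) := by noncomm_ring
      _ = 1 := by rw [ha, mul_one, hb]
  inv_mem' := by
    intro g hg
    simp only [Set.mem_setOf_eq] at *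
    have hcomm : (g : Matrix (Fin n) (Fin n) K) * ((g : Matrix (Fin n) (Fin n) K).map φ)ᵀ = 1 :=
      mul_eq_one_comm.mp hg
    have h1 : ((g : Matrix (Fin n) (Fin n) K) * ((g⁻¹ : GL (Fin n) K) : Matrix (Fin n) (Fin n) K)).map φ = 1 := by
      rw [g.mul_inv]
      exact Matrix.map_one φ φ.map_zero φ.map_one
    rw [Matrix.map_mul] at h1
    have h2 := congrArg Matrix.transpose h1
    rw [Matrix.transpose_mul, Matrix.transpose_one] at h2
    calc (((g⁻¹ : GL (Fin n) K) : Matrix (Fin n) (Fin n) K).map φ)ᵀ *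
          ((g⁻¹ : GL (Fin n) K) : Matrix (Fin n) (Fin n) K)
        = (((g⁻¹ : GL (Fin n) K) : Matrix (Fin n) (Fin n) K).map φ)ᵀ *
          (((g : Matrix (Fin n) (Fin n) K).map φ)ᵀ * (g : Matrix (Fin n) (Fin n) K)) *
          ((g⁻¹ : GL (Fin n) K) : Matrix (Fin n) (Fin n) K) := by rw [hg, mul_one]
      _ = ((((g⁻¹ : GL (Fin n) K) : Matrix (Fin n) (Fin n) K).map φ)ᵀ *
          ((g : Matrix (Fin n) (Fin n) K).map φ)ᵀ) *
          ((g : Matrix (Fin n) (Fin n) K) * ((g⁻¹ : GL (Fin n) K) : Matrix (Fin n) (Fin n) K)) := by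
            noncomm_ring
      _ = 1 := by rw [h2, g.mul_inv, mul_one]


section PartOne

theorem hall_conj_two_group {G : Type*} [Group G] [Finite G] (H Q : Subgroup G)
    (hH : ¬ 2 ∣ H.index) (hQ : IsPGroup 2 Q) : ∃ g : G, ∀ x ∈ Q, g⁻¹ * x * g ∈ H := by
  have : Fact (Nat.Prime 2) := ⟨Nat.prime_two⟩
  have h := hQ.nonempty_fixed_point_of_prime_not_dvd_card (G ⧸ H) (by rwa [← Subgroup.index])
  obtain ⟨x, hx⟩ := h
  obtain ⟨g, rfl⟩ := QuotientGroup.mk_surjective x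
  refine ⟨g, fun y hy => ?_⟩
  have h1 := hx ⟨y, hy⟩
  have h2 : ((y * g : G) : G ⧸ H) = (g : G ⧸ H) := h1
  have h3 := QuotientGroup.eq.1 h2.symm
  simpa [mul_assoc] using h3

def dser {G : Type*} [Group G] (H : Subgroup G) : ℕ → Subgroup G
  | 0 => H
  | k + 1 => ⁅dser H k, dser H k⁆

theorem dser_eq {G : Type*} [Group G] (H : Subgroup G) (k : ℕ) :
    dser H k = (derivedSeries H k).map H.subtype := by
  induction k with
  | zero => simp [dser, ← MonoidHom.range_eq_map]
  | succ k ih => simp only [dser, derivedSeries_succ, Subgroup.map_commutator, ih]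

theorem dser_norm {G : Type*} [Group G] (H : Subgroup G) (k : ℕ) (g : G)
    (hg : ∀ h ∈ H, g * h * g⁻¹ ∈ H) : ∀ h ∈ dser H k, g * h * g⁻¹ ∈ dser H k := by
  induction k with
  | zero => exact hg
  | succ k ih =>
    have h1 : (dser H k).map (MulAut.conj g).toMonoidHom ≤ dser H k := by
      rintro _ ⟨x, hx, rfl⟩
      exact ih x hx
    intro h hh
    have h2 : (dser H (k+1)).map (MulAut.conj g).toMonoidHom ≤ dser H (k+1) := by
      simp only [dser, Subgroup.map_commutator]
      exact Subgroup.commutator_mono h1 h1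
    exact h2 ⟨h, hh, rfl⟩

theorem dser_le {G : Type*} [Group G] (H : Subgroup G) (k : ℕ) : dser H k ≤ H := by
  rw [dser_eq]
  exact Subgroup.map_subtype_le _

theorem last_term {G : Type*} [Group G] (H Z : Subgroup G) (hs : Group.IsSolvable H)
    (hHZ : ¬ H ≤ Z) : ∃ A : Subgroup G, A ≤ H ∧ ¬ A ≤ Z ∧
      (∀ a ∈ A, ∀ b ∈ A, a * b * a⁻¹ * b⁻¹ ∈ Z) ∧
      ∀ g, (∀ h ∈ H, g * h * g⁻¹ ∈ H) → ∀ a ∈ A, g * a * g⁻¹ ∈ A := by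
  classical
  obtain ⟨n, hn⟩ := hs.solvable
  have hex : ∃ k, dser H k ≤ Z := ⟨n, by rw [dser_eq, hn]; simp⟩
  have h1 := Nat.find_spec hex
  have h2 : Nat.find hex ≠ 0 := by
    intro h0
    rw [h0] at h1
    exact hHZ h1
  obtain ⟨k, hk⟩ := Nat.exists_eq_succ_of_ne_zero h2
  refine ⟨dser H k, dser_le H k, Nat.find_min hex (by omega), ?_, fun g hg => dser_norm H k g hg⟩
  intro a ha b hb
  rw [hk] at h1
  exact h1 (Subgroup.commutator_mem_commutator ha hb)

theorem prime_layer {G : Type*} [Group G] [Finite G] (A Z : Subgroup G)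
    (hZ : Z ≤ Subgroup.center G) (hAZ : ¬ A ≤ Z)
    (hc : ∀ a ∈ A, ∀ b ∈ A, a * b * a⁻¹ * b⁻¹ ∈ Z) :
    ∃ r : ℕ, r.Prime ∧ ∃ B : Subgroup G, B ≤ A ∧ ¬ B ≤ Z ∧ (∀ b ∈ B, b ^ r ∈ Z) ∧
      ∀ g, (∀ h ∈ A, g * h * g⁻¹ ∈ A) → ∀ a ∈ B, g * a * g⁻¹ ∈ B := by
  have hZn : Z.Normal := ⟨fun z hz g => by
    have := Subgroup.mem_center_iff.1 (hZ hz) g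
    rw [this]; simpa using hz⟩
  obtain ⟨a, haA, haZ⟩ := Set.not_subset.1 hAZ
  let q : G →* G ⧸ Z := QuotientGroup.mk' Z
  have hq : ∀ x, q x = 1 ↔ x ∈ Z := fun x => QuotientGroup.eq_one_iff x
  have hm : orderOf (q a) ≠ 1 := by
    rw [Ne, orderOf_eq_one_iff, hq]; exact haZ
  obtain ⟨r, hr, hrd⟩ := Nat.exists_prime_and_dvd hm
  obtain ⟨k, hk⟩ := hrd
  have hpos : 0 < orderOf (q a) := orderOf_pos _
  have hcomm : ∀ x ∈ A, ∀ y ∈ A, Commute (q x) (q y) := by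
    intro x hx y hy
    have := (hq _).2 (hc x hx y hy)
    simp only [map_mul, map_inv] at this
    have h := mul_inv_eq_one.1 this
    exact mul_inv_eq_iff_eq_mul.1 h
  let B : Subgroup G :=
    { carrier := {x | x ∈ A ∧ x ^ r ∈ Z}
      one_mem' := ⟨A.one_mem, by simp⟩
      mul_mem' := by
        rintro x y ⟨hx, hxr⟩ ⟨hy, hyr⟩
        refine ⟨A.mul_mem hx hy, ?_⟩
        rw [← hq, map_pow, map_mul, (hcomm x hx y hy).mul_pow, ← map_pow, ← map_pow,
          (hq _).2 hxr, (hq _).2 hyr, one_mul]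
      inv_mem' := by
        rintro x ⟨hx, hxr⟩
        exact ⟨A.inv_mem hx, by rw [inv_pow]; exact Z.inv_mem hxr⟩ }
  refine ⟨r, hr, B, fun x hx => hx.1, ?_, fun b hb => hb.2, ?_⟩
  · intro hB
    have h1 : a ^ k ∈ B := ⟨A.pow_mem haA k, by
      rw [← pow_mul, ← hq, map_pow, mul_comm, ← hk, pow_orderOf_eq_one]⟩
    have h2 := (hq _).2 (hB h1)
    rw [map_pow] at h2
    have h3 := orderOf_dvd_of_pow_eq_one h2
    rw [hk] at h3 hpos
    have hk0 : 0 < k := Nat.pos_of_mul_pos_left hpos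
    have h4 := Nat.le_of_dvd hk0 h3
    have h5 := hr.two_le
    nlinarith
  · rintro g hg x ⟨hx, hxr⟩
    refine ⟨hg x hx, ?_⟩
    rw [conj_pow]
    exact hZn.conj_mem _ hxr g

theorem relIndex_dvd_index_of_norm {G : Type*} [Group G] [Finite G] (H B : Subgroup G)
    (hn : ∀ h ∈ H, ∀ b ∈ B, h * b * h⁻¹ ∈ B) : H.relIndex B ∣ H.index := by
  have hle : H ≤ Subgroup.normalizer B := by
    intro h hh
    rw [Subgroup.mem_normalizer_iff]
    intro b
    refine ⟨fun hb => hn h hh b hb, fun hb => ?_⟩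
    have := hn _ (H.inv_mem hh) _ hb
    simpa [mul_assoc] using this
  have h1 : H.relIndex (H ⊔ B) * (H ⊔ B).index = H.index := Subgroup.relIndex_mul_index le_sup_left
  have h2 : H.relIndex (H ⊔ B) = H.relIndex B := by
    have h3 : B.relIndex (H ⊔ B) = B.relIndex H := by
      have hB : B ≤ Subgroup.normalizer B := Subgroup.le_normalizer
      have hn' : (B.subgroupOf (Subgroup.normalizer B)).Normal := inferInstance
      have h4 := Subgroup.relIndex_sup_right (H.subgroupOf (Subgroup.normalizer B))
        (B.subgroupOf (Subgroup.normalizer B))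
      rw [← Subgroup.subgroupOf_sup hle hB, Subgroup.relIndex_subgroupOf hle,
        Subgroup.relIndex_subgroupOf (sup_le hle hB)] at h4
      exact h4
    have h5 : (H ⊓ B).relIndex H * H.relIndex (H ⊔ B) = (H ⊓ B).relIndex (H ⊔ B) :=
      Subgroup.relIndex_mul_relIndex _ _ _ inf_le_left le_sup_left
    have h6 : (H ⊓ B).relIndex B * B.relIndex (H ⊔ B) = (H ⊓ B).relIndex (H ⊔ B) :=
      Subgroup.relIndex_mul_relIndex _ _ _ inf_le_right le_sup_right
    rw [Subgroup.inf_relIndex_left] at h5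
    rw [Subgroup.inf_relIndex_right, h3, ← h5, mul_comm] at h6
    have h7 : B.relIndex H ≠ 0 := Subgroup.index_ne_zero_of_finite
    exact (Nat.eq_of_mul_eq_mul_left (Nat.pos_of_ne_zero h7) h6).symm
  rw [← h1, h2]
  exact dvd_mul_right _ _

end PartOne

section PartTwo

/-- scalar units of an algebra -/
def scal (F R : Type*) [Field F] [Ring R] [Algebra F R] : Subgroup Rˣ where
  carrier := {x | ∃ c : F, (x : R) = c • (1 : R)}
  one_mem' := ⟨1, by simp⟩
  mul_mem' := by
    rintro x y ⟨c, hc⟩ ⟨d, hd⟩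
    exact ⟨c * d, by rw [Units.val_mul, hc, hd]; simp [smul_smul, mul_comm]⟩
  inv_mem' := by
    rintro x ⟨c, hc⟩
    by_cases h0 : c = 0
    · refine ⟨0, ?_⟩
      have h1 : (x : R) * (x⁻¹ : Rˣ) = 1 := x.mul_inv
      rw [hc, h0] at h1
      simp only [zero_smul, zero_mul] at h1
      have : Subsingleton R := subsingleton_of_zero_eq_one h1
      exact Subsingleton.elim _ _
    · refine ⟨c⁻¹, ?_⟩
      have h1 : (x : R) * (c⁻¹ • (1 : R)) = 1 := by
        rw [hc]; simp [smul_smul, h0]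
      exact (Units.inv_eq_of_mul_eq_one_right h1)

theorem mem_scal {F R : Type*} [Field F] [Ring R] [Algebra F R] {x : Rˣ} :
    x ∈ scal F R ↔ ∃ c : F, (x : R) = c • (1 : R) := Iff.rfl

theorem scal_le_center (F R : Type*) [Field F] [Ring R] [Algebra F R] :
    scal F R ≤ Subgroup.center Rˣ := by
  rintro x ⟨c, hc⟩
  rw [Subgroup.mem_center_iff]
  intro g
  ext
  simp [hc]

/-- every element of the algebra generated by commuting elements of order prime to p satisfies `x ^ Q = x`. -/
theorem adjoin_pow {F R : Type*} [Field F] [Finite F] [Ring R] [Nontrivial R] [Algebra F R]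
    (p : ℕ) [Fact p.Prime] [CharP F p] (S : Set R) (m : ℕ) (hm : m.Coprime p)
    (hS : ∀ s ∈ S, s ^ m = 1) (hc : ∀ s ∈ S, ∀ s' ∈ S, Commute s s') :
    ∃ Q, 2 ≤ Q ∧ ∀ x ∈ Algebra.adjoin F S, x ^ Q = x := by
  have : Fintype F := Fintype.ofFinite F
  obtain ⟨k, hp, hk⟩ := FiniteField.card F p
  have hm0 : 0 < m := by
    rcases Nat.eq_zero_or_pos m with h | h
    · subst h
      exact absurd ((Nat.coprime_zero_left p).1 hm) hp.one_lt.ne'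
    · exact h
  have hchar : CharP R p := charP_of_injective_algebraMap (algebraMap F R).injective p
  refine ⟨Fintype.card F ^ Nat.totient m, ?_, ?_⟩
  · have h1 : 2 ≤ Fintype.card F := Fintype.one_lt_card
    have h2 : Nat.totient m ≠ 0 := (Nat.totient_pos.2 hm0).ne'
    exact h1.trans (Nat.le_self_pow h2 _)
  · intro x hx
    have hcop : (Fintype.card F).Coprime m := by
      rw [hk]; exact (Nat.Coprime.pow_right _ hm).symm
    have hmod := Nat.ModEq.pow_totient hcop
    have hcomm : ∀ x ∈ Algebra.adjoin F S, ∀ y ∈ Algebra.adjoin F S, Commute x y := by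
      intro x hx y hy
      apply Algebra.commute_of_mem_adjoin_of_forall_mem_commute hy
      intro s hs
      exact (Algebra.commute_of_mem_adjoin_of_forall_mem_commute hx
        (fun s' hs' => hc s hs s' hs')).symm
    induction hx using Algebra.adjoin_induction with
    | mem s hs =>
      have h1 : s ^ (Fintype.card F ^ Nat.totient m) = s ^ 1 := by
        apply pow_eq_pow_of_modEq hmod (hS s hs)
      simpa using h1
    | algebraMap c =>
      rw [← map_pow, FiniteField.pow_card_pow]
    | add x y hx hy ihx ihy =>
      have h2 : Fintype.card F ^ Nat.totient m = p ^ (k * Nat.totient m) := by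
        rw [hk, pow_mul]
      rw [h2] at ihx ihy ⊢
      rw [add_pow_char_pow_of_commute _ _ (hcomm x hx y hy), ihx, ihy]
    | mul x y hx hy ihx ihy =>
      rw [(hcomm x hx y hy).mul_pow, ihx, ihy]

def HasIdem {R : Type*} [Ring R] (H : Subgroup Rˣ) : Prop :=
  ∃ e : R, e * e = e ∧ e ≠ 0 ∧ e ≠ 1 ∧ ∀ h ∈ H, Commute e ((h : R) * e * (h⁻¹ : Rˣ))

theorem adjoin_unit {F R : Type*} [Field F] [Finite F] [Ring R] [Nontrivial R] [Algebra F R]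
    (p : ℕ) [Fact p.Prime] [CharP F p] (H B : Subgroup Rˣ) (hp : ¬ p ∣ Nat.card H)
    (hBH : B ≤ H) (hn : ∀ h ∈ H, ∀ b ∈ B, h * b * h⁻¹ ∈ B)
    (hc : ∀ a ∈ B, ∀ b ∈ B, a * b = b * a) (hno : ¬ HasIdem H) :
    ∀ x ∈ Algebra.adjoin F ((fun u : Rˣ => (u : R)) '' (B : Set Rˣ)), x ≠ 0 → IsUnit x := by
  set S := (fun u : Rˣ => (u : R)) '' (B : Set Rˣ) with hSdef
  have hm : (Nat.card H).Coprime p :=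
    ((Nat.Prime.coprime_iff_not_dvd Fact.out).2 hp).symm
  have hcS : ∀ s ∈ S, ∀ s' ∈ S, Commute s s' := by
    rintro _ ⟨a, ha, rfl⟩ _ ⟨b, hb, rfl⟩
    exact congrArg (fun u : Rˣ => (u : R)) (hc a ha b hb)
  obtain ⟨Q, hQ2, hQ⟩ := adjoin_pow (F := F) p S (Nat.card H) hm (by
    rintro _ ⟨a, ha, rfl⟩
    have h1 : (⟨a, hBH ha⟩ : H) ^ Nat.card H = 1 := pow_card_eq_one'
    have h2 := congrArg (fun u : H => ((u : Rˣ) : R)) h1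
    exact h2) hcS
  have hcomm : ∀ x ∈ Algebra.adjoin F S, ∀ y ∈ Algebra.adjoin F S, Commute x y := by
    intro x hx y hy
    apply Algebra.commute_of_mem_adjoin_of_forall_mem_commute hy
    intro s hs
    exact (Algebra.commute_of_mem_adjoin_of_forall_mem_commute hx
      (fun s' hs' => hcS s hs s' hs')).symm
  have hconj : ∀ h ∈ H, ∀ x ∈ Algebra.adjoin F S,
      (h : R) * x * (h⁻¹ : Rˣ) ∈ Algebra.adjoin F S := by
    intro h hh x hx
    induction hx using Algebra.adjoin_induction with
    | mem s hs =>
      obtain ⟨b, hb, rfl⟩ := hs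
      apply Algebra.subset_adjoin
      exact ⟨h * b * h⁻¹, hn h hh b hb, by simp⟩
    | algebraMap c =>
      rw [← Algebra.commutes, mul_assoc, Units.mul_inv, mul_one]
      exact Subalgebra.algebraMap_mem _ c
    | add x y hx hy ihx ihy =>
      rw [mul_add, add_mul]; exact Subalgebra.add_mem _ ihx ihy
    | mul x y hx hy ihx ihy =>
      have : (h : R) * (x * y) * (h⁻¹ : Rˣ) = (h * x * (h⁻¹ : Rˣ)) * (h * y * (h⁻¹ : Rˣ)) := by
        simp [mul_assoc]
      rw [this]; exact Subalgebra.mul_mem _ ihx ihy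
  intro x hx hx0
  obtain ⟨k, rfl⟩ : ∃ k, Q = k + 2 := ⟨Q - 2, by omega⟩
  have hxQ := hQ x hx
  set e := x ^ (k + 1) with he
  have hemem : e ∈ Algebra.adjoin F S := Subalgebra.pow_mem _ hx _
  have hex : e * x = x := by rw [he, ← pow_succ]; exact hxQ
  have hee : e * e = e := by
    calc e * e = e * x * x ^ k := by rw [he, mul_assoc, ← pow_succ']
      _ = x * x ^ k := by rw [hex]
      _ = e := by rw [he, ← pow_succ']
  have he0 : e ≠ 0 := by
    intro h; rw [h, zero_mul] at hex; exact hx0 hex.symm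
  have he1 : e = 1 := by
    by_contra h1
    exact hno ⟨e, hee, he0, h1, fun h hh => hcomm _ hemem _ (hconj h hh e hemem)⟩
  exact IsUnit.of_pow_eq_one he1 (by omega)

variable {F V : Type*} [Field F] [AddCommGroup V] [Module F V]

theorem exists_ker2 [Module.Finite F V] (h3 : 3 ≤ Module.finrank F V) (φ ψ : V →ₗ[F] F) :
    ∃ w : V, w ≠ 0 ∧ φ w = 0 ∧ ψ w = 0 := by
  have h := LinearMap.ker_ne_bot_of_finrank_lt (f := φ.prod ψ) (by
    simp only [Module.finrank_prod, Module.finrank_self]; omega)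
  obtain ⟨w, hw, hw0⟩ := Submodule.exists_mem_ne_zero_of_ne_bot h
  rw [LinearMap.mem_ker] at hw
  exact ⟨w, hw0, congrArg Prod.fst hw, congrArg Prod.snd hw⟩

/-- `t` is the reflection attached to `φ, v` -/
structure ReflData (t : (Module.End F V)ˣ) (φ : V →ₗ[F] F) (v : V) : Prop where
  one : φ v = 1
  val : (t : Module.End F V) = 1 - (2 : F) • φ.smulRight v

namespace ReflData
variable {t : (Module.End F V)ˣ} {φ : V →ₗ[F] F} {v : V}

theorem app (h : ReflData t φ v) (w : V) : (t : Module.End F V) w = w - (2 : F) • φ w • v := by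
  rw [h.val]; simp

theorem fix (h : ReflData t φ v) {w : V} (hw : φ w = 0) : (t : Module.End F V) w = w := by
  rw [h.app, hw]; simp

theorem neg (h : ReflData t φ v) : (t : Module.End F V) v = - v := by
  rw [h.app, h.one, one_smul, two_smul]; abel

theorem ne_zero (h : ReflData t φ v) : v ≠ 0 := by
  rintro rfl
  have := h.one
  simp at this

theorem sq (h : ReflData t φ v) : t * t = 1 := by
  ext w
  simp only [Units.val_mul, Module.End.mul_apply, Units.val_one, Module.End.one_apply]
  rw [h.app, h.app w, map_sub, map_smul, map_smul, h.one]
  simp only [smul_eq_mul, mul_one, smul_sub, sub_smul, smul_smul]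
  module

theorem inv (h : ReflData t φ v) : t⁻¹ = t := inv_eq_of_mul_eq_one_left h.sq

theorem comm (h : ReflData t φ v) (h2 : (2 : F) ≠ 0) {g : Module.End F V}
    (hg : (t : Module.End F V) * g = g * t) (w : V) : φ (g w) • v = φ w • g v := by
  have h1 := LinearMap.congr_fun hg w
  simp only [Module.End.mul_apply, h.app, map_sub, map_smul] at h1
  have h3 := sub_right_injective h1
  exact smul_right_injective V h2 h3

theorem eig (h : ReflData t φ v) (h2 : (2 : F) ≠ 0) {g : Module.End F V}
    (hg : (t : Module.End F V) * g = g * t) : g v = φ (g v) • v := by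
  rw [h.comm h2 hg, h.one, one_smul]

theorem rl [Module.Finite F V] (h3 : 3 ≤ Module.finrank F V) (h : ReflData t φ v)
    (g : (Module.End F V)ˣ) (c : F)
    (hg : (t : Module.End F V) * g = c • ((g : Module.End F V) * t)) : c = 1 := by
  obtain ⟨w, hw, h1, h2⟩ := exists_ker2 h3 φ (φ ∘ₗ (g : Module.End F V))
  have h4 := LinearMap.congr_fun hg w
  simp only [Module.End.mul_apply, LinearMap.smul_apply, h.fix h1] at h4
  rw [h.fix h2] at h4
  have h5 : (g : Module.End F V) w ≠ 0 := by
    intro h0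
    apply hw
    have := congrArg (fun z => ((g⁻¹ : (Module.End F V)ˣ) : Module.End F V) z) h0
    simpa [← Module.End.mul_apply] using this
  by_contra hc
  have h6 : (1 - c) • (g : Module.End F V) w = 0 := by rw [sub_smul, one_smul, ← h4, sub_self]
  rcases smul_eq_zero.1 h6 with h7 | h7
  · exact hc (sub_eq_zero.1 h7).symm
  · exact h5 h7

end ReflData

end PartTwo

section PartThree

variable {F V : Type*} [Field F] [AddCommGroup V] [Module F V]

theorem unit_app_ne {g : Module.End F V} (hg : IsUnit g) {w : V} (hw : w ≠ 0) : g w ≠ 0 := by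
  obtain ⟨u, rfl⟩ := hg
  intro h0
  apply hw
  have := congrArg (fun z => ((u⁻¹ : (Module.End F V)ˣ) : Module.End F V) z) h0
  simpa [← Module.End.mul_apply] using this

theorem inv_app (g : (Module.End F V)ˣ) (w : V) :
    (g : Module.End F V) (((g⁻¹ : (Module.End F V)ˣ) : Module.End F V) w) = w := by
  rw [← Module.End.mul_apply, Units.mul_inv]; rfl

theorem app_inv (g : (Module.End F V)ˣ) (w : V) :
    ((g⁻¹ : (Module.End F V)ˣ) : Module.End F V) ((g : Module.End F V) w) = w := by
  rw [← Module.End.mul_apply, Units.inv_mul]; rfl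

theorem abelian_scalar [Finite F] [Module.Finite F V]
    (p : ℕ) [Fact p.Prime] [CharP F p] (h3 : 3 ≤ Module.finrank F V) (h2 : (2 : F) ≠ 0)
    (H B : Subgroup (Module.End F V)ˣ) (hp : ¬ p ∣ Nat.card H)
    (hBH : B ≤ H) (hn : ∀ h ∈ H, ∀ b ∈ B, h * b * h⁻¹ ∈ B)
    (hc : ∀ a ∈ B, ∀ b ∈ B, a * b = b * a) (hno : ¬ HasIdem H)
    {t : (Module.End F V)ˣ} {φ : V →ₗ[F] F} {v : V} (ht : ReflData t φ v) (htH : t ∈ H) :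
    B ≤ scal F (Module.End F V) := by
  intro x hx
  have : Nontrivial V := ⟨v, 0, ht.ne_zero⟩
  have hunit := adjoin_unit (F := F) p H B hp hBH hn hc hno
  set S := Algebra.adjoin F ((fun u : (Module.End F V)ˣ => (u : Module.End F V)) '' B)
  have hxS : ∀ x ∈ B, (x : Module.End F V) ∈ S := fun x hx => Algebra.subset_adjoin ⟨x, hx, rfl⟩
  have hy : ((t * x * t⁻¹ : (Module.End F V)ˣ) : Module.End F V) - x = 0 := by
    by_contra hne
    have hu := hunit _ (S.sub_mem (hxS _ (hn t htH x hx)) (hxS x hx)) hne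
    obtain ⟨w, hw, hw1, hw2⟩ := exists_ker2 h3 φ (φ ∘ₗ (x : Module.End F V))
    apply unit_app_ne hu hw
    rw [ht.inv]
    simp only [Units.val_mul, LinearMap.sub_apply, Module.End.mul_apply, ht.fix hw1]
    rw [ht.fix hw2, sub_self]
  have hcomm : (t : Module.End F V) * x = x * t := by
    have h1 := sub_eq_zero.1 hy
    have h4 : t * x * t⁻¹ = x := Units.ext h1
    have h5 : t * x = x * t := mul_inv_eq_iff_eq_mul.1 h4
    exact congrArg Units.val h5
  have hev := ht.eig h2 hcomm
  refine ⟨φ ((x : Module.End F V) v), ?_⟩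
  by_contra hne
  have hu := hunit _ (S.sub_mem (hxS x hx) (S.smul_mem S.one_mem (φ ((x : Module.End F V) v))))
    (sub_ne_zero.2 hne)
  apply unit_app_ne hu ht.ne_zero
  simp only [LinearMap.sub_apply, LinearMap.smul_apply, Module.End.one_apply]
  rw [← hev, sub_self]

theorem exists_twist [Finite F] [Module.Finite F V]
    (p : ℕ) [Fact p.Prime] [CharP F p] (h3 : 3 ≤ Module.finrank F V) (h2 : (2 : F) ≠ 0)
    (H A : Subgroup (Module.End F V)ˣ) (hp : ¬ p ∣ Nat.card H)
    (hAH : A ≤ H) (hn : ∀ h ∈ H, ∀ b ∈ A, h * b * h⁻¹ ∈ A)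
    (hc : ∀ a ∈ A, ∀ b ∈ A, a * b * a⁻¹ * b⁻¹ ∈ scal F (Module.End F V)) (hno : ¬ HasIdem H)
    {t : (Module.End F V)ˣ} {φ : V →ₗ[F] F} {v : V} (ht : ReflData t φ v) (htH : t ∈ H)
    (a : (Module.End F V)ˣ) (ha : a ∈ A) (haZ : a ∉ scal F (Module.End F V)) :
    ∃ c ∈ A, ∃ l : F, l ≠ 1 ∧ (c : Module.End F V) * a = l • ((a : Module.End F V) * c) := by
  by_contra hcon
  push Not at hcon
  have hcom : ∀ c ∈ A, c * a = a * c := by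
    intro c hcA
    obtain ⟨l, hl⟩ := hc c hcA a ha
    have h1 : (c : Module.End F V) * a = l • ((a : Module.End F V) * c) := by
      have h4 : c * a = (c * a * c⁻¹ * a⁻¹) * (a * c) := by group
      have h5 := congrArg Units.val h4
      rw [Units.val_mul _ (a * c), hl] at h5
      simpa using h5
    have h6 : l = 1 := by
      by_contra hl1
      exact hcon c hcA l hl1 h1
    rw [h6, one_smul] at h1
    exact Units.ext h1
  let B : Subgroup (Module.End F V)ˣ := A ⊓ Subgroup.centralizer A
  have hB := abelian_scalar p h3 h2 H B hp (inf_le_left.trans hAH) (by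
    rintro h hh b ⟨hb1, hb2⟩
    refine ⟨hn h hh b hb1, ?_⟩
    change _ ∈ Subgroup.centralizer (A : Set (Module.End F V)ˣ)
    replace hb2 := Subgroup.mem_centralizer_iff.1 hb2
    rw [Subgroup.mem_centralizer_iff]
    intro y hy
    have h7 := hb2 _ (by simpa using hn _ (H.inv_mem hh) y hy)
    have h8 := congrArg (fun z => h * z * h⁻¹) h7
    simpa [mul_assoc] using h8) (by
    rintro a ⟨ha1, ha2⟩ b ⟨hb1, hb2⟩
    exact (Subgroup.mem_centralizer_iff.1 hb2) a ha1) hno ht htH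
  exact haZ (hB ⟨ha, Subgroup.mem_centralizer_iff.2 hcom⟩)

theorem odd_claim [Module.Finite F V] (h3 : 3 ≤ Module.finrank F V) (h2 : (2 : F) ≠ 0)
    (r : ℕ) (hr : Odd r)
    {t : (Module.End F V)ˣ} {φ : V →ₗ[F] F} {v : V} (ht : ReflData t φ v)
    (a c : (Module.End F V)ˣ) (l : F) (hl : l ≠ 1)
    (hca : (c : Module.End F V) * a = l • ((a : Module.End F V) * c))
    (hta : (t : Module.End F V) * a = a * t)
    (hb : (t * c * t⁻¹ * c⁻¹) ^ r ∈ scal F (Module.End F V)) : False := by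
  set u : V := ((c⁻¹ : (Module.End F V)ˣ) : Module.End F V) v with hu
  have hev := ht.eig h2 hta
  set μ := φ ((a : Module.End F V) v) with hμ
  have hμ0 : μ ≠ 0 := by
    intro h0
    rw [h0, zero_smul] at hev
    exact unit_app_ne a.isUnit ht.ne_zero hev
  have hφa : ∀ w, φ ((a : Module.End F V) w) = μ * φ w := by
    intro w
    have h4 := congrArg φ (ht.comm h2 hta w)
    rw [map_smul, map_smul, ht.one, ← hμ] at h4
    simpa [mul_comm] using h4
  have hau : (a : Module.End F V) u = (l * μ) • u := by
    have h5 := LinearMap.congr_fun hca u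
    simp only [Module.End.mul_apply, LinearMap.smul_apply] at h5
    rw [hu, inv_app, hev, smul_smul] at h5
    have h6 := congrArg (fun z => ((c⁻¹ : (Module.End F V)ˣ) : Module.End F V) z) h5
    simp only [map_smul, app_inv] at h6
    exact h6
  have hφu : φ u = 0 := by
    have h6 := hφa u
    rw [hau, map_smul, smul_eq_mul] at h6
    have h7 : μ * (l - 1) * φ u = 0 := by linear_combination h6
    rcases mul_eq_zero.1 h7 with h8 | h8
    · exact absurd h8 (mul_ne_zero hμ0 (sub_ne_zero.2 hl))
    · exact h8
  obtain ⟨w, hw, hw1, hw2⟩ := exists_ker2 h3 φ (φ ∘ₗ ((c⁻¹ : (Module.End F V)ˣ) : Module.End F V))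
  rw [ht.inv] at hb
  set b := t * c * t * c⁻¹ with hbdef
  have hbv : (b : Module.End F V) v = (-1 : F) • v := by
    simp only [hbdef, Units.val_mul, Module.End.mul_apply]
    rw [ht.fix hφu, hu, inv_app, ht.neg]; simp
  have hbw : (b : Module.End F V) w = (1 : F) • w := by
    simp only [hbdef, Units.val_mul, Module.End.mul_apply]
    rw [ht.fix hw2, inv_app, ht.fix hw1, one_smul]
  obtain ⟨ν, hν⟩ := hb
  have hpow : ∀ (k : F) (z : V), (b : Module.End F V) z = k • z →
      ∀ m : ℕ, ((b : Module.End F V) ^ m) z = k ^ m • z := by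
    intro k z hz m
    induction m with
    | zero => simp
    | succ m ih => rw [pow_succ, Module.End.mul_apply, hz, map_smul, ih, smul_smul, pow_succ']
  rw [Units.val_pow_eq_pow_val] at hν
  have e1 := hpow _ _ hbv r
  have e2 := hpow _ _ hbw r
  rw [hν, LinearMap.smul_apply, Module.End.one_apply] at e1 e2
  have f1 := smul_left_injective F ht.ne_zero e1
  have f2 := smul_left_injective F hw e2
  rw [hr.neg_one_pow] at f1
  rw [f1, one_pow] at f2
  apply h2
  linear_combination -f2

theorem rl_unit [Module.Finite F V] (h3 : 3 ≤ Module.finrank F V)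
    {t : (Module.End F V)ˣ} {φ : V →ₗ[F] F} {v : V} (ht : ReflData t φ v)
    (g : (Module.End F V)ˣ) (hg : t * g * t⁻¹ * g⁻¹ ∈ scal F (Module.End F V)) :
    t * g = g * t := by
  obtain ⟨l, hl⟩ := hg
  have h1 : (t : Module.End F V) * g = l • ((g : Module.End F V) * t) := by
    have h4 : t * g = (t * g * t⁻¹ * g⁻¹) * (g * t) := by group
    have h5 := congrArg Units.val h4
    rw [Units.val_mul _ (g * t), hl] at h5
    simpa using h5
  have h6 := ht.rl h3 g l h1
  rw [h6, one_smul] at h1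
  exact Units.ext h1

theorem odd_case [Module.Finite F V] (h3 : 3 ≤ Module.finrank F V) (h2 : (2 : F) ≠ 0)
    (r : ℕ) (hr : Odd r) (A : Subgroup (Module.End F V)ˣ)
    (hc : ∀ a ∈ A, ∀ b ∈ A, a * b * a⁻¹ * b⁻¹ ∈ scal F (Module.End F V))
    (hAr : ∀ a ∈ A, a ^ r ∈ scal F (Module.End F V))
    (htw : ∀ a ∈ A, a ∉ scal F (Module.End F V) →
      ∃ c ∈ A, ∃ l : F, l ≠ 1 ∧ (c : Module.End F V) * a = l • ((a : Module.End F V) * c))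
    (t : Fin 3 → (Module.End F V)ˣ) (φ : Fin 3 → V →ₗ[F] F) (v : Fin 3 → V)
    (ht : ∀ i, ReflData (t i) (φ i) (v i)) (horth : ∀ i j, i ≠ j → φ i (v j) = 0)
    (htA : ∀ i, ∀ a ∈ A, t i * a * (t i)⁻¹ ∈ A) : A ≤ scal F (Module.End F V) := by
  set Z := scal F (Module.End F V) with hZ
  have hcen : ∀ z ∈ Z, ∀ g, g * z = z * g := fun z hz g =>
    Subgroup.mem_center_iff.1 (scal_le_center F _ hz) g
  have hclaim : ∀ i, ∀ a ∈ A, t i * a = a * t i → a ∈ Z := by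
    intro i a ha hta
    by_contra haZ
    obtain ⟨c, hcA, l, hl, hca⟩ := htw a ha haZ
    refine odd_claim h3 h2 r hr (ht i) a c l hl hca (congrArg Units.val hta) ?_
    exact hAr _ (A.mul_mem (htA i c hcA) (A.inv_mem hcA))
  have hs : ∀ i, ∀ a ∈ A, a * (t i * a * t i) ∈ Z := by
    intro i a ha
    have hinv := (ht i).inv
    have hsq := (ht i).sq
    have hbA : t i * a * t i ∈ A := by
      have := htA i a ha
      rwa [hinv] at this
    apply hclaim i _ (A.mul_mem ha hbA)
    apply rl_unit h3 (ht i)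
    have h4 := hc _ hbA a ha
    rw [hinv]
    have h5 : t i * (a * (t i * a * t i)) * t i * (a * (t i * a * t i))⁻¹ =
        t i * a * t i * a * (t i * t i) * (t i * a * t i)⁻¹ * a⁻¹ := by group
    rw [h5, hsq, mul_one]
    exact h4
  have hcom : ∀ i j, i ≠ j → ∀ a ∈ A, t i * t j * a = a * (t i * t j) := by
    intro i j hij a ha
    have hinvi := (ht i).inv
    have hinvj := (ht j).inv
    have hsqi := (ht i).sq
    have hsqj := (ht j).sq
    have htt : t i * t j = t j * t i := by
      ext w
      simp only [Units.val_mul, Module.End.mul_apply, (ht i).app, (ht j).app, map_sub, map_smul,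
        horth i j hij, horth j i hij.symm]
      simp only [smul_zero, sub_zero, zero_smul]
      abel
    set si := a * (t i * a * t i) with hsi
    set sj := a * (t j * a * t j) with hsj
    have hsiZ : si ∈ Z := hs i a ha
    have hsjZ : sj ∈ Z := hs j a ha
    set z := sj * si⁻¹ with hz
    have hzZ : z ∈ Z := Z.mul_mem hsjZ (Z.inv_mem hsiZ)
    set u := t i * t j with hu
    have huu : u * u = 1 := by
      nth_rewrite 2 [htt]
      rw [hu, mul_assoc, ← mul_assoc (t j), hsqj, one_mul, hsqi]
    have hu1 : u⁻¹ = u := inv_eq_of_mul_eq_one_left huu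
    have huau : u * a * u⁻¹ = z * a := by
      have e1 : t j * a * t j = a⁻¹ * sj := by rw [hsj]; group
      have e2 : t i * a * t i = a⁻¹ * si := by rw [hsi]; group
      have e3 : t i * a⁻¹ * t i = si⁻¹ * a := by
        have : t i * a⁻¹ * t i = (t i * a * t i)⁻¹ := by
          rw [_root_.mul_inv_rev, _root_.mul_inv_rev, hinvi, mul_assoc]
        rw [this, e2]; group
      calc u * a * u⁻¹ = t i * (t j * a * t j) * t i := by
            rw [hu, _root_.mul_inv_rev, hinvi, hinvj]; group
        _ = t i * (a⁻¹ * sj) * t i := by rw [e1]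
        _ = (t i * a⁻¹ * t i) * sj := by
            rw [mul_assoc, mul_assoc a⁻¹, ← hcen sj hsjZ (t i)]; group
        _ = sj * (si⁻¹ * a) := by rw [e3, hcen sj hsjZ]
        _ = z * a := by rw [hz]; group
    have hzr : z ^ r = 1 := by
      have e1 : (u * a * u⁻¹) ^ r = z ^ r * a ^ r := by
        rw [huau]
        exact (Commute.mul_pow (hcen z hzZ a).symm r)
      rw [conj_pow, hcen _ (hAr a ha) u, mul_inv_cancel_right] at e1
      exact (right_eq_mul.1 e1)
    have hz2 : z ^ 2 = 1 := by
      have e1 : u * (u * a * u⁻¹) * u⁻¹ = z * (z * a) := by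
        rw [huau, ← mul_assoc, hcen z hzZ u, mul_assoc, mul_assoc, ← mul_assoc u, huau]
      rw [hu1] at e1
      have e2 : u * (u * a * u) * u = (u * u) * a * (u * u) := by group
      rw [e2, huu, one_mul, mul_one, ← mul_assoc] at e1
      rw [pow_two]
      exact (right_eq_mul.1 e1)
    have hz1 : z = 1 := by
      obtain ⟨k, hk⟩ := hr
      rw [hk, pow_succ, pow_mul, hz2, one_pow, one_mul] at hzr
      exact hzr
    rw [hz1, one_mul] at huau
    exact mul_inv_eq_iff_eq_mul.1 huau
  intro a ha
  apply hclaim 0 a ha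
  let e : Fin 3 → Module.End F V := fun i => (φ i).smulRight (v i)
  have hE : ∀ i j, i ≠ j → (e i + e j) * a = a * (e i + e j) := by
    intro i j hij
    have h4 := congrArg Units.val (hcom i j hij a ha)
    have h5 : ((t i * t j : (Module.End F V)ˣ) : Module.End F V) = 1 - (2 : F) • (e i + e j) := by
      ext w
      simp only [Units.val_mul, Module.End.mul_apply, (ht i).app, (ht j).app, map_sub, map_smul,
        horth i j hij, e]
      simp
      abel
    rw [Units.val_mul, Units.val_mul a, h5, sub_mul, mul_sub, one_mul, mul_one, smul_mul_assoc,
      mul_smul_comm] at h4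
    exact smul_right_injective _ h2 (sub_right_injective h4)
  have h01 := hE 0 1 (by decide)
  have h02 := hE 0 2 (by decide)
  have h12 := hE 1 2 (by decide)
  have h6 : (2 : F) • (e 0 * a) = (2 : F) • (a * e 0) := by
    have h7 : (e 0 + e 1) * a + (e 0 + e 2) * a - (e 1 + e 2) * a =
      a * (e 0 + e 1) + a * (e 0 + e 2) - a * (e 1 + e 2) := by rw [h01, h02, h12]
    rw [two_smul, two_smul]
    have h8 : (e 0 + e 1) * a + (e 0 + e 2) * a - (e 1 + e 2) * (a : Module.End F V) =
      e 0 * a + e 0 * a := by noncomm_ring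
    have h9 : a * (e 0 + e 1) + a * (e 0 + e 2) - (a : Module.End F V) * (e 1 + e 2) =
      a * e 0 + a * e 0 := by noncomm_ring
    rw [← h8, ← h9, h7]
  apply Units.ext
  rw [Units.val_mul, Units.val_mul, (ht 0).val, sub_mul, mul_sub, one_mul, mul_one,
    smul_mul_assoc, mul_smul_comm]
  rw [h6]

end PartThree

section PartFour

variable {F V : Type*} [Field F] [AddCommGroup V] [Module F V]

theorem smulRight_sandwich (φ : V →ₗ[F] F) (v : V) (x : Module.End F V) :
    (φ.smulRight v : Module.End F V) * x * (φ.smulRight v : Module.End F V)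
      = φ (x v) • (φ.smulRight v : Module.End F V) := by
  ext w
  simp [smul_smul, mul_comm]

theorem rank_one_comm (φ : V →ₗ[F] F) (v : V) (h1 : φ v = 1) (a : (Module.End F V)ˣ)
    (hc : (φ.smulRight v : Module.End F V) * (a * (φ.smulRight v : Module.End F V) * ((a⁻¹ : (Module.End F V)ˣ) : Module.End F V))
      = (a * (φ.smulRight v : Module.End F V) * ((a⁻¹ : (Module.End F V)ˣ) : Module.End F V)) * (φ.smulRight v : Module.End F V))
    (hk : φ ((a : Module.End F V) v) ≠ 0) :
    (φ.smulRight v : Module.End F V) * a = a * (φ.smulRight v : Module.End F V) := by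
  set e : Module.End F V := φ.smulRight v with he
  have hsand : ∀ x : Module.End F V, e * x * e = φ (x v) • e := smulRight_sandwich φ v
  have hee : e * e = e := by
    have := hsand 1
    simpa [h1] using this
  have he0 : e ≠ 0 := by
    intro h0
    have := LinearMap.congr_fun h0 v
    simp only [he, LinearMap.smulRight_apply, h1, one_smul, LinearMap.zero_apply] at this
    rw [this, map_zero] at h1
    exact zero_ne_one h1
  set k := φ ((a : Module.End F V) v)
  set a' : Module.End F V := ((a⁻¹ : (Module.End F V)ˣ) : Module.End F V) with ha'
  set k' := φ (a' v)
  have haa' : (a : Module.End F V) * a' = 1 := a.mul_inv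
  have ha'a : a' * (a : Module.End F V) = 1 := a.inv_mul
  have e1 : k • (e * a') = k' • (a * e) := by
    have x1 : e * (a * e * a') = k • (e * a') := by
      rw [← mul_assoc, ← mul_assoc, hsand, smul_mul_assoc]
    have x2 : (a * e * a') * e = k' • (a * e) := by
      rw [mul_assoc (a : Module.End F V), mul_assoc (a : Module.End F V), hsand, mul_smul_comm]
    rw [← x1, ← x2, hc]
  have e2 : e * a' = k' • e := by
    have x1 := congrArg (fun z => e * z) e1
    simp only [mul_smul_comm] at x1
    rw [← mul_assoc, hee, ← mul_assoc, hsand, smul_comm] at x1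
    exact smul_right_injective _ hk x1
  have e3 : e = k' • (e * a) := by
    have x1 := congrArg (fun z => z * (a : Module.End F V)) e2
    simp only [smul_mul_assoc] at x1
    rwa [mul_assoc, ha'a, mul_one] at x1
  have hk' : k' ≠ 0 := by
    intro h0
    rw [h0, zero_smul] at e3
    exact he0 e3
  have e4 : k • e = a * e := by
    rw [e2, smul_comm] at e1
    exact smul_right_injective _ hk' e1
  have e5 : (k' * k) • e = e := by
    have x1 := congrArg (fun z => z * e) e3
    simp only [smul_mul_assoc] at x1
    rw [hee, hsand, smul_smul] at x1
    exact x1.symm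
  have e6 : k * k' = 1 := by
    have x1 : (k' * k - 1) • e = 0 := by rw [sub_smul, one_smul, e5, sub_self]
    rcases smul_eq_zero.1 x1 with h | h
    · rw [mul_comm]; exact sub_eq_zero.1 h
    · exact absurd h he0
  rw [← e4]
  nth_rewrite 2 [e3]
  rw [smul_smul, e6, one_smul]

theorem even_struct [Module.Finite F V] (h3 : 3 ≤ Module.finrank F V) (h2 : (2 : F) ≠ 0)
    (A : Subgroup (Module.End F V)ˣ) (hAZ : ¬ A ≤ scal F (Module.End F V))
    (hc : ∀ a ∈ A, ∀ b ∈ A, a * b * a⁻¹ * b⁻¹ ∈ scal F (Module.End F V))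
    (hA2 : ∀ a ∈ A, a ^ 2 ∈ scal F (Module.End F V))
    (htw : ∀ a ∈ A, a ∉ scal F (Module.End F V) →
      ∃ c ∈ A, ∃ l : F, l ≠ 1 ∧ (c : Module.End F V) * a = l • ((a : Module.End F V) * c))
    {t : (Module.End F V)ˣ} {φ : V →ₗ[F] F} {v : V}
    (ht : ReflData t φ v)
    (htA : ∀ a ∈ A, t * a * t⁻¹ ∈ A) :
    Module.finrank F V = 4 ∧ ∀ m : Module.End F V,
      (∀ a ∈ A, m * (a : Module.End F V) = a * m) → ∃ μ : F, m = μ • 1 := by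
  set R := Module.End F V with hR
  set Z := scal F R with hZ
  set e : R := φ.smulRight v with he
  have hcen : ∀ z ∈ Z, ∀ g, g * z = z * g := fun z hz g =>
    Subgroup.mem_center_iff.1 (scal_le_center F _ hz) g
  have hsand : ∀ x : R, e * x * e = φ (x v) • e := smulRight_sandwich φ v
  have hte : (t : R) = 1 - (2 : F) • e := ht.val
  have tcomm : ∀ x : R, (t : R) * x = x * t → e * x = x * e := by
    intro x hx
    rw [hte, sub_mul, mul_sub, one_mul, mul_one, smul_mul_assoc, mul_smul_comm] at hx
    exact smul_right_injective _ h2 (sub_right_injective hx)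
  have tcomm' : ∀ x : R, e * x = x * e → (t : R) * x = x * t := by
    intro x hx
    rw [hte, sub_mul, mul_sub, one_mul, mul_one, smul_mul_assoc, mul_smul_comm, hx]
  have htinv := ht.inv
  have htsq := ht.sq
  have huni : ∀ g k : Rˣ, (g : R) * k = k * g ↔ g * k = k * g := by
    intro g k
    rw [← Units.val_mul, ← Units.val_mul, Units.val_inj]
  -- the key orthogonality
  have hB : ∀ a ∈ A, t * (a * t * a⁻¹) = (a * t * a⁻¹) * t := by
    intro a ha
    have hbA : t * a * t⁻¹ * a⁻¹ ∈ A := A.mul_mem (htA a ha) (A.inv_mem ha)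
    have hb : t * (t * a * t⁻¹ * a⁻¹) = (t * a * t⁻¹ * a⁻¹) * t := by
      apply rl_unit h3 ht
      have h4 : t * (t * a * t⁻¹ * a⁻¹) * t⁻¹ * (t * a * t⁻¹ * a⁻¹)⁻¹
          = ((t * a * t⁻¹ * a⁻¹) ^ 2)⁻¹ := by
        rw [htinv, pow_two]
        have : t * (t * a * t * a⁻¹) * t = (t * t) * a * t * a⁻¹ * t := by group
        rw [this, htsq, one_mul]
        have h5 : t * a * t * a⁻¹ * (a * t * a⁻¹ * t) = 1 := by
          have : t * a * t * a⁻¹ * (a * t * a⁻¹ * t) = t * a * (t * t) * a⁻¹ * t := by group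
          rw [this, htsq]
          simp [htsq]
        rw [eq_inv_of_mul_eq_one_right h5, ← _root_.mul_inv_rev]
      rw [h4]
      exact Z.inv_mem (hA2 _ hbA)
    · rw [htinv] at hb
      have h7 := congrArg (fun z => t * z) hb
      have h8 : t * (t * (t * a * t * a⁻¹)) = (t * t) * (t * (a * t * a⁻¹)) := by group
      have h9 : t * (t * a * t * a⁻¹ * t) = (t * t) * ((a * t * a⁻¹) * t) := by group
      rw [h8, h9, htsq, one_mul, one_mul] at h7
      exact h7
  have hO : ∀ a ∈ A, t * a ≠ a * t → φ ((a : R) v) = 0 := by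
    intro a ha hta
    by_contra hk
    have h6 := hB a ha
    have h7 : e * (a * t * a⁻¹ : Rˣ) = (a * t * a⁻¹ : Rˣ) * e := tcomm _ ((huni _ _).2 h6)
    have h8 : ((a * t * a⁻¹ : Rˣ) : R) = 1 - (2 : F) • (a * e * (a⁻¹ : Rˣ)) := by
      rw [Units.val_mul, Units.val_mul, hte, mul_sub, sub_mul, mul_one, Units.mul_inv,
        mul_smul_comm, smul_mul_assoc]
    rw [h8, mul_sub, sub_mul, mul_one, one_mul, mul_smul_comm, smul_mul_assoc] at h7
    have h9 := smul_right_injective _ h2 (sub_right_injective h7)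
    have h10 := rank_one_comm φ v ht.one a h9 hk
    exact hta ((huni _ _).1 (tcomm' _ h10))
  have hE : ∀ a ∈ A, t * a ≠ a * t →
      ((t * a * t⁻¹ * a⁻¹ : Rˣ) : R) = 1 - (2 : F) • (e + a * e * (a⁻¹ : Rˣ)) := by
    intro a ha hta
    have h4 := hO a ha hta
    rw [htinv, Units.val_mul, Units.val_mul, Units.val_mul, hte]
    have h5 : e * a * e = 0 := by rw [hsand, h4, zero_smul]
    have h6 : (1 - (2 : F) • e) * a * (1 - (2 : F) • e) * (a⁻¹ : Rˣ)
       = a * (a⁻¹ : Rˣ) - (2 : F) • (e * (a * (a⁻¹ : Rˣ)) + a * e * (a⁻¹ : Rˣ))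
        + (4 : F) • (e * a * e * (a⁻¹ : Rˣ)) := by
      have : (4 : F) = 2 * 2 := by norm_num
      rw [this]
      simp only [sub_mul, mul_sub, one_mul, mul_one, smul_mul_assoc, mul_smul_comm, smul_add,
        mul_assoc, mul_smul, add_mul, mul_add]
      module
    rw [h6, h5, Units.mul_inv]
    simp
  -- sign of commutators
  have hneg : ∀ a ∈ A, ∀ c ∈ A, ∀ l : F, l ≠ 1 → (c : R) * a = l • ((a : R) * c) → l = -1 := by
    intro a ha c hcA l hl h
    have h4 := (huni c (a ^ 2)).2 (hcen _ (hA2 a ha) c)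
    rw [Units.val_pow_eq_pow_val, pow_two, ← mul_assoc, h, smul_mul_assoc, mul_assoc, h,
      mul_smul_comm, smul_smul, ← mul_assoc] at h4
    have h5 : (l * l - 1) • ((a * a * c : Rˣ) : R) = 0 := by
      rw [sub_smul, one_smul]
      simp only [Units.val_mul]
      rw [h4, sub_self]
    have hnt : Nontrivial V := ⟨v, 0, ht.ne_zero⟩
    rcases smul_eq_zero.1 h5 with h6 | h6
    · have : (l - 1) * (l + 1) = 0 := by linear_combination h6
      rcases mul_eq_zero.1 this with h7 | h7
      · exact absurd (sub_eq_zero.1 h7) hl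
      · exact eq_neg_of_add_eq_zero_left h7
    · exact absurd h6 (Units.ne_zero _)
  have hnt : Nontrivial V := ⟨v, 0, ht.ne_zero⟩
  -- an element not commuting with t
  obtain ⟨a, ha, hta⟩ : ∃ a ∈ A, t * a ≠ a * t := by
    by_contra hcon
    push Not at hcon
    obtain ⟨a, ha, haZ⟩ := Set.not_subset.1 hAZ
    obtain ⟨c, hcA, l, hl, hca⟩ := htw a ha haZ
    have e1 := ht.eig h2 ((huni t a).2 (hcon a ha))
    have e2 := ht.eig h2 ((huni t c).2 (hcon c hcA))
    have e3 := LinearMap.congr_fun hca v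
    simp only [LinearMap.smul_apply, hR, Module.End.mul_apply] at e3
    rw [e1, map_smul, e2, map_smul, e1, smul_smul, smul_smul, smul_smul] at e3
    have e4 := smul_left_injective F ht.ne_zero e3
    have k1 : φ ((a : R) v) ≠ 0 := by
      intro h0
      rw [h0, zero_smul] at e1
      exact unit_app_ne a.isUnit ht.ne_zero e1
    have k2 : φ ((c : R) v) ≠ 0 := by
      intro h0
      rw [h0, zero_smul] at e2
      exact unit_app_ne c.isUnit ht.ne_zero e2
    apply hl
    rw [← e1] at e4
    have : φ ((a : R) v) * φ ((c : R) v) * (l - 1) = 0 := by linear_combination -e4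
    rcases mul_eq_zero.1 this with h | h
    · exact absurd h (mul_ne_zero k1 k2)
    · exact sub_eq_zero.1 h
  have hAneg : ∀ x : Rˣ, (t : R) * x ≠ -(x * t) := by
    intro x hx
    have h4 := ht.rl h3 x (-1) (by rw [hx, neg_smul, one_smul])
    apply h2
    linear_combination -h4
  have hnz : ∀ x y : Rˣ, x * y⁻¹ ∈ Z → t * y ≠ y * t → t * x ≠ x * t := by
    intro x y hxy hy hx
    apply hy
    have h4 : y = (x * y⁻¹)⁻¹ * x := by group
    rw [h4, ← mul_assoc, hcen _ (Z.inv_mem hxy) t, mul_assoc, hx, mul_assoc]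
  have hni : ∀ x : Rˣ, t * x ≠ x * t → t * x⁻¹ ≠ x⁻¹ * t := by
    intro x hx h
    apply hx
    have h4 : x * (t * x⁻¹) * x = x * (x⁻¹ * t) * x := by rw [h]
    have h5 : x * (t * x⁻¹) * x = x * t := by group
    have h6 : x * (x⁻¹ * t) * x = t * x := by group
    rw [← h5, ← h6, h4]
  set b : Rˣ := t * a * t⁻¹ * a⁻¹ with hb
  have hbA : b ∈ A := A.mul_mem (htA a ha) (A.inv_mem ha)
  have hbZ : b ∉ Z := fun h => hta (rl_unit h3 ht a h)
  obtain ⟨c, hcA, l, hl, hcb⟩ := htw b hbA hbZ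
  have hl1 := hneg b hbA c hcA l hl hcb
  rw [hl1, neg_smul, one_smul] at hcb
  have hb2 : b = a * t * a⁻¹ * t := by
    rw [hb, ← hB a ha, htinv]; group
  have n02 : t * c ≠ c * t := by
    intro htc
    apply hAneg (a⁻¹ * c * a)
    have h4 : ((c * b : Rˣ) : R) = - ((b * c : Rˣ) : R) := by
      simpa only [Units.val_mul] using hcb
    have h5 : ((t * (a⁻¹ * c * a) : Rˣ) : R) = ((a⁻¹ * t * (b * c) * a : Rˣ) : R) := by
      congr 1
      have : a⁻¹ * t * (b * c) * a = a⁻¹ * (t * t) * a * t * a⁻¹ * c * a := by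
        rw [hb, htinv]; group
      rw [this, htsq]; group
    have h6 : (((a⁻¹ * c * a) * t : Rˣ) : R) = ((a⁻¹ * t * (c * b) * a : Rˣ) : R) := by
      congr 1
      have : a⁻¹ * t * (c * b) * a = a⁻¹ * ((t * c) * t) * a * t := by
        rw [hb, htinv]; group
      rw [this, htc, mul_assoc c, htsq]; group
    rw [← Units.val_mul, ← Units.val_mul, h5, h6, Units.val_mul _ a, Units.val_mul _ (b * c),
      Units.val_mul _ a, Units.val_mul _ (c * b), h4]
    simp
  have n03 : t * (c * a) ≠ (c * a) * t := by
    intro htc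
    apply hAneg (a⁻¹ * c)
    have h4 : ((c * b : Rˣ) : R) = - ((b * c : Rˣ) : R) := by
      simpa only [Units.val_mul] using hcb
    have h5 : ((t * (a⁻¹ * c) : Rˣ) : R) = ((a⁻¹ * t * (b * c) : Rˣ) : R) := by
      congr 1
      have : a⁻¹ * t * (b * c) = a⁻¹ * (t * t) * a * t * a⁻¹ * c := by
        rw [hb, htinv]; group
      rw [this, htsq]; group
    have h6 : (((a⁻¹ * c) * t : Rˣ) : R) = ((a⁻¹ * t * (c * b) : Rˣ) : R) := by
      congr 1
      have : a⁻¹ * t * (c * b) = a⁻¹ * t * (c * a * t) * a⁻¹ * t := by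
        rw [hb2]; group
      rw [this, ← htc]
      have : a⁻¹ * t * (t * (c * a)) * a⁻¹ * t = a⁻¹ * (t * t) * c * t := by group
      rw [this, htsq]; group
    rw [← Units.val_mul, ← Units.val_mul, h5, h6, Units.val_mul _ (b * c),
      Units.val_mul _ (c * b), h4]
    simp
  have n12 : t * (a⁻¹ * c) ≠ (a⁻¹ * c) * t := by
    apply hnz _ (c * a) _ n03
    have h4 : a⁻¹ * c * (c * a)⁻¹ = (a⁻¹ * c * a⁻¹⁻¹ * c⁻¹) * (c * (a ^ 2)⁻¹ * c⁻¹) := by group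
    rw [h4, hcen _ (Z.inv_mem (hA2 a ha)), mul_inv_cancel_right]
    exact Z.mul_mem (hc _ (A.inv_mem ha) _ hcA) (Z.inv_mem (hA2 a ha))
  have n13 : t * (a⁻¹ * (c * a)) ≠ (a⁻¹ * (c * a)) * t := by
    apply hnz _ c _ n02
    have h4 : a⁻¹ * (c * a) * c⁻¹ = a⁻¹ * c * a⁻¹⁻¹ * c⁻¹ := by group
    rw [h4]
    exact hc _ (A.inv_mem ha) _ hcA
  let g : Fin 4 → Rˣ := ![1, a, c, c * a]
  have hgA : ∀ i, g i ∈ A := by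
    intro i
    fin_cases i
    · exact A.one_mem
    · exact ha
    · exact hcA
    · exact A.mul_mem hcA ha
  have hgn : ∀ i j, i < j → t * ((g i)⁻¹ * g j) ≠ ((g i)⁻¹ * g j) * t := by
    have n23 : t * (c⁻¹ * (c * a)) ≠ (c⁻¹ * (c * a)) * t := by rwa [inv_mul_cancel_left]
    have n1 : ∀ x : Rˣ, t * x ≠ x * t → t * (1⁻¹ * x) ≠ 1⁻¹ * x * t := by
      intro x hx; simpa using hx
    intro i j hij
    fin_cases i <;> fin_cases j <;> first
      | (exfalso; revert hij; decide)
      | exact n1 _ hta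
      | exact n1 _ n02
      | exact n1 _ n03
      | exact n12
      | exact n13
      | exact n23
  have hgn' : ∀ i j, i ≠ j → t * ((g i)⁻¹ * g j) ≠ ((g i)⁻¹ * g j) * t := by
    intro i j hij
    rcases lt_or_gt_of_ne hij with h | h
    · exact hgn i j h
    · have := hni _ (hgn j i h)
      simpa using this
  have hδ : ∀ i j, φ ((((g i)⁻¹ * g j : Rˣ) : R) v) = if i = j then 1 else 0 := by
    intro i j
    split_ifs with h
    · rw [h, inv_mul_cancel]; exact ht.one
    · exact hO _ (A.mul_mem (A.inv_mem (hgA i)) (hgA j)) (hgn' i j h)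
  have hsum : ∑ i, (g i : R) * e * ((g i)⁻¹ : Rˣ) = 1 := by
    have h4 := hE a ha hta
    rw [← hb] at h4
    have h5 := congrArg (fun z => z * ((c⁻¹ : Rˣ) : R)) hcb
    simp only [h4] at h5
    have h6 : (c : R) * (1 - (2 : F) • (e + a * e * (a⁻¹ : Rˣ))) * (c⁻¹ : Rˣ)
       = c * (c⁻¹ : Rˣ) - (2 : F) • (c * e * (c⁻¹ : Rˣ) + (c * a : Rˣ) * e * ((c * a)⁻¹ : Rˣ)) := by
      rw [_root_.mul_inv_rev]
      simp only [Units.val_mul, sub_mul, mul_sub, one_mul, mul_one, smul_mul_assoc, mul_smul_comm, smul_add,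
        mul_assoc, add_mul, mul_add]
    have h7 : -((1 - (2 : F) • (e + a * e * (a⁻¹ : Rˣ))) * (c : R)) * (c⁻¹ : Rˣ)
       = -((1 - (2 : F) • (e + a * e * (a⁻¹ : Rˣ))) * (c * (c⁻¹ : Rˣ))) := by
      rw [neg_mul, mul_assoc]
    rw [h6, h7, Units.mul_inv, mul_one] at h5
    rw [Fin.sum_univ_four]
    have h8 : (2 : F) • (e + a * e * (a⁻¹ : Rˣ) + c * e * (c⁻¹ : Rˣ) + (c * a : Rˣ) * e * ((c * a)⁻¹ : Rˣ))
        = (2 : F) • (1 : R) := by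
      linear_combination (norm := module) (-1 : F) • h5
    have h9 := smul_right_injective _ h2 h8
    simpa [g] using h9
  have hdec : ∀ w : V, ∑ i, φ ((((g i)⁻¹ : Rˣ) : R) w) • (g i : R) v = w := by
    intro w
    have h4 := LinearMap.congr_fun hsum w
    rw [LinearMap.sum_apply] at h4
    refine Eq.trans ?_ h4
    apply Finset.sum_congr rfl
    intro i _
    change _ = (g i : R) (e ((((g i)⁻¹ : Rˣ) : R) w))
    rw [he, LinearMap.smulRight_apply, map_smul]
  refine ⟨?_, ?_⟩
  · let f1 : V →ₗ[F] (Fin 4 → F) := LinearMap.pi (fun i => φ ∘ₗ (((g i)⁻¹ : Rˣ) : R))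
    let f2 : (Fin 4 → F) →ₗ[F] V := Fintype.linearCombination F (fun i => (g i : R) v)
    have E : V ≃ₗ[F] (Fin 4 → F) := LinearEquiv.ofLinearMap f1 f2 (by
      apply LinearMap.ext
      intro x
      ext i
      simp only [f1, f2, LinearMap.comp_apply, LinearMap.pi_apply, Fintype.linearCombination_apply,
        map_sum, map_smul, LinearMap.id_apply]
      have : ∀ j, φ ((((g i)⁻¹ : Rˣ) : R) ((g j : R) v)) = if i = j then 1 else 0 := hδ i
      simp [this]) (by
      apply LinearMap.ext
      intro w
      simp only [f1, f2, LinearMap.comp_apply, LinearMap.pi_apply, Fintype.linearCombination_apply,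
        LinearMap.id_apply]
      exact hdec w)
    rw [E.finrank_eq]; simp
  · intro m hm
    have hmE : ∀ i, i ≠ 0 → m * (e + (g i : R) * e * ((g i)⁻¹ : Rˣ))
        = (e + (g i : R) * e * ((g i)⁻¹ : Rˣ)) * m := by
      intro i hi
      have h4 : t * g i ≠ g i * t := by
        have := hgn' 0 i hi.symm
        simpa [g] using this
      have h5 := hE _ (hgA i) h4
      have h6 := hm _ (A.mul_mem (htA _ (hgA i)) (A.inv_mem (hgA i)))
      rw [h5, mul_sub, sub_mul, mul_one, one_mul, mul_smul_comm, smul_mul_assoc] at h6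
      exact smul_right_injective _ h2 (sub_right_injective h6)
    have hme : (t : R) * m = m * t := by
      apply tcomm'
      have k1 := hmE 1 (by decide)
      have k2 := hmE 2 (by decide)
      have k3 := hmE 3 (by decide)
      have k0 : m * ∑ i, (g i : R) * e * ((g i)⁻¹ : Rˣ) = (∑ i, (g i : R) * e * ((g i)⁻¹ : Rˣ)) * m := by
        rw [hsum]; simp
      rw [Fin.sum_univ_four] at k0
      have g0 : (g 0 : R) * e * ((g 0)⁻¹ : Rˣ) = e := by simp [g]
      rw [g0] at k0
      apply smul_right_injective _ h2
      simp only [mul_add, add_mul] at k0 k1 k2 k3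
      change (2 : F) • (e * m) = (2 : F) • (m * e)
      linear_combination (norm := module) (1 : F) • k0 - (1 : F) • k1 - (1 : F) • k2 - (1 : F) • k3
    have hev := ht.eig h2 hme
    refine ⟨φ (m v), ?_⟩
    apply LinearMap.ext
    intro w
    rw [← hdec w, map_sum, map_sum]
    apply Finset.sum_congr rfl
    intro i _
    rw [map_smul, map_smul]
    congr 1
    have h4 := LinearMap.congr_fun (hm _ (hgA i)) v
    change m ((g i : R) v) = (g i : R) (m v) at h4
    rw [h4]
    nth_rewrite 1 [hev]
    rw [map_smul]
    rfl

end PartFour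

section PartFive

variable {F V : Type*} [Field F] [AddCommGroup V] [Module F V]

theorem trace_zero_of_twist [Module.Finite F V] (a c : (Module.End F V)ˣ) (l : F) (hl : l ≠ 1)
    (h : (c : Module.End F V) * a = l • ((a : Module.End F V) * c)) :
    LinearMap.trace F V (a : Module.End F V) = 0 := by
  have h1 := congrArg (fun z => LinearMap.trace F V (z * ((c⁻¹ : (Module.End F V)ˣ) : Module.End F V))) h
  simp only [smul_mul_assoc, map_smul] at h1
  rw [LinearMap.trace_conj, mul_assoc, Units.mul_inv, mul_one, smul_eq_mul] at h1
  have h2 : (l - 1) * LinearMap.trace F V (a : Module.End F V) = 0 := by linear_combination -h1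
  rcases mul_eq_zero.1 h2 with h3 | h3
  · exact absurd (sub_eq_zero.1 h3) hl
  · exact h3

theorem quot_bound [Finite F] [Module.Finite F V] (h4 : Module.finrank F V = 4) (h2 : (2 : F) ≠ 0)
    (A : Subgroup (Module.End F V)ˣ)
    (hA2 : ∀ a ∈ A, a ^ 2 ∈ scal F (Module.End F V))
    (htr : ∀ a ∈ A, a ∉ scal F (Module.End F V) → LinearMap.trace F V (a : Module.End F V) = 0) :
    ∃ k ≤ 4, (scal F (Module.End F V)).relIndex A = 2 ^ k := by
  have hfinV : Finite V := Module.finite_of_finite F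
  have hfinR : Finite (Module.End F V) := Module.finite_of_finite F
  set Z := scal F (Module.End F V) with hZ
  have hZn : Z.Normal := ⟨fun z hz g => by
    have := Subgroup.mem_center_iff.1 (scal_le_center F _ hz) g
    rw [this]; simpa using hz⟩
  have : (Z.subgroupOf A).Normal := inferInstance
  have hp : IsPGroup 2 (A ⧸ Z.subgroupOf A) := by
    intro x
    obtain ⟨a, rfl⟩ := QuotientGroup.mk_surjective x
    refine ⟨1, ?_⟩
    rw [pow_one, ← QuotientGroup.mk_pow, QuotientGroup.eq_one_iff, Subgroup.mem_subgroupOf]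
    exact hA2 a a.2
  have : Fact (Nat.Prime 2) := ⟨Nat.prime_two⟩
  obtain ⟨k, hk⟩ := IsPGroup.iff_card.1 hp
  have hli : LinearIndependent F (fun x : A ⧸ Z.subgroupOf A => ((x.out : (Module.End F V)ˣ) : Module.End F V)) := by
    have : Fintype (A ⧸ Z.subgroupOf A) := Fintype.ofFinite _
    rw [Fintype.linearIndependent_iff]
    intro c hc x
    have h5 := congrArg (fun z => LinearMap.trace F V ((((x.out : (Module.End F V)ˣ)⁻¹ : (Module.End F V)ˣ) : Module.End F V) * z)) hc
    simp only [Finset.mul_sum, map_sum, mul_smul_comm, map_smul, mul_zero, map_zero] at h5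
    rw [Finset.sum_eq_single x] at h5
    · rw [Units.inv_mul, LinearMap.trace_one, h4] at h5
      have h6 : c x * (2 * 2) = 0 := by
        rw [smul_eq_mul] at h5; rw [← h5]; norm_num
      rcases mul_eq_zero.1 h6 with h7 | h7
      · exact h7
      · exact absurd h7 (mul_ne_zero h2 h2)
    · intro y _ hyx
      rw [← Units.val_mul, htr _ (A.mul_mem (A.inv_mem x.out.2) y.out.2), smul_zero]
      intro hmem
      apply hyx
      have h7 : (x.out : A ⧸ Z.subgroupOf A) = y.out := by
        rw [QuotientGroup.eq, Subgroup.mem_subgroupOf]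
        exact hmem
      rw [QuotientGroup.out_eq', QuotientGroup.out_eq'] at h7
      exact h7.symm
    · intro h; exact absurd (Finset.mem_univ _) h
  have hcard : Nat.card (A ⧸ Z.subgroupOf A) ≤ 16 := by
    have : Fintype (A ⧸ Z.subgroupOf A) := Fintype.ofFinite _
    have h5 := hli.fintype_card_le_finrank
    rw [Module.finrank_linearMap, h4] at h5
    rw [Nat.card_eq_fintype_card]; exact h5
  refine ⟨k, ?_, hk⟩
  by_contra hk5
  have : 2 ^ 5 ≤ 2 ^ k := Nat.pow_le_pow_right (by norm_num) (by omega)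
  rw [hk] at hcard
  omega

theorem trace_formula [Finite F] [Module.Finite F V] (h4 : Module.finrank F V = 4) (h2 : (2 : F) ≠ 0)
    (A : Subgroup (Module.End F V)ˣ) (hcard : (Nat.card A : F) ≠ 0)
    (hA2 : ∀ a ∈ A, a ^ 2 ∈ scal F (Module.End F V))
    (htr : ∀ a ∈ A, a ∉ scal F (Module.End F V) → LinearMap.trace F V (a : Module.End F V) = 0)
    (hCA : ∀ m : Module.End F V,
      (∀ a ∈ A, m * (a : Module.End F V) = a * m) → ∃ μ : F, m = μ • 1)
    (g : (Module.End F V)ˣ) (hg : ∀ a ∈ A, g * a * g⁻¹ ∈ A)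
    (htg : LinearMap.trace F V (g : Module.End F V) ≠ 0) :
    ∃ k ≤ 4, (Subgroup.centralizer {g}).relIndex A = 2 ^ k ∧
      (16 : F) = 2 ^ k * (LinearMap.trace F V (g : Module.End F V) *
        LinearMap.trace F V ((g⁻¹ : (Module.End F V)ˣ) : Module.End F V)) := by
  classical
  have hfinV : Finite V := Module.finite_of_finite F
  have hfinR : Finite (Module.End F V) := Module.finite_of_finite F
  obtain ⟨k0, hk0, hZk⟩ := quot_bound h4 h2 A hA2 htr
  set R := Module.End F V with hR
  set Z := scal F R with hZ
  set C := Subgroup.centralizer {g} with hC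
  have hmemC : ∀ a, a ∈ C ↔ g * a = a * g := by
    intro a
    rw [hC, Subgroup.mem_centralizer_singleton_iff]
    exact eq_comm
  have hZC : Z ≤ C := by
    intro z hz
    rw [hmemC]
    exact Subgroup.mem_center_iff.1 (scal_le_center F _ hz) g
  have hdvd := Subgroup.relIndex_dvd_of_le_left A hZC
  rw [hZk] at hdvd
  obtain ⟨k, hk, hCk⟩ := (Nat.dvd_prime_pow Nat.prime_two).1 hdvd
  refine ⟨k, hk.trans hk0, hCk, ?_⟩
  have : Fintype A := Fintype.ofFinite _
  let T := LinearMap.trace F V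
  let S : R := ∑ a : A, ((a : Rˣ) : R) * ((g⁻¹ : Rˣ) : R) * (((a : Rˣ)⁻¹ : Rˣ) : R)
  obtain ⟨μ, hμ⟩ := hCA S (by
    intro b hb
    have h5 : ((b : Rˣ) : R) * S * ((b⁻¹ : Rˣ) : R) = S := by
      simp only [S, Finset.mul_sum, Finset.sum_mul]
      refine Fintype.sum_equiv (Equiv.mulLeft (⟨b, hb⟩ : A)) _ _ ?_
      intro a
      simp [mul_assoc]
    calc S * b = (b * S * ((b⁻¹ : Rˣ) : R)) * b := by rw [h5]
      _ = b * S := by rw [mul_assoc, Units.inv_mul, mul_one])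
  have e1 : μ * 4 = Nat.card A * T ((g⁻¹ : Rˣ) : R) := by
    have h5 := congrArg T hμ
    simp only [S, map_sum, map_smul, T] at h5
    rw [LinearMap.trace_one, h4] at h5
    have h6 : ∀ a : A, LinearMap.trace F V (((a : Rˣ) : R) * ((g⁻¹ : Rˣ) : R) * (((a : Rˣ)⁻¹ : Rˣ) : R))
        = T ((g⁻¹ : Rˣ) : R) := fun a => LinearMap.trace_conj _ _ _
    rw [Finset.sum_congr rfl (fun a _ => h6 a), Finset.sum_const, Finset.card_univ, nsmul_eq_mul, ← Nat.card_eq_fintype_card, smul_eq_mul] at h5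
    push_cast at h5
    exact h5.symm
  have e2 : μ * T (g : R) = 4 * Nat.card (C ⊓ A : Subgroup Rˣ) := by
    have h5 := congrArg (fun z => T ((g : R) * z)) hμ
    simp only [S, Finset.mul_sum, map_sum, mul_smul_comm, map_smul, mul_one, smul_eq_mul] at h5
    rw [← h5]
    have h6 : ∀ a : A, T ((g : R) * (((a : Rˣ) : R) * ((g⁻¹ : Rˣ) : R) * (((a : Rˣ)⁻¹ : Rˣ) : R)))
        = if (a : Rˣ) ∈ C then 4 else 0 := by
      intro a
      have h7 : (g : R) * (((a : Rˣ) : R) * ((g⁻¹ : Rˣ) : R) * (((a : Rˣ)⁻¹ : Rˣ) : R))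
          = ((g * a * g⁻¹ * (a : Rˣ)⁻¹ : Rˣ) : R) := by
        simp [mul_assoc]
      rw [h7]
      split_ifs with h8
      · rw [hmemC] at h8
        have : g * a * g⁻¹ * (a : Rˣ)⁻¹ = 1 := by rw [h8]; group
        rw [this, Units.val_one]
        simp only [T]
        rw [LinearMap.trace_one, h4]; norm_num
      · apply htr _ (A.mul_mem (hg a a.2) (A.inv_mem a.2))
        rintro ⟨z, hz⟩
        apply h8
        rw [hmemC]
        have h9 : g = (g * a * g⁻¹ * (a : Rˣ)⁻¹) * ((a : Rˣ) * g * (a : Rˣ)⁻¹) := by group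
        have h10 := congrArg (fun z : Rˣ => T (z : R)) h9
        replace h10 : T (g : R) = T ((g * (a : Rˣ) * g⁻¹ * (a : Rˣ)⁻¹ * ((a : Rˣ) * g * (a : Rˣ)⁻¹) : Rˣ) : R) := h10
        rw [Units.val_mul _ ((a : Rˣ) * g * (a : Rˣ)⁻¹), hz, smul_mul_assoc, one_mul, map_smul,
          Units.val_mul, Units.val_mul] at h10
        simp only [T] at h10
        rw [LinearMap.trace_conj, smul_eq_mul] at h10
        have h11 : z = 1 := by
          have : (z - 1) * T (g : R) = 0 := by linear_combination -h10
          rcases mul_eq_zero.1 this with h | h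
          · exact sub_eq_zero.1 h
          · exact absurd h htg
        rw [h11, one_smul] at hz
        have h12 : g * a * g⁻¹ * (a : Rˣ)⁻¹ = 1 := Units.ext hz
        have h13 := mul_inv_eq_one.1 h12
        exact mul_inv_eq_iff_eq_mul.1 h13
    rw [Finset.sum_congr rfl (fun a _ => h6 a), Finset.sum_ite, Finset.sum_const_zero, add_zero,
      Finset.sum_const, nsmul_eq_mul, mul_comm]
    congr 2
    rw [← Fintype.card_subtype, ← Nat.card_eq_fintype_card]
    apply Nat.card_congr
    exact
      { toFun := fun x => ⟨x.1.1, x.2, x.1.2⟩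
        invFun := fun x => ⟨⟨x.1, x.2.2⟩, x.2.1⟩
        left_inv := fun x => rfl
        right_inv := fun x => rfl }
  have e3 : Nat.card A = 2 ^ k * Nat.card (C ⊓ A : Subgroup Rˣ) := by
    rw [← hCk, ← Subgroup.inf_relIndex_right, mul_comm]
    have h5 := Subgroup.relIndex_mul_relIndex (⊥ : Subgroup Rˣ) (C ⊓ A) A bot_le inf_le_right
    rw [Subgroup.relIndex_bot_left, Subgroup.relIndex_bot_left] at h5
    exact h5.symm
  have e4 : ((Nat.card (C ⊓ A : Subgroup Rˣ) : ℕ) : F) ≠ 0 := by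
    intro h0
    rw [e3] at hcard
    push_cast at hcard
    exact hcard (by rw [h0, mul_zero])
  rw [e3] at e1
  push_cast at e1
  have e5 : ((Nat.card (C ⊓ A : Subgroup Rˣ) : ℕ) : F) * (16 - 2 ^ k * (T (g : R) * T ((g⁻¹ : Rˣ) : R))) = 0 := by
    linear_combination T (g : R) * e1 - 4 * e2
  rcases mul_eq_zero.1 e5 with h | h
  · exact absurd h e4
  · exact sub_eq_zero.1 h

end PartFive

section PartSix

variable {F V : Type*} [Field F] [AddCommGroup V] [Module F V]

theorem conj_elem {G : Type*} [Group G] [Finite G] (H : Subgroup G) (hH : ¬ 2 ∣ H.index)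
    (u : G) (k : ℕ) (hu : u ^ (2 ^ k) = 1) : ∃ w : G, w⁻¹ * u * w ∈ H := by
  have hQ : IsPGroup 2 (Subgroup.zpowers u) := by
    rintro ⟨x, hx⟩
    obtain ⟨n, hn⟩ := Subgroup.mem_zpowers_iff.1 hx
    refine ⟨k, ?_⟩
    ext
    rw [Subgroup.coe_pow, Subgroup.coe_one]
    change x ^ 2 ^ k = 1
    rw [← hn, ← zpow_natCast, ← _root_.zpow_mul, mul_comm, _root_.zpow_mul, zpow_natCast, hu, _root_.one_zpow]
  obtain ⟨g, hg⟩ := hall_conj_two_group H _ hH hQ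
  exact ⟨g, hg u (Subgroup.mem_zpowers u)⟩

theorem elem_of_matrix [Finite F] [Module.Finite F V] (h4 : Module.finrank F V = 4)
    (H : Subgroup (Module.End F V)ˣ) (hH : ¬ 2 ∣ H.index)
    (M N : Matrix (Fin 4) (Fin 4) F) (k : ℕ) (hMN : M * N = 1) (hM : M ^ (2 ^ k) = 1) :
    ∃ g ∈ H, g ^ (2 ^ k) = 1 ∧ ∀ n : ℕ,
      LinearMap.trace F V ((g ^ n : (Module.End F V)ˣ) : Module.End F V) = (M ^ n).trace ∧
      LinearMap.trace F V (((g ^ n)⁻¹ : (Module.End F V)ˣ) : Module.End F V) = (N ^ n).trace := by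
  have hfinV : Finite V := Module.finite_of_finite F
  have hfinR : Finite (Module.End F V) := Module.finite_of_finite F
  have hNM : N * M = 1 := mul_eq_one_comm.1 hMN
  let b := Module.finBasisOfFinrankEq F V h4
  let E := Matrix.toLinAlgEquiv b
  let u : (Module.End F V)ˣ := ⟨E M, E N, by rw [← map_mul, hMN, map_one], by rw [← map_mul, hNM, map_one]⟩
  have hup : ∀ n : ℕ, ((u ^ n : (Module.End F V)ˣ) : Module.End F V) = E (M ^ n) := by
    intro n; rw [Units.val_pow_eq_pow_val, map_pow]
  have huq : ∀ n : ℕ, (((u ^ n)⁻¹ : (Module.End F V)ˣ) : Module.End F V) = E (N ^ n) := by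
    intro n; rw [← inv_pow, Units.val_pow_eq_pow_val, map_pow]; rfl
  have htr : ∀ X : Matrix (Fin 4) (Fin 4) F, LinearMap.trace F V (E X) = X.trace := by
    intro X
    rw [LinearMap.trace_eq_matrix_trace F b]
    congr 1
    exact LinearMap.toMatrix_toLin b b X
  have hu1 : u ^ (2 ^ k) = 1 := by
    ext1; rw [hup, hM, map_one]; rfl
  obtain ⟨w, hw⟩ := conj_elem H hH u k hu1
  have hpow : ∀ n : ℕ, (w⁻¹ * u * w) ^ n = w⁻¹ * u ^ n * w := by
    intro n
    have := conj_pow (i := n) (a := w⁻¹) (b := u)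
    simpa using this
  refine ⟨_, hw, ?_, fun n => ⟨?_, ?_⟩⟩
  · rw [hpow, hu1]; group
  · rw [hpow, ← htr, ← hup, Units.val_mul, Units.val_mul]
    have := LinearMap.trace_conj F ((u ^ n : (Module.End F V)ˣ) : Module.End F V) w⁻¹
    rwa [inv_inv] at this
  · rw [hpow, ← htr, ← huq]
    have h5 : (w⁻¹ * u ^ n * w)⁻¹ = w⁻¹ * (u ^ n)⁻¹ * w := by group
    rw [h5, Units.val_mul, Units.val_mul]
    have := LinearMap.trace_conj F (((u ^ n)⁻¹ : (Module.End F V)ˣ) : Module.End F V) w⁻¹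
    rwa [inv_inv] at this

theorem sq_cases [Finite F] (h2 : (2 : F) ≠ 0) :
    (∃ i : F, i * i = -1) ∨ (¬ (∃ i : F, i * i = -1) ∧ ∃ s : F, s * s = -2) ∨ ∃ s : F, s * s = 2 := by
  by_contra hcon
  push Not at hcon
  obtain ⟨h1, h3, h4⟩ := hcon
  have : Fintype F := Fintype.ofFinite F
  classical
  have hF : ringChar F ≠ 2 := by
    intro h
    exact h2 (by exact_mod_cast (ringChar.spec F 2).2 (by rw [h]))
  have e1 := (quadraticChar_neg_one_iff_not_isSquare (F := F) (a := -1)).2 (by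
    rintro ⟨r, hr⟩; exact h1 r hr.symm)
  have e2 := (quadraticChar_neg_one_iff_not_isSquare (F := F) (a := 2)).2 (by
    rintro ⟨r, hr⟩; exact h4 r hr.symm)
  have e3 : quadraticChar F (-2) = 1 := by
    have : (-2 : F) = (-1) * 2 := by ring
    rw [this, map_mul, e1, e2]; norm_num
  obtain ⟨r, hr⟩ := (quadraticChar_one_iff_isSquare (F := F) (a := -2) (neg_ne_zero.2 h2)).1 e3
  exact h3 h1 r hr.symm

theorem even_contra [Finite F] [Module.Finite F V] (h4 : Module.finrank F V = 4) (h2 : (2 : F) ≠ 0)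
    (hth : (3 : F) ≠ 0)
    (H A : Subgroup (Module.End F V)ˣ) (hcard : (Nat.card A : F) ≠ 0)
    (hA2 : ∀ a ∈ A, a ^ 2 ∈ scal F (Module.End F V))
    (htr : ∀ a ∈ A, a ∉ scal F (Module.End F V) → LinearMap.trace F V (a : Module.End F V) = 0)
    (hCA : ∀ m : Module.End F V,
      (∀ a ∈ A, m * (a : Module.End F V) = a * m) → ∃ μ : F, m = μ • 1)
    (hn : ∀ h ∈ H, ∀ a ∈ A, h * a * h⁻¹ ∈ A) (hH : ¬ 2 ∣ H.index) : False := by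
  have key : ∀ a b : ℕ, ((2 : F) ^ a * 3 ^ b) ≠ 0 := fun a b => mul_ne_zero (pow_ne_zero _ h2) (pow_ne_zero _ hth)
  rcases sq_cases h2 with ⟨i, hi⟩ | ⟨hno, s, hs⟩ | ⟨s, hs⟩
  · obtain ⟨j, hj, hj3⟩ : ∃ j : F, j * j = -1 ∧ 3 + j ≠ 0 := by
      by_cases h : 3 + i = 0
      · refine ⟨-i, by linear_combination hi, fun h' => ?_⟩
        exact key 1 1 (by linear_combination h + h')
      · exact ⟨i, hi, h⟩
    obtain ⟨g, hgH, -, ht⟩ := elem_of_matrix h4 H hH (Matrix.diagonal ![j, 1, 1, 1])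
      (Matrix.diagonal ![-j, 1, 1, 1]) 2 (by
        rw [Matrix.diagonal_mul_diagonal, ← Matrix.diagonal_one]; congr 1
        funext x; fin_cases x <;> simp [hj]) (by
        rw [Matrix.diagonal_pow, ← Matrix.diagonal_one]; congr 1
        funext x; fin_cases x <;> simp
        linear_combination (j * j - 1) * hj)
    obtain ⟨t1, t2⟩ := ht 1
    simp only [pow_one, Matrix.trace_diagonal, Fin.sum_univ_four] at t1 t2
    simp at t1 t2
    obtain ⟨k, hk, -, he⟩ := trace_formula h4 h2 A hcard hA2 htr hCA g (hn g hgH) (by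
      rw [t1]; intro h; apply hj3; linear_combination h)
    rw [t1, t2] at he
    interval_cases k
    · exact key 1 1 (by linear_combination he - hj)
    · exact key 2 0 (by linear_combination -he + 2 * hj)
    · exact key 3 1 (by linear_combination -he + 4 * hj)
    · exact key 6 0 (by linear_combination -he + 8 * hj)
    · exact key 4 2 (by linear_combination -he + 16 * hj)
  · have h5 : (5 : F) ≠ 0 := fun h => hno ⟨2, by linear_combination h⟩
    let M : Matrix (Fin 4) (Fin 4) F := !![0, 1, 0, 0; 1, s, 0, 0; 0, 0, 1, 0; 0, 0, 0, 1]
    let N : Matrix (Fin 4) (Fin 4) F := !![-s, 1, 0, 0; 1, 0, 0, 0; 0, 0, 1, 0; 0, 0, 0, 1]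
    have hM2 : M * M = !![1, s, 0, 0; s, -1, 0, 0; 0, 0, 1, 0; 0, 0, 0, 1] := by
      ext x y
      fin_cases x <;> fin_cases y <;> simp [M, Matrix.mul_apply, Fin.sum_univ_four, hs]
      norm_num
    have hM4 : (M * M) * (M * M) = Matrix.diagonal ![-1, -1, 1, 1] := by
      rw [hM2]
      ext x y
      fin_cases x <;> fin_cases y <;> simp [Matrix.mul_apply, Fin.sum_univ_four, hs, Matrix.diagonal_apply]
      all_goals norm_num
    have hM8 : M ^ 2 ^ 3 = 1 := by
      have : M ^ 2 ^ 3 = (M * M) * (M * M) * ((M * M) * (M * M)) := by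
        simp only [← pow_two, ← pow_mul]; rfl
      rw [this, hM4, Matrix.diagonal_mul_diagonal, ← Matrix.diagonal_one]; congr 1
      funext x; fin_cases x <;> simp
    obtain ⟨g, hgH, -, ht⟩ := elem_of_matrix h4 H hH M N 3 (by
        ext x y
        fin_cases x <;> fin_cases y <;> simp [M, N, Matrix.mul_apply, Fin.sum_univ_four]) hM8
    obtain ⟨t1, t2⟩ := ht 1
    simp only [pow_one, Matrix.trace, Fin.sum_univ_four] at t1 t2
    simp [M] at t1
    simp [N] at t2
    obtain ⟨k, hk, -, he⟩ := trace_formula h4 h2 A hcard hA2 htr hCA g (hn g hgH) (by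
      rw [t1]; intro h; apply key 1 1; linear_combination (2 - s) * h + hs)
    rw [t1, t2] at he
    interval_cases k
    · exact mul_ne_zero h2 h5 (by linear_combination he - hs)
    · exact key 2 0 (by linear_combination he - 2 * hs)
    · exact key 3 0 (by linear_combination -he + 4 * hs)
    · exact key 5 0 (by linear_combination -he + 8 * hs)
    · exact mul_ne_zero (key 4 0) h5 (by linear_combination -he + 16 * hs)
  · let M : Matrix (Fin 4) (Fin 4) F := !![0, -1, 0, 0; 1, s, 0, 0; 0, 0, 1, 0; 0, 0, 0, 1]
    let N : Matrix (Fin 4) (Fin 4) F := !![s, 1, 0, 0; -1, 0, 0, 0; 0, 0, 1, 0; 0, 0, 0, 1]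
    have hM2 : M * M = !![-1, -s, 0, 0; s, 1, 0, 0; 0, 0, 1, 0; 0, 0, 0, 1] := by
      ext x y
      fin_cases x <;> fin_cases y <;> simp [M, Matrix.mul_apply, Fin.sum_univ_four, hs]
      norm_num
    have hN2 : N * N = !![1, s, 0, 0; -s, -1, 0, 0; 0, 0, 1, 0; 0, 0, 0, 1] := by
      ext x y
      fin_cases x <;> fin_cases y <;> simp [N, Matrix.mul_apply, Fin.sum_univ_four, hs]
      norm_num
    have hM4 : (M * M) * (M * M) = Matrix.diagonal ![-1, -1, 1, 1] := by
      rw [hM2]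
      ext x y
      fin_cases x <;> fin_cases y <;> simp [Matrix.mul_apply, Fin.sum_univ_four, hs, Matrix.diagonal_apply]
      all_goals norm_num
    have hM8 : M ^ 2 ^ 3 = 1 := by
      have : M ^ 2 ^ 3 = (M * M) * (M * M) * ((M * M) * (M * M)) := by
        simp only [← pow_two, ← pow_mul]; rfl
      rw [this, hM4, Matrix.diagonal_mul_diagonal, ← Matrix.diagonal_one]; congr 1
      funext x; fin_cases x <;> simp
    obtain ⟨g, hgH, hg8, ht⟩ := elem_of_matrix h4 H hH M N 3 (by
        ext x y
        fin_cases x <;> fin_cases y <;> simp [M, N, Matrix.mul_apply, Fin.sum_univ_four]) hM8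
    obtain ⟨t1, t2⟩ := ht 1
    obtain ⟨u1, u2⟩ := ht 3
    have hM3 : M ^ 3 = (M * M) * M := by simp only [pow_succ, pow_zero, one_mul]
    have hN3 : N ^ 3 = (N * N) * N := by simp only [pow_succ, pow_zero, one_mul]
    simp only [pow_one, Matrix.trace, Fin.sum_univ_four] at t1 t2
    rw [hM3, hM2] at u1
    rw [hN3, hN2] at u2
    simp [Matrix.trace, Fin.sum_univ_four, Matrix.mul_apply, M] at u1
    simp [Matrix.trace, Fin.sum_univ_four, Matrix.mul_apply, N, ← inv_pow] at u2
    simp [M] at t1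
    simp [N] at t2
    have n1 : s + 1 + 1 ≠ 0 := by
      intro h; apply h2; linear_combination (2 - s) * h + hs
    have n3 : -s + s * -1 + s + 1 + 1 ≠ 0 := by
      intro h; apply h2; linear_combination (2 + s) * h + hs
    obtain ⟨k, hk, hr, he⟩ := trace_formula h4 h2 A hcard hA2 htr hCA g (hn g hgH) (by
      rw [t1]; exact n1)
    obtain ⟨k', hk', hr', he'⟩ := trace_formula h4 h2 A hcard hA2 htr hCA (g ^ 3)
      (hn _ (H.pow_mem hgH 3)) (by
        rw [Units.val_pow_eq_pow_val, u1]; intro h; apply n3; linear_combination h)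
    have hCC : Subgroup.centralizer {g ^ 3} = Subgroup.centralizer {g} := by
      ext x
      rw [Subgroup.mem_centralizer_singleton_iff, Subgroup.mem_centralizer_singleton_iff]
      constructor
      · intro h
        have h9 : g ^ 9 = g := by rw [show 9 = 2 ^ 3 + 1 by norm_num, pow_succ, hg8, one_mul]
        have : Commute x (g ^ 3) := h
        have := this.pow_right 3
        rw [← pow_mul, show 3 * 3 = 9 by norm_num, h9] at this
        exact this
      · intro h
        have : Commute x g := h
        exact this.pow_right 3
    rw [hCC, hr] at hr'
    have hkk : k' = k := (Nat.pow_right_injective le_rfl hr').symm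
    subst hkk
    rw [t1, t2] at he
    rw [← inv_pow, Units.val_pow_eq_pow_val, Units.val_pow_eq_pow_val, u1, u2] at he'
    have e5 : (2 : F) ^ k' * (2 ^ 3 * s) = 0 := by linear_combination he' - he
    have hs0 : s ≠ 0 := by rintro rfl; apply h2; linear_combination -hs
    exact mul_ne_zero (pow_ne_zero _ h2) (mul_ne_zero (pow_ne_zero _ h2) hs0) e5

end PartSix

section PartSeven

variable {F V : Type*} [Field F] [AddCommGroup V] [Module F V]

theorem exists_refls [Finite F] [Module.Finite F V] (h3 : 3 ≤ Module.finrank F V)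
    (H : Subgroup (Module.End F V)ˣ) (hH : ¬ 2 ∣ H.index) :
    ∃ (t : Fin 3 → (Module.End F V)ˣ) (φ : Fin 3 → V →ₗ[F] F) (v : Fin 3 → V),
      (∀ i, ReflData (t i) (φ i) (v i)) ∧ (∀ i j, i ≠ j → φ i (v j) = 0) ∧ ∀ i, t i ∈ H := by
  have hfinV : Finite V := Module.finite_of_finite F
  have hfinR : Finite (Module.End F V) := Module.finite_of_finite F
  let b := Module.finBasis F V
  let ι : Fin 3 → Fin (Module.finrank F V) := Fin.castLE h3
  have hι : Function.Injective ι := Fin.castLE_injective h3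
  let φ : Fin 3 → V →ₗ[F] F := fun i => b.coord (ι i)
  let v : Fin 3 → V := fun i => b (ι i)
  have hone : ∀ i, φ i (v i) = 1 := by intro i; simp [φ, v]
  have horth : ∀ i j, i ≠ j → φ i (v j) = 0 := by
    intro i j hij
    simp only [φ, v, Module.Basis.coord_apply, Module.Basis.repr_self]
    rw [Finsupp.single_apply, if_neg]
    intro h; exact hij (hι h).symm
  let s : Fin 3 → Module.End F V := fun i => 1 - (2 : F) • (φ i).smulRight (v i)
  have hss : ∀ i, s i * s i = 1 := by
    intro i
    ext w
    simp only [s, Module.End.mul_apply, LinearMap.sub_apply, LinearMap.smul_apply, LinearMap.smulRight_apply, Module.End.one_apply, map_sub, map_smul, hone]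
    simp only [smul_eq_mul, mul_one, smul_sub, sub_smul, smul_smul]
    module
  let t : Fin 3 → (Module.End F V)ˣ := fun i => ⟨s i, s i, hss i, hss i⟩
  have htt : ∀ i, t i * t i = 1 := fun i => Units.ext (hss i)
  have hcomm : ∀ i j, t i * t j = t j * t i := by
    intro i j
    by_cases hij : i = j
    · rw [hij]
    ext w
    simp only [t, s, Units.val_mul, Module.End.mul_apply, LinearMap.sub_apply, LinearMap.smul_apply, LinearMap.smulRight_apply, Module.End.one_apply, map_sub, map_smul, horth i j hij, horth j i (Ne.symm hij)]
    simp only [smul_eq_mul, mul_zero, sub_zero, smul_sub, smul_zero, smul_smul]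
    module
  let Q := Subgroup.closure (Set.range t)
  have hQc : ∀ x ∈ Q, ∀ y ∈ Q, x * y = y * x := by
    have := Subgroup.isMulCommutative_closure (k := Set.range t) (by
      rintro _ ⟨i, rfl⟩ _ ⟨j, rfl⟩; exact hcomm i j)
    intro x hx y hy
    exact congrArg Subtype.val (this.is_comm.comm ⟨x, hx⟩ ⟨y, hy⟩)
  have hQ2 : ∀ x ∈ Q, x * x = 1 := by
    intro x hx
    induction hx using Subgroup.closure_induction with
    | mem x hx => obtain ⟨i, rfl⟩ := hx; exact htt i
    | one => simp
    | mul x y hx hy ihx ihy =>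
      have := hQc y hy x hx
      calc x * y * (x * y) = x * (y * x) * y := by group
        _ = (x * x) * (y * y) := by rw [this]; group
        _ = 1 := by rw [ihx, ihy, one_mul]
    | inv x hx ih => rw [← _root_.mul_inv_rev, ih, inv_one]
  obtain ⟨g, hg⟩ := hall_conj_two_group H Q hH (by
    rintro ⟨x, hx⟩
    refine ⟨1, ?_⟩
    ext1
    rw [pow_one, pow_two, Subgroup.coe_mul, Subgroup.coe_one]
    exact hQ2 x hx)
  refine ⟨fun i => g⁻¹ * t i * g, fun i => φ i ∘ₗ (g : Module.End F V),
    fun i => ((g⁻¹ : (Module.End F V)ˣ) : Module.End F V) (v i), ?_, ?_, ?_⟩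
  · intro i
    constructor
    · simp only [LinearMap.comp_apply, inv_app, hone]
    · ext w
      simp only [t, s, Units.val_mul, Module.End.mul_apply, LinearMap.sub_apply, LinearMap.smul_apply, LinearMap.smulRight_apply, Module.End.one_apply, map_sub, map_smul, LinearMap.comp_apply, app_inv]
  · intro i j hij
    simp only [LinearMap.comp_apply, inv_app]
    exact horth i j hij
  · intro i
    exact hg _ (Subgroup.subset_closure ⟨i, rfl⟩)

theorem has_idem [Finite F] [Module.Finite F V] (p : ℕ) [Fact p.Prime] [CharP F p]
    (h3 : 3 ≤ Module.finrank F V) (h2 : (2 : F) ≠ 0) (hth : (3 : F) ≠ 0)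
    (H : Subgroup (Module.End F V)ˣ) (hs : Group.IsSolvable H) (hp : ¬ p ∣ Nat.card H)
    (hH : ¬ 2 ∣ H.index) : HasIdem H := by
  have hfinV : Finite V := Module.finite_of_finite F
  have hfinR : Finite (Module.End F V) := Module.finite_of_finite F
  by_contra hno
  obtain ⟨t, φ, v, ht, horth, htH⟩ := exists_refls h3 H hH
  set Z := scal F (Module.End F V) with hZ
  have hHZ : ¬ H ≤ Z := by
    intro h
    obtain ⟨c, hc⟩ := h (htH 0)
    have e1 := congrArg (fun m : Module.End F V => m (v 0)) hc
    have e2 := congrArg (fun m : Module.End F V => m (v 1)) hc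
    replace e1 : ((t 0 : (Module.End F V)ˣ) : Module.End F V) (v 0) = (c • (1 : Module.End F V)) (v 0) := e1
    replace e2 : ((t 0 : (Module.End F V)ˣ) : Module.End F V) (v 1) = (c • (1 : Module.End F V)) (v 1) := e2
    rw [(ht 0).neg, LinearMap.smul_apply, Module.End.one_apply] at e1
    rw [(ht 0).fix (horth 0 1 (by decide)), LinearMap.smul_apply, Module.End.one_apply] at e2
    have f1 : (-1 : F) = c := by
      apply smul_left_injective F (ht 0).ne_zero
      simpa using e1
    have f2 : (1 : F) = c := by
      apply smul_left_injective F (ht 1).ne_zero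
      simpa using e2
    apply h2; linear_combination f2 - f1
  obtain ⟨A0, hA0H, hA0Z, hA0c, hA0n⟩ := last_term H Z hs hHZ
  obtain ⟨r, hr, A, hAA0, hAZ, hAr, hAn⟩ := prime_layer A0 Z (scal_le_center F _) hA0Z hA0c
  have hAH : A ≤ H := hAA0.trans hA0H
  have hnn : ∀ h ∈ H, ∀ a ∈ A, h * a * h⁻¹ ∈ A := by
    intro h hh
    apply hAn
    apply hA0n
    intro k hk
    exact H.mul_mem (H.mul_mem hh hk) (H.inv_mem hh)
  have hc : ∀ a ∈ A, ∀ b ∈ A, a * b * a⁻¹ * b⁻¹ ∈ Z := fun a ha b hb => hA0c a (hAA0 ha) b (hAA0 hb)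
  have htw : ∀ a ∈ A, a ∉ Z →
      ∃ c ∈ A, ∃ l : F, l ≠ 1 ∧ (c : Module.End F V) * a = l • ((a : Module.End F V) * c) :=
    fun a ha haZ => exists_twist p h3 h2 H A hp hAH hnn hc hno (ht 0) (htH 0) a ha haZ
  rcases hr.eq_two_or_odd' with h | hodd
  · subst h
    obtain ⟨h4, hCA⟩ := even_struct h3 h2 A hAZ hc hAr htw (ht 0) (hnn _ (htH 0))
    refine even_contra h4 h2 hth H A ?_ hAr ?_ hCA hnn hH
    · intro h0
      rw [CharP.cast_eq_zero_iff F p] at h0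
      exact hp (h0.trans (Subgroup.card_dvd_of_le hAH))
    · intro a ha haZ
      obtain ⟨c, -, l, hl, hca⟩ := htw a ha haZ
      exact trace_zero_of_twist a c l hl hca
  · exact hAZ (odd_case h3 h2 r hodd A hc hAr htw t φ v ht horth (fun i => hnn _ (htH i)))

end PartSeven

section PartEight

variable {F V : Type*} [Field F] [AddCommGroup V] [Module F V]

structure BlockData (e : Module.End F V) (a b : V) (α β : V →ₗ[F] F) : Prop where
  eq : e = α.smulRight a + β.smulRight b
  aa : α a = 1
  ba : β a = 0
  ab : α b = 0
  bb : β b = 1 ∨ (b = 0 ∧ β = 0)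

theorem exists_block [Module.Finite F V] (e : Module.End F V) (he : e * e = e) (h0 : e ≠ 0)
    (hr : Module.finrank F (LinearMap.range e) ≤ 2) : ∃ a b α β, BlockData e a b α β := by
  have hee : ∀ w : LinearMap.range e, e w = w := by
    rintro ⟨w, u, rfl⟩
    exact congrArg (fun m : Module.End F V => m u) he
  have hee' : ∀ w : LinearMap.range e, e.rangeRestrict w = w := by
    intro w; ext; exact hee w
  have hpos : Module.finrank F (LinearMap.range e) ≠ 0 := by
    intro h
    rw [Submodule.finrank_eq_zero, LinearMap.range_eq_bot] at h
    exact h0 h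
  have hcase : Module.finrank F (LinearMap.range e) = 1 ∨ Module.finrank F (LinearMap.range e) = 2 := by omega
  rcases hcase with h | h
  · let B := Module.finBasisOfFinrankEq F _ h
    refine ⟨B 0, 0, B.coord 0 ∘ₗ e.rangeRestrict, 0, ?_, ?_, ?_, ?_, Or.inr ⟨rfl, rfl⟩⟩
    · ext w
      have := congrArg Subtype.val (B.sum_repr (e.rangeRestrict w))
      simp only [Fin.sum_univ_one, Submodule.coe_smul] at this
      simpa using this.symm
    · simp [hee']
    · simp
    · simp
  · let B := Module.finBasisOfFinrankEq F _ h
    refine ⟨B 0, B 1, B.coord 0 ∘ₗ e.rangeRestrict, B.coord 1 ∘ₗ e.rangeRestrict, ?_, ?_, ?_, ?_, Or.inl ?_⟩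
    · ext w
      have := congrArg Subtype.val (B.sum_repr (e.rangeRestrict w))
      simp only [Fin.sum_univ_two, Submodule.coe_smul, Submodule.coe_add] at this
      simpa using this.symm
    · simp [hee']
    · simp [hee']
    · simp [hee']
    · simp [hee']

theorem comm_smulRight {g : Module.End F V} {φ : V →ₗ[F] F} {v : V}
    (h : g * (φ.smulRight v : Module.End F V) = (φ.smulRight v : Module.End F V) * g) (w : V) :
    φ (g w) • v = φ w • g v := by
  have := congrArg (fun m : Module.End F V => m w) h
  simpa using this.symm

theorem pair_scalar (g ek el : Module.End F V) {a b a' b' : V} {α β α' β' : V →ₗ[F] F}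
    (hk : BlockData ek a b α β) (hl : BlockData el a' b' α' β') (hgl : g * el = el * g)
    (h1 : g * (α'.smulRight a + β'.smulRight b : Module.End F V) = (α'.smulRight a + β'.smulRight b : Module.End F V) * g)
    (h2 : g * (β'.smulRight a : Module.End F V) = (β'.smulRight a : Module.End F V) * g)
    (h3 : g * (α'.smulRight b : Module.End F V) = (α'.smulRight b : Module.End F V) * g) :
    ∃ l : F, g * ek = l • ek ∧ g * el = l • el := by
  have ha0 : a ≠ 0 := by
    rintro rfl; have := hk.aa; simp at this
  have h1' : ∀ w, α' (g w) • a + β' (g w) • b = α' w • g a + β' w • g b := by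
    intro w
    have := congrArg (fun m : Module.End F V => m w) h1
    simpa using this.symm
  have h2' := comm_smulRight h2
  have h3' := comm_smulRight h3
  suffices H : ∃ l : F, g a = l • a ∧ g b = l • b ∧ (∀ w, α' (g w) = l * α' w) ∧ ∀ w, β' (g w) = l * β' w by
    obtain ⟨l, e1, e2, e3, e4⟩ := H
    refine ⟨l, ?_, ?_⟩
    · ext w
      simp only [hk.eq, Module.End.mul_apply, LinearMap.add_apply, LinearMap.smulRight_apply, map_add, map_smul, e1, e2, LinearMap.smul_apply, smul_add, smul_smul, mul_comm]
    · rw [hgl]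
      ext w
      simp only [hl.eq, Module.End.mul_apply, LinearMap.add_apply, LinearMap.smulRight_apply, e3, e4, LinearMap.smul_apply, smul_add, smul_smul]
  rcases hl.bb with hbb | ⟨rfl, rfl⟩
  · have e1 : g a = β' (g b') • a := by rw [h2' b', hbb, one_smul]
    have e4 : ∀ w, β' (g w) = β' (g b') * β' w := by
      intro w
      have := h2' w
      rw [e1, smul_smul] at this
      rw [smul_left_injective F ha0 this]; ring
    set l := β' (g b')
    rcases hk.bb with kbb | ⟨rfl, rfl⟩
    · have e2 : g b = α' (g a') • b := by rw [h3' a', hl.aa, one_smul]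
      have hb0 : b ≠ 0 := by
        rintro rfl; simp at kbb
      have e3 : ∀ w, α' (g w) = α' (g a') * α' w := by
        intro w
        have := h3' w
        rw [e2, smul_smul] at this
        rw [smul_left_injective F hb0 this]; ring
      have h5 := congrArg α (h1' a')
      rw [e1, e2, e4 a', hl.aa, hl.ba] at h5
      simp [hk.aa, hk.ab] at h5
      rw [h5] at e2 e3
      exact ⟨l, e1, e2, e3, e4⟩
    · refine ⟨l, e1, by simp, fun w => ?_, e4⟩
      have := h1' w
      rw [e1, smul_zero, map_zero, smul_zero, add_zero, add_zero, smul_smul] at this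
      rw [smul_left_injective F ha0 this]; ring
  · simp only [LinearMap.zero_apply, zero_smul, add_zero] at h1'
    have e1 : g a = α' (g a') • a := by rw [h1' a', hl.aa, one_smul]
    refine ⟨α' (g a'), e1, ?_, ?_, by simp⟩
    · rw [h3' a', hl.aa, one_smul]
    · intro w
      have := h1' w
      rw [e1, smul_smul] at this
      rw [smul_left_injective F ha0 this]; ring

theorem det_unipotent [Module.Finite F V] (p : ℕ) [Fact p.Prime] [CharP F p]
    (N : Module.End F V) (m : ℕ) (hN : N ^ m = 0) : LinearMap.det (1 + N) = 1 := by
  by_cases hV : Nontrivial V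
  · have : CharP (Module.End F V) p := charP_of_injective_algebraMap (FaithfulSMul.algebraMap_injective F (Module.End F V)) p
    have h1 : (1 + N) ^ p ^ m = 1 := by
      rw [add_pow_char_pow_of_commute p m (Commute.one_left N), one_pow,
        pow_eq_zero_of_le (Nat.lt_pow_self (Fact.out : p.Prime).one_lt).le hN, add_zero]
    have h2 := congrArg LinearMap.det h1
    rw [map_pow, map_one] at h2
    exact iterateFrobenius_inj F p m (by simpa [iterateFrobenius_def] using h2)
  · rw [not_nontrivial_iff_subsingleton] at hV
    rw [Subsingleton.elim (1 + N) 1, map_one]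

end PartEight

section PartNine

theorem perm_id_of_mono {m : ℕ} (σ τ : Fin m → Fin m) (hτ : Function.Injective τ)
    (h : ∀ k l, k ≤ l ↔ τ k ≤ σ l) : ∀ l, σ l = l := by
  intro l
  have hb : Function.Bijective τ := Finite.injective_iff_bijective.1 hτ
  have h1 : (Finset.Iic (σ l)) = (Finset.Iic l).image τ := by
    ext k
    simp only [Finset.mem_Iic, Finset.mem_image]
    constructor
    · intro hk
      obtain ⟨j, rfl⟩ := hb.2 k
      exact ⟨j, (h _ _).2 hk, rfl⟩
    · rintro ⟨j, hj, rfl⟩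
      exact (h _ _).1 hj
  have h2 := congrArg Finset.card h1
  rw [Finset.card_image_of_injective _ hτ, Fin.card_Iic, Fin.card_Iic] at h2
  ext; omega

variable {R : Type*} [Ring R] {m : ℕ}

structure OrthSys (e : Fin m → R) : Prop where
  idem : ∀ i, e i * e i = e i
  ne : ∀ i, e i ≠ 0
  orth : ∀ i j, i ≠ j → e i * e j = 0
  sum : ∑ i, e i = 1

namespace OrthSys
variable {e : Fin m → R}

theorem ext_blocks (he : OrthSys e) {x y : R} (h : ∀ k l, e k * x * e l = e k * y * e l) : x = y := by
  have : ∀ z : R, z = ∑ k, ∑ l, e k * z * e l := by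
    intro z
    simp only [← Finset.mul_sum, ← Finset.sum_mul, he.sum, one_mul, mul_one]
  rw [this x, this y]
  exact Finset.sum_congr rfl fun k _ => Finset.sum_congr rfl fun l _ => h k l

theorem inj (he : OrthSys e) {i j : Fin m} (h : e i = e j) : i = j := by
  by_contra hij
  have := he.orth i j hij
  rw [← h, he.idem] at this
  exact he.ne i this

def upper (n : Fin m → Fin m → R) : R := ∑ i, ∑ j, if i < j then n i j else 0

theorem block_upper (he : OrthSys e) (n : Fin m → Fin m → R)
    (hn : ∀ i j, e i * n i j * e j = n i j) (k l : Fin m) :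
    e k * upper n * e l = if k < l then n k l else 0 := by
  rw [upper, Finset.mul_sum, Finset.sum_mul, Finset.sum_eq_single k]
  · rw [Finset.mul_sum, Finset.sum_mul, Finset.sum_eq_single l]
    · split_ifs
      · exact hn k l
      · simp
    · intro j _ hj
      split_ifs
      · rw [← hn k j]
        have := he.orth j l hj
        calc e k * (e k * n k j * e j) * e l = e k * (e k * n k j) * (e j * e l) := by noncomm_ring
          _ = 0 := by rw [this, mul_zero]
      · simp
    · simp
  · intro i _ hi
    rw [Finset.mul_sum, Finset.sum_mul]
    apply Finset.sum_eq_zero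
    intro j _
    split_ifs
    · rw [← hn i j]
      have := he.orth k i (Ne.symm hi)
      calc e k * (e i * n i j * e j) * e l = (e k * e i) * (n i j * e j) * e l := by noncomm_ring
          _ = 0 := by rw [this, zero_mul, zero_mul]
    · simp
  · simp

theorem upper_nilp (he : OrthSys e) (n : Fin m → Fin m → R)
    (hn : ∀ i j, e i * n i j * e j = n i j) : (upper n) ^ m = 0 := by
  have key : ∀ (t : ℕ) (k l : Fin m), (l : ℕ) < k + t → e k * (upper n) ^ t * e l = 0 := by
    intro t
    induction t with
    | zero =>
      intro k l h
      rw [pow_zero, mul_one]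
      apply he.orth
      rintro rfl; omega
    | succ t ih =>
      intro k l h
      have h1 : e k * (upper n) ^ (t + 1) * e l = ∑ j, (e k * upper n * e j) * (e j * (upper n) ^ t * e l) := by
        have : ∀ j, (e k * upper n * e j) * (e j * (upper n) ^ t * e l) = e k * upper n * e j * ((upper n) ^ t * e l) := by
          intro j
          calc _ = e k * upper n * (e j * e j) * ((upper n) ^ t * e l) := by noncomm_ring
            _ = _ := by rw [he.idem]
        rw [Finset.sum_congr rfl fun j _ => this j, ← Finset.sum_mul, ← Finset.mul_sum, he.sum, mul_one, pow_succ']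
        simp only [mul_assoc]
      rw [h1]
      apply Finset.sum_eq_zero
      intro j _
      rw [he.block_upper n hn]
      split_ifs with hkj
      · rw [ih j l (by have : (k : ℕ) < j := hkj; omega), mul_zero]
      · rw [zero_mul]
  apply he.ext_blocks
  intro k l
  rw [key m k l (by omega), mul_zero, zero_mul]

theorem block_one_add (he : OrthSys e) (n : Fin m → Fin m → R)
    (hn : ∀ i j, e i * n i j * e j = n i j) (k l : Fin m) :
    e k * (1 + upper n) * e l = if k = l then e k else if k < l then n k l else 0 := by
  rw [mul_add, add_mul, mul_one, he.block_upper n hn]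
  by_cases hkl : k = l
  · subst hkl
    rw [if_pos rfl, if_neg (lt_irrefl _), he.idem, add_zero]
  · rw [if_neg hkl, he.orth k l hkl, zero_add]

theorem perm_inj (he : OrthSys e) (g : Rˣ) (σ : Fin m → Fin m)
    (h : ∀ i, (g : R) * e i = e (σ i) * g) : Function.Injective σ := by
  intro i j hij
  apply he.inj
  have h1 := h i
  rw [hij, ← h j] at h1
  exact (Units.mul_right_inj g).1 h1

theorem rigid (he : OrthSys e) (n : Fin m → Fin m → R)
    (hn : ∀ i j, e i * n i j * e j = n i j) (hn0 : ∀ i j, n i j ≠ 0)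
    (g g' : Rˣ) (σ τ : Fin m → Fin m)
    (hσ : ∀ i, (g : R) * e i = e (σ i) * g) (hτ : ∀ i, (g' : R) * e i = e (τ i) * g')
    (hx : (g' : R) * (1 + upper n) = (1 + upper n) * g) :
    (∀ l, (g : R) * e l = e l * g) ∧ ∀ k l, k < l → (g : R) * n k l = n k l * g := by
  have h1 : ∀ k l, (g' : R) * (e k * (1 + upper n) * e l) = (e (τ k) * (1 + upper n) * e (σ l)) * g := by
    intro k l
    calc (g' : R) * (e k * (1 + upper n) * e l) = (g' * e k) * ((1 + upper n) * e l) := by noncomm_ring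
      _ = e (τ k) * (g' * (1 + upper n)) * e l := by rw [hτ]; noncomm_ring
      _ = e (τ k) * (1 + upper n) * (g * e l) := by rw [hx]; noncomm_ring
      _ = _ := by rw [hσ]; noncomm_ring
  have hne : ∀ k l, e k * (1 + upper n) * e l ≠ 0 ↔ k ≤ l := by
    intro k l
    rw [he.block_one_add n hn]
    split_ifs with h2 h3
    · simp [h2, he.ne]
    · simp [hn0, h3.le]
    · simp; omega
  have h2 : ∀ k l, k ≤ l ↔ τ k ≤ σ l := by
    intro k l
    rw [← hne, ← hne]
    apply not_congr
    rw [← Units.mul_right_eq_zero g', h1, Units.mul_left_eq_zero g]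
  have hid := perm_id_of_mono σ τ (he.perm_inj g' τ hτ) h2
  have hid' : ∀ k, τ k = k := by
    have hb : Function.Bijective τ := Finite.injective_iff_bijective.1 (he.perm_inj g' τ hτ)
    intro k
    have a1 := (h2 k k).1 le_rfl
    rw [hid] at a1
    obtain ⟨j, hj⟩ := hb.2 k
    have a2 := (h2 j k).2 (by rw [hj, hid])
    have a3 : ∀ i, i ≤ k → τ i ≤ k := fun i hi => by
      have := (h2 i k).1 hi; rwa [hid] at this
    have a4 := (h2 k (τ k)).2 (by rw [hid])
    exact le_antisymm a1 a4
  simp only [hid, hid'] at h1 hσ hτ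
  have hgg : (g' : R) = g := by
    have h3 : ∀ l, (g' : R) * e l = e l * g := by
      intro l
      have := h1 l l
      rwa [he.block_one_add n hn, if_pos rfl] at this
    calc (g' : R) = g' * ∑ l, e l := by rw [he.sum, mul_one]
      _ = (∑ l, e l) * g := by rw [Finset.mul_sum, Finset.sum_mul]; exact Finset.sum_congr rfl fun l _ => h3 l
      _ = g := by rw [he.sum, one_mul]
  refine ⟨hσ, fun k l hkl => ?_⟩
  have := h1 k l
  rwa [he.block_one_add n hn, if_neg hkl.ne, if_pos hkl, hgg] at this

end OrthSys

variable {F V : Type*} [Field F] [AddCommGroup V] [Module F V]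

theorem base_lemma [Finite F] [Module.Finite F V] (p : ℕ) [Fact p.Prime] [CharP F p]
    (hm : 2 ≤ m) (e : Fin m → Module.End F V) (he : OrthSys e)
    (hr : ∀ i, Module.finrank F (LinearMap.range (e i)) ≤ 2) :
    ∃ x : Fin 3 → (Module.End F V)ˣ, (∀ s, LinearMap.det (x s : Module.End F V) = 1) ∧
      ∀ g : (Module.End F V)ˣ, (∀ i, ∃ j, (g : Module.End F V) * e i = e j * g) →
        (∀ s i, ∃ j, ((x s * g * (x s)⁻¹ : (Module.End F V)ˣ) : Module.End F V) * e i
          = e j * ((x s * g * (x s)⁻¹ : (Module.End F V)ˣ) : Module.End F V)) →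
        g ∈ scal F (Module.End F V) := by
  have hdata := fun i => exists_block (e i) (he.idem i) (he.ne i) (hr i)
  choose a b α β hB using hdata
  let c : Fin 3 → F := ![0, 1, 0]
  let d : Fin 3 → F := ![0, 0, 1]
  let n : Fin 3 → Fin m → Fin m → Module.End F V := fun s i j =>
    (α j).smulRight (a i) + (β j).smulRight (b i) + c s • (β j).smulRight (a i) + d s • (α j).smulRight (b i)
  have ea : ∀ i, e i (a i) = a i := by
    intro i; rw [(hB i).eq]; simp [(hB i).aa, (hB i).ba]
  have eb : ∀ i, e i (b i) = b i := by
    intro i; rw [(hB i).eq]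
    rcases (hB i).bb with h | ⟨h, h'⟩
    · simp [(hB i).ab, h]
    · simp [h]
  have ealpha : ∀ i w, α i (e i w) = α i w := by
    intro i w; rw [(hB i).eq]
    simp [(hB i).aa, (hB i).ab]
  have ebeta : ∀ i w, β i (e i w) = β i w := by
    intro i w; rw [(hB i).eq]
    rcases (hB i).bb with h | ⟨h, h'⟩
    · simp [(hB i).ba, h]
    · simp [h']
  have hn : ∀ s i j, e i * n s i j * e j = n s i j := by
    intro s i j
    ext w
    simp [n, ea, eb, ealpha, ebeta]
  have hn0 : ∀ s i j, n s i j ≠ 0 := by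
    intro s i j h0
    have h1 := congrArg (fun z : Module.End F V => α i (z (a j))) h0
    simp [n, (hB j).aa, (hB j).ba, (hB i).aa, (hB i).ab] at h1
  have hnil := fun s => he.upper_nilp (n s) (hn s)
  have hu : ∀ s, IsUnit (1 + OrthSys.upper (n s)) := fun s => IsNilpotent.isUnit_one_add ⟨m, hnil s⟩
  choose x hx using hu
  refine ⟨x, fun s => by rw [hx]; exact det_unipotent p _ m (hnil s), ?_⟩
  intro g hg hg'
  choose σ hσ using hg
  choose τ hτ using hg'
  have hrig := fun s => he.rigid (n s) (hn s) (hn0 s) g _ σ (τ s) hσ (hτ s) (by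
    rw [← hx, ← Units.val_mul, ← Units.val_mul]; congr 1; group)
  have hcomm := (hrig 0).1
  have hpair : ∀ k l, k < l → ∃ z : F, (g : Module.End F V) * e k = z • e k ∧ (g : Module.End F V) * e l = z • e l := by
    intro k l hkl
    have q0 := (hrig 0).2 k l hkl
    have q1 := (hrig 1).2 k l hkl
    have q2 := (hrig 2).2 k l hkl
    simp only [n] at q0 q1 q2
    simp [c, d] at q0 q1 q2
    refine pair_scalar g (e k) (e l) (hB k) (hB l) (hcomm l) q0 ?_ ?_
    · rw [mul_add, add_mul, q0] at q1
      exact add_left_cancel q1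
    · rw [mul_add, add_mul, q0] at q2
      exact add_left_cancel q2
  let i0 : Fin m := ⟨0, by omega⟩
  let i1 : Fin m := ⟨1, by omega⟩
  obtain ⟨z, hz0, hz1⟩ := hpair i0 i1 (by simp [i0, i1, Fin.lt_def])
  have hall : ∀ l, (g : Module.End F V) * e l = z • e l := by
    intro l
    by_cases hl : l = i0
    · rw [hl]; exact hz0
    · obtain ⟨y, hy0, hy1⟩ := hpair i0 l (by
        rw [Fin.lt_def]; have : (l : ℕ) ≠ 0 := fun h => hl (Fin.ext h)
        simp only [i0]; omega)
      rw [hz0] at hy0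
      rw [hy1, smul_left_injective F (he.ne i0) hy0]
  refine ⟨z, ?_⟩
  calc (g : Module.End F V) = g * ∑ l, e l := by rw [he.sum, mul_one]
    _ = ∑ l, z • e l := by rw [Finset.mul_sum]; exact Finset.sum_congr rfl fun l _ => hall l
    _ = z • 1 := by rw [← Finset.smul_sum, he.sum]

end PartNine

section PartTen

structure IdemSys {R : Type*} [Ring R] (H : Subgroup Rˣ) (D : Set R) : Prop where
  idem : ∀ d ∈ D, d * d = d
  comm : ∀ d ∈ D, ∀ d' ∈ D, d * d' = d' * d
  conj : ∀ h ∈ H, ∀ d ∈ D, (h : R) * d * (h⁻¹ : Rˣ) ∈ D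

theorem exists_max_sys {R : Type*} [Ring R] [Finite R] (H : Subgroup Rˣ) :
    ∃ D : Set R, Maximal (IdemSys H) D := by
  have hfin : ({D : Set R | IdemSys H D}).Finite := Set.toFinite _
  exact hfin.exists_maximal ⟨∅, by constructor <;> simp⟩

section ring
variable {R : Type*} [Ring R] {H : Subgroup Rˣ} {D : Set R}

theorem conj_mul_conj (h : Rˣ) (x y : R) : ((h : R) * x * (h⁻¹ : Rˣ)) * (h * y * (h⁻¹ : Rˣ)) = h * (x * y) * (h⁻¹ : Rˣ) := by
  calc ((h : R) * x * (h⁻¹ : Rˣ)) * (h * y * (h⁻¹ : Rˣ)) = h * x * (((h⁻¹ : Rˣ) : R) * h) * y * (h⁻¹ : Rˣ) := by noncomm_ring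
    _ = _ := by rw [Units.inv_mul]; noncomm_ring

theorem conj_conj (h k : Rˣ) (x : R) : (h : R) * (k * x * (k⁻¹ : Rˣ)) * (h⁻¹ : Rˣ) = ((h * k : Rˣ) : R) * x * ((h * k)⁻¹ : Rˣ) := by
  rw [_root_.mul_inv_rev, Units.val_mul, Units.val_mul]; noncomm_ring

theorem conj_inj (h : Rˣ) {x y : R} (hh : (h : R) * x * (h⁻¹ : Rˣ) = h * y * (h⁻¹ : Rˣ)) : x = y := by
  rw [Units.mul_left_inj, Units.mul_right_inj] at hh; exact hh

theorem max_mem (hD : Maximal (IdemSys H) D) (f : R) (hf : f * f = f)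
    (hc : ∀ d ∈ D, f * d = d * f)
    (hh : ∀ h ∈ H, f * ((h : R) * f * (h⁻¹ : Rˣ)) = ((h : R) * f * (h⁻¹ : Rˣ)) * f) : f ∈ D := by
  have hval : IdemSys H (D ∪ {x | ∃ h ∈ H, x = (h : R) * f * (h⁻¹ : Rˣ)}) := by
    have hcc : ∀ h ∈ H, ∀ d ∈ D, ((h : R) * f * (h⁻¹ : Rˣ)) * d = d * ((h : R) * f * (h⁻¹ : Rˣ)) := by
      intro h hhH d hd
      have h1 := hc _ (hD.1.conj h⁻¹ (H.inv_mem hhH) d hd)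
      apply conj_inj h⁻¹
      rw [← conj_mul_conj h⁻¹ _ d, ← conj_mul_conj h⁻¹ d, conj_conj]
      simpa using h1
    refine ⟨?_, ?_, ?_⟩
    · rintro d (hd | ⟨h, hhH, rfl⟩)
      · exact hD.1.idem d hd
      · rw [conj_mul_conj, hf]
    · rintro d (hd | ⟨h, hhH, rfl⟩) d' (hd' | ⟨k, hk, rfl⟩)
      · exact hD.1.comm d hd d' hd'
      · exact (hcc k hk d hd).symm
      · exact hcc h hhH d' hd'
      · apply conj_inj h⁻¹
        rw [← conj_mul_conj h⁻¹ ((h : R) * f * (h⁻¹ : Rˣ)), ← conj_mul_conj h⁻¹ ((k : R) * f * (k⁻¹ : Rˣ)), conj_conj, conj_conj]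
        have := hh (h⁻¹ * k) (H.mul_mem (H.inv_mem hhH) hk)
        simpa using this
    · rintro h hhH d (hd | ⟨k, hk, rfl⟩)
      · exact Or.inl (hD.1.conj h hhH d hd)
      · exact Or.inr ⟨h * k, H.mul_mem hhH hk, conj_conj h k f⟩
  have := hD.2 hval Set.subset_union_left
  exact this (Or.inr ⟨1, H.one_mem, by simp⟩)

theorem sys_mul (hD : Maximal (IdemSys H) D) {d e : R} (hd : d ∈ D) (he : e ∈ D) : d * e ∈ D := by
  have cm := hD.1.comm
  have key : ∀ x ∈ D, (d * e) * x = x * (d * e) := by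
    intro x hx
    rw [mul_assoc, cm e he x hx, ← mul_assoc, cm d hd x hx, mul_assoc]
  apply max_mem hD
  · rw [← mul_assoc, key d hd, ← mul_assoc, hD.1.idem d hd, mul_assoc, hD.1.idem e he]
  · exact key
  · intro h hh
    rw [← conj_mul_conj]
    generalize hx : (h : R) * d * (h⁻¹ : Rˣ) = x
    generalize hy : (h : R) * e * (h⁻¹ : Rˣ) = y
    have hxD : x ∈ D := hx ▸ hD.1.conj h hh d hd
    have hyD : y ∈ D := hy ▸ hD.1.conj h hh e he
    rw [← mul_assoc, key _ hxD, mul_assoc, key _ hyD, mul_assoc]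

/-- atoms of the system -/
def IsAt (D : Set R) (e : R) : Prop := e ∈ D ∧ e ≠ 0 ∧ ∀ d ∈ D, d * e = 0 ∨ d * e = e

theorem at_conj (hD : Maximal (IdemSys H) D) {e : R} (he : IsAt D e) {h : Rˣ} (hh : h ∈ H) :
    IsAt D ((h : R) * e * (h⁻¹ : Rˣ)) := by
  refine ⟨hD.1.conj h hh e he.1, ?_, ?_⟩
  · intro h0
    apply he.2.1
    apply conj_inj h
    simpa using h0
  · intro d hd
    have := he.2.2 _ (hD.1.conj h⁻¹ (H.inv_mem hh) d hd)
    have h3 : d * ((h : R) * e * (h⁻¹ : Rˣ)) = (h : R) * (((h⁻¹ : Rˣ) : R) * d * ((h⁻¹)⁻¹ : Rˣ) * e) * (h⁻¹ : Rˣ) := by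
      simp [← mul_assoc]
    rw [h3]
    rcases this with h1 | h1
    · left; rw [h1]; simp
    · right; rw [h1]

theorem at_orth (hD : Maximal (IdemSys H) D) {e e' : R} (he : IsAt D e) (he' : IsAt D e') (hne : e ≠ e') :
    e * e' = 0 := by
  rcases he'.2.2 e he.1 with h | h
  · exact h
  · rcases he.2.2 e' he'.1 with h1 | h1
    · rw [hD.1.comm e he.1 e' he'.1, h1]
    · rw [hD.1.comm e he.1 e' he'.1, h1] at h
      exact absurd h hne

theorem under_at_comm (hD : Maximal (IdemSys H) D) {e f : R} (he : IsAt D e) (h1 : e * f = f) (h2 : f * e = f)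
    (d : R) (hd : d ∈ D) : f * d = d * f := by
  have a1 : f * d = f * (d * e) := by
    rw [hD.1.comm d hd e he.1, ← mul_assoc, h2]
  have a2 : d * f = d * e * f := by rw [mul_assoc, h1]
  rw [a1, a2]
  rcases he.2.2 d hd with h | h
  · simp [h]
  · rw [h, h1, h2]

end ring

variable {F V : Type*} [Field F] [AddCommGroup V] [Module F V]

theorem exists_at_below [Module.Finite F V] {H : Subgroup (Module.End F V)ˣ} {D : Set (Module.End F V)}
    (hD : Maximal (IdemSys H) D) {f : Module.End F V} (hf : f ∈ D) (hf0 : f ≠ 0) :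
    ∃ e, IsAt D e ∧ f * e = e := by
  classical
  have hex : ∃ k, ∃ d ∈ D, d ≠ 0 ∧ f * d = d ∧ Module.finrank F (LinearMap.range d) = k :=
    ⟨_, f, hf, hf0, hD.1.idem f hf, rfl⟩
  obtain ⟨e, heD, he0, hfe, hk⟩ := Nat.find_spec hex
  refine ⟨e, ⟨heD, he0, fun d hd => ?_⟩, hfe⟩
  by_cases h0 : d * e = 0
  · exact Or.inl h0
  right
  have h1 := Nat.find_min' hex ⟨d * e, sys_mul hD hd heD, h0, by
    rw [← mul_assoc, hD.1.comm f hf d hd, mul_assoc, hfe], rfl⟩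
  rw [← hk] at h1
  have hle : LinearMap.range (d * e) ≤ LinearMap.range e := by
    rw [hD.1.comm d hd e heD]
    rintro _ ⟨w, rfl⟩
    exact ⟨d w, rfl⟩
  have heq := Submodule.eq_of_le_of_finrank_le hle h1
  ext w
  have : e w ∈ LinearMap.range (d * e) := by rw [heq]; exact ⟨w, rfl⟩
  obtain ⟨u, hu⟩ := this
  rw [Module.End.mul_apply, ← hu]
  have h4 := congrArg (fun m : Module.End F V => m (e u)) (hD.1.idem d hd)
  simpa using h4

/-- units commuting with `e` -/
def cent (e : Module.End F V) : Subgroup (Module.End F V)ˣ where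
  carrier := {u | (u : Module.End F V) * e = e * u}
  one_mem' := by simp
  mul_mem' := by
    intro a b ha hb
    simp only [Set.mem_ofPred_eq, Units.val_mul] at *
    rw [mul_assoc, hb, ← mul_assoc, ha, mul_assoc]
  inv_mem' := by
    intro a ha
    simp only [Set.mem_ofPred_eq] at *
    have h1 : Commute (a : Module.End F V) e := ha
    exact h1.units_inv_left

theorem mem_cent {e : Module.End F V} {u : (Module.End F V)ˣ} :
    u ∈ cent e ↔ (u : Module.End F V) * e = e * u := Iff.rfl

theorem fix_range {e : Module.End F V} (he : e * e = e) (w : LinearMap.range e) : e w = w := by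
  obtain ⟨w, u, rfl⟩ := w
  exact congrArg (fun m : Module.End F V => m u) he

theorem rr_range {e : Module.End F V} (he : e * e = e) (w : LinearMap.range e) :
    e.rangeRestrict w = w := Subtype.ext (fix_range he w)

/-- compression to the range of an idempotent -/
noncomputable def compr (e : Module.End F V) (he : e * e = e) :
    cent e →* Module.End F (LinearMap.range e) where
  toFun u := e.rangeRestrict ∘ₗ ((u : (Module.End F V)ˣ) : Module.End F V) ∘ₗ (LinearMap.range e).subtype
  map_one' := by
    ext w
    exact fix_range he w
  map_mul' := by
    rintro ⟨u, hu⟩ ⟨v, hv⟩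
    ext w
    have h1 := congrArg (fun m : Module.End F V => m ((v : Module.End F V) w)) (mem_cent.1 hu)
    have h2 := congrArg (fun m : Module.End F V => m (w : V)) he
    have h3 := congrArg (fun m : Module.End F V => m ((u : Module.End F V) ((v : Module.End F V) w))) he
    simp only [Module.End.mul_apply] at h1 h2 h3
    simp [h1, h3]

theorem compr_coe (e : Module.End F V) (he : e * e = e) (u : cent e) (w : LinearMap.range e) :
    ((compr e he u w : LinearMap.range e) : V) = ((u : (Module.End F V)ˣ) : Module.End F V) w := by
  have h1 := congrArg (fun m : Module.End F V => m (w : V)) (mem_cent.1 u.2)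
  simp only [Module.End.mul_apply] at h1
  rw [fix_range he] at h1
  exact h1.symm

/-- extension by zero -/
noncomputable def hat (e : Module.End F V) (f : Module.End F (LinearMap.range e)) : Module.End F V :=
  (LinearMap.range e).subtype ∘ₗ f ∘ₗ e.rangeRestrict

theorem hat_app (e : Module.End F V) (f : Module.End F (LinearMap.range e)) (w : V) :
    hat e f w = (f (e.rangeRestrict w) : V) := rfl

theorem hat_mul {e : Module.End F V} (he : e * e = e) (f g : Module.End F (LinearMap.range e)) :
    hat e f * hat e g = hat e (f * g) := by
  ext w
  rw [Module.End.mul_apply, hat_app, hat_app, hat_app, rr_range he, Module.End.mul_apply]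

theorem hat_one (e : Module.End F V) : hat e 1 = e := by
  ext w; rfl

theorem hat_left {e : Module.End F V} (he : e * e = e) (f : Module.End F (LinearMap.range e)) :
    e * hat e f = hat e f := by
  have := hat_mul he 1 f
  rwa [hat_one, one_mul] at this

theorem hat_right {e : Module.End F V} (he : e * e = e) (f : Module.End F (LinearMap.range e)) :
    hat e f * e = hat e f := by
  have := hat_mul he f 1
  rwa [hat_one, mul_one] at this

theorem hat_inj {e : Module.End F V} (he : e * e = e) {f g : Module.End F (LinearMap.range e)}
    (h : hat e f = hat e g) : f = g := by
  ext w
  have := congrArg (fun m : Module.End F V => m (w : V)) h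
  simp only [hat_app, rr_range he] at this
  exact this

theorem hat_conj {e : Module.End F V} (he : e * e = e) (u : cent e) (f : Module.End F (LinearMap.range e)) :
    hat e (compr e he u * f * compr e he u⁻¹) =
      ((u : (Module.End F V)ˣ) : Module.End F V) * hat e f * (((u : (Module.End F V)ˣ)⁻¹ : (Module.End F V)ˣ) : Module.End F V) := by
  ext w
  simp only [hat_app, Module.End.mul_apply, compr_coe]
  congr 3
  ext
  rw [compr_coe]
  have h1 := congrArg (fun m : Module.End F V => m w) (mem_cent.1 (u⁻¹).2)
  exact h1

theorem comp_index {e : Module.End F V} (he : e * e = e) [Finite F] [Module.Finite F V] {H : Subgroup (Module.End F V)ˣ} {D : Set (Module.End F V)}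
    (hD : Maximal (IdemSys H) D) (hat' : IsAt D e) (hH : ¬ 2 ∣ H.index) :
    ¬ 2 ∣ ((H.subgroupOf (cent e)).map (compr e he).toHomUnits).index := by
  have hfinR : Finite (Module.End F V) := Module.finite_of_finite F
  let B : Subgroup (Module.End F V)ˣ := ⨅ d ∈ D, cent d
  have hB : ∀ u, u ∈ B ↔ ∀ d ∈ D, (u : Module.End F V) * d = d * u := by
    intro u
    simp only [B, Subgroup.mem_iInf, mem_cent]
  have hBc : B ≤ cent e := fun u hu => (hB u).1 hu e hat'.1
  have h1 : H.relIndex B ∣ H.index := by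
    apply relIndex_dvd_index_of_norm
    intro h hh b hb
    rw [hB] at hb ⊢
    intro d hd
    have h2 := hb _ (hD.1.conj h⁻¹ (H.inv_mem hh) d hd)
    apply conj_inj h⁻¹
    rw [← conj_mul_conj h⁻¹ _ d, ← conj_mul_conj h⁻¹ d]
    simp only [Units.val_mul]
    rw [conj_conj]
    simpa using h2
  let ψ : B →* (Module.End F (LinearMap.range e))ˣ := (compr e he).toHomUnits.comp (Subgroup.inclusion hBc)
  have hsurj : Function.Surjective ψ := by
    intro u
    have hm : ∀ x y : Module.End F (LinearMap.range e), x * y = 1 →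
        (hat e x + (1 - e)) * (hat e y + (1 - e)) = 1 := by
      intro x y hxy
      have e1 := hat_mul he x y
      rw [hxy, hat_one] at e1
      have e2 := hat_right he x
      have e3 := hat_left he y
      calc (hat e x + (1 - e)) * (hat e y + (1 - e)) = hat e x * hat e y + (hat e x - hat e x * e) + (hat e y - e * hat e y) + (1 - e - e + e * e) := by noncomm_ring
        _ = 1 := by rw [e1, e2, e3, he]; noncomm_ring
    let U : (Module.End F V)ˣ := ⟨hat e (u : Module.End F (LinearMap.range e)) + (1 - e),
      hat e ((u⁻¹ : (Module.End F (LinearMap.range e))ˣ) : Module.End F (LinearMap.range e)) + (1 - e),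
      hm _ _ (Units.mul_inv u), hm _ _ (Units.inv_mul u)⟩
    have hUB : U ∈ B := by
      rw [hB]
      intro d hd
      have c1 := under_at_comm hD hat' (hat_left he u) (hat_right he u) d hd
      have c2 := hD.1.comm d hd e hat'.1
      simp only [U]
      rw [add_mul, mul_add, c1, sub_mul, mul_sub, c2]; simp
    refine ⟨⟨U, hUB⟩, ?_⟩
    ext w
    change ((compr e he ⟨U, hBc hUB⟩ w : LinearMap.range e) : V) = _
    rw [compr_coe]
    simp [U, hat_app, rr_range he, fix_range he]
  have h3 : ((H.subgroupOf B).map ψ).index ∣ H.relIndex B := Subgroup.index_map_dvd _ hsurj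
  have h4 : (H.subgroupOf B).map ψ ≤ (H.subgroupOf (cent e)).map (compr e he).toHomUnits := by
    rintro _ ⟨b, hb, rfl⟩
    exact ⟨Subgroup.inclusion hBc b, hb, rfl⟩
  have h5 := Subgroup.index_dvd_of_le h4
  intro h
  exact hH (h.trans (h5.trans (h3.trans h1)))

theorem small_atoms [Finite F] [Module.Finite F V] (p : ℕ) [Fact p.Prime] [CharP F p]
    (h2 : (2 : F) ≠ 0) (hth : (3 : F) ≠ 0)
    {H : Subgroup (Module.End F V)ˣ} (hs : Group.IsSolvable H) (hp : ¬ p ∣ Nat.card H)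
    (hH : ¬ 2 ∣ H.index) {D : Set (Module.End F V)}
    (hD : Maximal (IdemSys H) D) {e : Module.End F V} (hat' : IsAt D e) :
    Module.finrank F (LinearMap.range e) ≤ 2 := by
  have he := hD.1.idem e hat'.1
  by_contra hcon
  have hidx := comp_index he hD hat' hH
  set N := (H.subgroupOf (cent e)).map (compr e he).toHomUnits with hN
  have hsub : Group.IsSolvable (H.subgroupOf (cent e)) := by
    let ψ : H.subgroupOf (cent e) →* H :=
      { toFun := fun x => ⟨x.1.1, x.2⟩
        map_one' := rfl
        map_mul' := fun _ _ => rfl }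
    refine Group.isSolvable_of_isSolvable_injective (f := ψ) ?_
    intro x y hxy
    apply Subtype.ext
    apply Subtype.ext
    exact congrArg (fun z : H => (z : (Module.End F V)ˣ)) hxy
  have hNs : Group.IsSolvable N := by
    refine Group.isSolvable_of_surjective (f := (compr e he).toHomUnits.subgroupMap (H.subgroupOf (cent e))) ?_
    exact MonoidHom.subgroupMap_surjective _ _
  have hNp : ¬ p ∣ Nat.card N := by
    intro h
    apply hp
    refine h.trans ((Subgroup.card_map_dvd _ _).trans ?_)
    have : Nat.card (H.subgroupOf (cent e)) = Nat.card ((H.subgroupOf (cent e)).map (cent e).subtype) :=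
      (Subgroup.card_map_of_injective (cent e).subtype_injective).symm
    rw [this]
    apply Subgroup.card_dvd_of_le
    rw [Subgroup.subgroupOf_map_subtype]; exact inf_le_left
  obtain ⟨f, hff, hf0, hf1, hfc⟩ := has_idem p (by omega) h2 hth N hNs hNp hidx
  have hmem : hat e f ∈ D := by
    apply max_mem hD
    · rw [hat_mul he, hff]
    · exact under_at_comm hD hat' (hat_left he f) (hat_right he f)
    · intro h hh
      by_cases hc : (h : Module.End F V) * e * (h⁻¹ : (Module.End F V)ˣ) = e
      · have hce : h ∈ cent e := by
          rw [mem_cent]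
          conv_rhs => rw [← hc]
          rw [mul_assoc, Units.inv_mul, mul_one]
        have h1 := hfc ((compr e he).toHomUnits ⟨h, hce⟩) ⟨⟨h, hce⟩, hh, rfl⟩
        rw [← map_inv] at h1
        have h2 := congrArg (hat e) h1.eq
        simp only [MonoidHom.coe_toHomUnits] at h2
        rw [← hat_mul he f, ← hat_mul he _ f, hat_conj he] at h2
        exact h2
      · have ho := at_orth hD hat' (at_conj hD hat' hh) (Ne.symm hc)
        have ho' := at_orth hD (at_conj hD hat' hh) hat' hc
        have r1 : (h : Module.End F V) * hat e f * (h⁻¹ : (Module.End F V)ˣ) =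
            ((h : Module.End F V) * e * (h⁻¹ : (Module.End F V)ˣ)) * ((h : Module.End F V) * hat e f * (h⁻¹ : (Module.End F V)ˣ)) := by
          rw [conj_mul_conj, hat_left he]
        have r2 : (h : Module.End F V) * hat e f * (h⁻¹ : (Module.End F V)ˣ) =
            ((h : Module.End F V) * hat e f * (h⁻¹ : (Module.End F V)ˣ)) * ((h : Module.End F V) * e * (h⁻¹ : (Module.End F V)ˣ)) := by
          rw [conj_mul_conj, hat_right he]
        have s1 : hat e f * ((h : Module.End F V) * hat e f * (h⁻¹ : (Module.End F V)ˣ)) = 0 := by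
          rw [r1]
          nth_rewrite 1 [← hat_right he f]
          rw [mul_assoc, ← mul_assoc e, ho, zero_mul, mul_zero]
        have s2 : ((h : Module.End F V) * hat e f * (h⁻¹ : (Module.End F V)ˣ)) * hat e f = 0 := by
          rw [r2]
          nth_rewrite 2 [← hat_left he f]
          rw [mul_assoc, ← mul_assoc _ e, ho', zero_mul, mul_zero]
        rw [s1, s2]
  rcases hat'.2.2 _ hmem with h | h
  · rw [hat_right he] at h
    exact hf0 (hat_inj he (by rw [h]; ext; rfl))
  · rw [hat_right he] at h
    exact hf1 (hat_inj he (by rw [h, hat_one]))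

theorem exists_blocks [Finite F] [Module.Finite F V] (p : ℕ) [Fact p.Prime] [CharP F p]
    (h3 : 3 ≤ Module.finrank F V) (h2 : (2 : F) ≠ 0) (hth : (3 : F) ≠ 0)
    (H : Subgroup (Module.End F V)ˣ) (hs : Group.IsSolvable H) (hp : ¬ p ∣ Nat.card H)
    (hH : ¬ 2 ∣ H.index) :
    ∃ (m : ℕ) (e : Fin m → Module.End F V), 2 ≤ m ∧ OrthSys e ∧
      (∀ i, Module.finrank F (LinearMap.range (e i)) ≤ 2) ∧
      ∀ h ∈ H, ∀ i, ∃ j, (h : Module.End F V) * e i = e j * h := by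
  classical
  have hfinR : Finite (Module.End F V) := Module.finite_of_finite F
  obtain ⟨D, hD⟩ := exists_max_sys H
  have hfin : Finite {e // IsAt D e} := inferInstance
  obtain ⟨m, ⟨ε⟩⟩ := Finite.exists_equiv_fin {e // IsAt D e}
  let e : Fin m → Module.End F V := fun i => (ε.symm i).1
  have heat : ∀ i, IsAt D (e i) := fun i => (ε.symm i).2
  have horth : ∀ i j, i ≠ j → e i * e j = 0 := by
    intro i j hij
    apply at_orth hD (heat i) (heat j)
    intro h
    exact hij (ε.symm.injective (Subtype.ext h))
  have hidem : ∀ i, e i * e i = e i := fun i => hD.1.idem _ (heat i).1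
  have hes : ∀ i, e i * ∑ j, e j = e i := by
    intro i
    rw [Finset.mul_sum, Finset.sum_eq_single i (fun j _ hj => horth i j (Ne.symm hj)) (by simp), hidem]
  have hcomm : ∀ d ∈ D, (∑ j, e j) * d = d * ∑ j, e j := by
    intro d hd
    rw [Finset.mul_sum, Finset.sum_mul]
    exact Finset.sum_congr rfl fun j _ => hD.1.comm _ (heat j).1 d hd
  have hsum : ∑ i, e i = 1 := by
    set s := ∑ i, e i with hsdef
    have hss : s * s = s := by
      conv_lhs => rw [hsdef, Finset.sum_mul]
      exact Finset.sum_congr rfl fun i _ => hes i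
    have hf : (1 - s) ∈ D := by
      apply max_mem hD
      · calc (1 - s) * (1 - s) = 1 - s - s + s * s := by noncomm_ring
          _ = 1 - s := by rw [hss]; noncomm_ring
      · intro d hd
        rw [sub_mul, mul_sub, hcomm d hd]; simp
      · intro h hh
        have c1 : s * ((h : Module.End F V) * s * (h⁻¹ : (Module.End F V)ˣ)) = ((h : Module.End F V) * s * (h⁻¹ : (Module.End F V)ˣ)) * s := by
          have : (h : Module.End F V) * s * (h⁻¹ : (Module.End F V)ˣ) = ∑ i, (h : Module.End F V) * e i * (h⁻¹ : (Module.End F V)ˣ) := by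
            rw [hsdef, Finset.mul_sum, Finset.sum_mul]
          rw [this, Finset.mul_sum, Finset.sum_mul]
          exact Finset.sum_congr rfl fun i _ => hcomm _ (hD.1.conj h hh _ (heat i).1)
        have c2 : (h : Module.End F V) * (1 - s) * (h⁻¹ : (Module.End F V)ˣ) = 1 - (h : Module.End F V) * s * (h⁻¹ : (Module.End F V)ˣ) := by
          rw [mul_sub, sub_mul, mul_one, Units.mul_inv]
        rw [c2]
        calc _ = 1 - s - ((h : Module.End F V) * s * (h⁻¹ : (Module.End F V)ˣ)) + s * ((h : Module.End F V) * s * (h⁻¹ : (Module.End F V)ˣ)) := by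
              rw [sub_mul, mul_sub, mul_sub, one_mul, mul_one, one_mul]; abel
          _ = _ := by
              rw [c1, sub_mul, mul_sub, mul_sub, one_mul, mul_one, one_mul]; abel
    by_contra hne
    have hne' : 1 - s ≠ 0 := fun h => hne (sub_eq_zero.1 h).symm
    obtain ⟨d, hd, hsd⟩ := exists_at_below hD hf hne'
    have hd2 : d = e (ε ⟨d, hd⟩) := by simp [e]
    have := hes (ε ⟨d, hd⟩)
    rw [← hd2, ← hcomm d hd.1] at this
    rw [sub_mul, one_mul, this, sub_self] at hsd
    exact hd.2.1 hsd.symm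
  have hr : ∀ i, Module.finrank F (LinearMap.range (e i)) ≤ 2 := fun i =>
    small_atoms p h2 hth hs hp hH hD (heat i)
  refine ⟨m, e, ?_, ⟨hidem, fun i => (heat i).2.1, horth, hsum⟩, hr, ?_⟩
  · by_contra hm
    have h01 : m = 0 ∨ m = 1 := by omega
    rcases h01 with rfl | rfl
    · have h0 : (0 : Module.End F V) = 1 := by simpa using hsum
      have : Subsingleton V := by
        refine ⟨fun x y => ?_⟩
        have hz : ∀ z : V, z = 0 := fun z => (congrArg (fun m : Module.End F V => m z) h0).symm
        rw [hz x, hz y]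
      have := Module.finrank_zero_of_subsingleton (R := F) (M := V)
      omega
    · rw [Fin.sum_univ_one] at hsum
      have h4 := hr 0
      rw [hsum] at h4
      have h5 : LinearMap.range (1 : Module.End F V) = ⊤ := LinearMap.range_id
      rw [h5, finrank_top] at h4
      omega
  · intro h hh i
    refine ⟨ε ⟨_, at_conj hD (heat i) hh⟩, ?_⟩
    simp [e, mul_assoc]

end PartTen

section PartEleven

variable {F : Type*} [Field F]

theorem comm_span (a c : Matrix (Fin 2) (Fin 2) F) (ha : ∀ z : F, a ≠ z • 1) (h : c * a = a * c) :
    ∃ s t : F, c = s • 1 + t • a := by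
  have e01 := congrFun (congrFun h 0) 1
  have e10 := congrFun (congrFun h 1) 0
  have e00 := congrFun (congrFun h 0) 0
  simp only [Matrix.mul_apply, Fin.sum_univ_two] at e01 e10 e00
  have fin : ∀ t : F, c 0 1 = t * a 0 1 → c 1 0 = t * a 1 0 → c 0 0 - c 1 1 = t * (a 0 0 - a 1 1) →
      ∃ s t : F, c = s • 1 + t • a := by
    intro t h1 h2 h3
    refine ⟨c 0 0 - t * a 0 0, t, ?_⟩
    ext i j
    fin_cases i <;> fin_cases j <;> simp
    · exact h1
    · exact h2
    · linear_combination -h3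
  by_cases h01 : a 0 1 = 0
  · by_cases h10 : a 1 0 = 0
    · by_cases h3 : a 0 0 - a 1 1 = 0
      · exfalso
        apply ha (a 0 0)
        ext i j
        fin_cases i <;> fin_cases j <;> simp [h01, h10]
        linear_combination -h3
      · apply fin ((c 0 0 - c 1 1) / (a 0 0 - a 1 1))
        · field_simp; linear_combination -e01
        · field_simp; linear_combination e10
        · field_simp
    · apply fin (c 1 0 / a 1 0)
      · field_simp; linear_combination e00
      · field_simp
      · field_simp; linear_combination -e10
  · apply fin (c 0 1 / a 0 1)
    · field_simp
    · field_simp; linear_combination -e00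
    · field_simp; linear_combination e01

theorem tr_sq (a : Matrix (Fin 2) (Fin 2) F) (h : a.trace = 0) : a * a = (-a.det) • 1 := by
  rw [Matrix.trace_fin_two] at h
  ext i j
  fin_cases i <;> fin_cases j <;> simp [Matrix.mul_apply, Fin.sum_univ_two, Matrix.det_fin_two]
  · linear_combination a 0 0 * h
  · linear_combination a 0 1 * h
  · linear_combination a 1 0 * h
  · linear_combination a 1 1 * h

theorem pm_of_comm (h2 : (2 : F) ≠ 0) (a b : Matrix (Fin 2) (Fin 2) F) (ha : ∀ z : F, a ≠ z • 1)
    (h : b * a = a * b) (hta : a.trace = 0) (htb : b.trace = 0) (hd : a.det ≠ 0)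
    (hdd : b.det = a.det) : b = a ∨ b = -a := by
  obtain ⟨s, t, rfl⟩ := comm_span a b ha h
  have hs : s = 0 := by
    simp [Matrix.trace_add, Matrix.trace_smul, hta] at htb
    rcases htb with h | h
    · exact h
    · exact absurd (by exact_mod_cast h) h2
  subst hs
  simp only [zero_smul, zero_add] at *
  rw [Matrix.det_smul, Fintype.card_fin] at hdd
  have : (t - 1) * (t + 1) = 0 := by
    have : (t ^ 2 - 1) * a.det = 0 := by linear_combination hdd
    rcases mul_eq_zero.1 this with h | h
    · linear_combination h
    · exact absurd h hd
  rcases mul_eq_zero.1 this with h | h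
  · left; rw [sub_eq_zero.1 h, one_smul]
  · right; rw [eq_neg_of_add_eq_zero_left h, neg_smul, one_smul]

theorem not_scal {a : GL (Fin 2) F} (ha : a ∉ scal F (Matrix (Fin 2) (Fin 2) F)) :
    ∀ z : F, (a : Matrix (Fin 2) (Fin 2) F) ≠ z • 1 := fun z hz => ha ⟨z, hz⟩

theorem tr_conj (g : GL (Fin 2) F) (a : Matrix (Fin 2) (Fin 2) F) :
    ((g : Matrix (Fin 2) (Fin 2) F) * a * ((g⁻¹ : GL (Fin 2) F) : Matrix (Fin 2) (Fin 2) F)).trace = a.trace :=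
  Matrix.trace_units_conj g a

theorem de_conj (g : GL (Fin 2) F) (a : Matrix (Fin 2) (Fin 2) F) :
    ((g : Matrix (Fin 2) (Fin 2) F) * a * ((g⁻¹ : GL (Fin 2) F) : Matrix (Fin 2) (Fin 2) F)).det = a.det :=
  Matrix.det_units_conj g a

/-- `g` sends `a` to plus or minus `a` -/
def PM (g a : GL (Fin 2) F) : Prop := g * a * g⁻¹ = a ∨
  ((g * a * g⁻¹ : GL (Fin 2) F) : Matrix (Fin 2) (Fin 2) F) = -a

/-- `a` and `b` on the same line -/
def SameLine (a b : GL (Fin 2) F) : Prop := ∃ z ∈ scal F (Matrix (Fin 2) (Fin 2) F), a = z * b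

structure CaseOne (a : GL (Fin 2) F) (P : GL (Fin 2) F → Prop) : Prop where
  ns : a ∉ scal F (Matrix (Fin 2) (Fin 2) F)
  tr : (a : Matrix (Fin 2) (Fin 2) F).trace = 0
  pm : ∀ g, P g → PM g a

structure CaseTwo (a b : GL (Fin 2) F) (P : GL (Fin 2) F → Prop) : Prop where
  anti : (a : Matrix (Fin 2) (Fin 2) F) * b = - ((b : Matrix (Fin 2) (Fin 2) F) * a)
  lines : ∀ g, P g → ∀ c ∈ ({a, b, a * b} : Set (GL (Fin 2) F)),
    ∃ d ∈ ({a, b, a * b} : Set (GL (Fin 2) F)), SameLine (g * c * g⁻¹) d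

theorem one_add_pow (t : F) (a : Matrix (Fin 2) (Fin 2) F) (h : a * a = 0) (m : ℕ) :
    (t • 1 + a) ^ (m + 1) = t ^ (m + 1) • 1 + ((m + 1 : ℕ) * t ^ m) • a := by
  induction m with
  | zero => simp
  | succ m ih =>
    rw [pow_succ, ih]
    simp only [add_mul, mul_add, smul_mul_assoc, mul_smul_comm, one_mul, mul_one, h, smul_zero, add_zero]
    push_cast
    module

theorem comm_two_scalar (h2 : (2 : F) ≠ 0) (a b k : GL (Fin 2) F)
    (hab : (a : Matrix (Fin 2) (Fin 2) F) * b = - ((b : Matrix (Fin 2) (Fin 2) F) * a))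
    (h1 : (k : Matrix (Fin 2) (Fin 2) F) * a = a * k) (h3 : (k : Matrix (Fin 2) (Fin 2) F) * b = b * k) :
    k ∈ scal F (Matrix (Fin 2) (Fin 2) F) := by
  have hne : (a : Matrix (Fin 2) (Fin 2) F) * b ≠ 0 := by
    rw [← Units.val_mul]; exact (a * b).ne_zero
  have ha : ∀ z : F, (a : Matrix (Fin 2) (Fin 2) F) ≠ z • 1 := by
    intro z hz
    have h4 := hab
    rw [hz] at h4
    simp only [smul_mul_assoc, one_mul, mul_smul_comm, mul_one] at h4
    have : (2 : F) • (z • (b : Matrix (Fin 2) (Fin 2) F)) = 0 := by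
      linear_combination (norm := module) (1 : F) • h4
    rw [smul_eq_zero] at this
    rcases this with h | h
    · exact h2 h
    · apply hne; rw [hz]; simpa using h
  obtain ⟨s, t, hk⟩ := comm_span _ _ ha h1
  rw [hk] at h3
  simp only [add_mul, mul_add, smul_mul_assoc, one_mul, mul_smul_comm, mul_one] at h3
  have h5 := add_left_cancel h3
  have h6 : (2 * t) • ((a : Matrix (Fin 2) (Fin 2) F) * b) = 0 := by
    have h7 : t • ((b : Matrix (Fin 2) (Fin 2) F) * a) = - (t • ((a : Matrix (Fin 2) (Fin 2) F) * b)) := by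
      rw [hab]; simp
    rw [h7] at h5
    linear_combination (norm := module) (1 : F) • h5
  rw [smul_eq_zero] at h6
  rcases h6 with h | h
  · have ht : t = 0 := by
      rcases mul_eq_zero.1 h with h | h
      · exact absurd h h2
      · exact h
    refine ⟨s, ?_⟩
    rw [hk, ht, zero_smul, add_zero]
  · exact absurd h hne

/-- elements fixing both `a` and `b` up to sign -/
theorem mem_klein (h2 : (2 : F) ≠ 0) (a b k : GL (Fin 2) F)
    (hab : (a : Matrix (Fin 2) (Fin 2) F) * b = - ((b : Matrix (Fin 2) (Fin 2) F) * a))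
    (h1 : (k : Matrix (Fin 2) (Fin 2) F) * a = a * k ∨ (k : Matrix (Fin 2) (Fin 2) F) * a = - (a * k))
    (h3 : (k : Matrix (Fin 2) (Fin 2) F) * b = b * k ∨ (k : Matrix (Fin 2) (Fin 2) F) * b = - (b * k)) :
    k ∈ scal F (Matrix (Fin 2) (Fin 2) F) ∨ SameLine k a ∨ SameLine k b ∨ SameLine k (a * b) := by
  have key : ∀ w : GL (Fin 2) F, k * w⁻¹ ∈ scal F (Matrix (Fin 2) (Fin 2) F) → SameLine k w :=
    fun w hw => ⟨_, hw, by group⟩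
  have hinv : ∀ (w : GL (Fin 2) F) (x : Matrix (Fin 2) (Fin 2) F), (w : Matrix (Fin 2) (Fin 2) F) * x = x * w →
      ((w⁻¹ : GL (Fin 2) F) : Matrix (Fin 2) (Fin 2) F) * x = x * (w⁻¹ : GL (Fin 2) F) := by
    intro w x h
    have : Commute (w : Matrix (Fin 2) (Fin 2) F) x := h
    exact this.units_inv_left
  have hinv' : ∀ (w : GL (Fin 2) F) (x : Matrix (Fin 2) (Fin 2) F), (w : Matrix (Fin 2) (Fin 2) F) * x = - (x * w) →
      ((w⁻¹ : GL (Fin 2) F) : Matrix (Fin 2) (Fin 2) F) * x = - (x * (w⁻¹ : GL (Fin 2) F)) := by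
    intro w x h
    calc ((w⁻¹ : GL (Fin 2) F) : Matrix (Fin 2) (Fin 2) F) * x
        = - ((w⁻¹ : GL (Fin 2) F) * (-(x * w)) * (w⁻¹ : GL (Fin 2) F)) := by
          rw [mul_neg, neg_mul, neg_neg, mul_assoc, mul_assoc, Units.mul_inv, mul_one]
      _ = - (x * (w⁻¹ : GL (Fin 2) F)) := by rw [← h, ← mul_assoc, Units.inv_mul, one_mul]
  have hba : (b : Matrix (Fin 2) (Fin 2) F) * a = - ((a : Matrix (Fin 2) (Fin 2) F) * b) := by rw [hab, neg_neg]
  have c1 : ∀ {u v x : Matrix (Fin 2) (Fin 2) F}, u * x = x * u → v * x = x * v → u * v * x = x * (u * v) := by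
    intro u v x h h'
    rw [mul_assoc, h', ← mul_assoc, h, mul_assoc]
  have c2 : ∀ {u v x : Matrix (Fin 2) (Fin 2) F}, u * x = -(x * u) → v * x = -(x * v) → u * v * x = x * (u * v) := by
    intro u v x h h'
    rw [mul_assoc, h', mul_neg, ← mul_assoc, h, neg_mul, neg_neg, mul_assoc]
  have c3 : ∀ {u v x : Matrix (Fin 2) (Fin 2) F}, u * x = -(x * u) → v * x = x * v → u * v * x = -(x * (u * v)) := by
    intro u v x h h'
    rw [mul_assoc, h', ← mul_assoc, h, neg_mul, mul_assoc]
  have c4 : ∀ {u v x : Matrix (Fin 2) (Fin 2) F}, u * x = x * u → v * x = -(x * v) → u * v * x = -(x * (u * v)) := by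
    intro u v x h h'
    rw [mul_assoc, h', mul_neg, ← mul_assoc, h, mul_assoc]
  rcases h1 with h1 | h1 <;> rcases h3 with h3 | h3
  · exact Or.inl (comm_two_scalar h2 a b k hab h1 h3)
  · -- anticommutes with b only : line of a
    right; left
    apply key
    apply comm_two_scalar h2 a b _ hab
    · rw [Units.val_mul]; exact c1 h1 (hinv a _ rfl)
    · rw [Units.val_mul]; exact c2 h3 (hinv' a _ hab)
  · right; right; left
    apply key
    apply comm_two_scalar h2 a b _ hab
    · rw [Units.val_mul]; exact c2 h1 (hinv' b _ hba)
    · rw [Units.val_mul]; exact c1 h3 (hinv b _ rfl)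
  · right; right; right
    apply key
    apply comm_two_scalar h2 a b _ hab
    · rw [Units.val_mul]; refine c2 h1 (hinv' (a * b) _ ?_)
      rw [Units.val_mul]; exact c4 rfl hba
    · rw [Units.val_mul]; refine c2 h3 (hinv' (a * b) _ ?_)
      rw [Units.val_mul]; exact c3 hab rfl

end PartEleven

section PartTwelveA

variable {F : Type*} [Field F]

theorem comm_sign (a b : GL (Fin 2) F)
    (h : a * b * a⁻¹ * b⁻¹ ∈ scal F (Matrix (Fin 2) (Fin 2) F)) :
    (a : Matrix (Fin 2) (Fin 2) F) * b = b * a ∨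
      (a : Matrix (Fin 2) (Fin 2) F) * b = -((b : Matrix (Fin 2) (Fin 2) F) * a) := by
  obtain ⟨z, hz⟩ := h
  have h1 : a * b = (a * b * a⁻¹ * b⁻¹) * (b * a) := by group
  have h2 : (a : Matrix (Fin 2) (Fin 2) F) * b = z • ((b : Matrix (Fin 2) (Fin 2) F) * a) := by
    rw [← Units.val_mul, h1, Units.val_mul, hz, smul_mul_assoc, one_mul, Units.val_mul]
  have h3 := congrArg Matrix.det h2
  rw [Matrix.det_smul, Fintype.card_fin, Matrix.det_mul, Matrix.det_mul] at h3
  have ha : (a : Matrix (Fin 2) (Fin 2) F).det ≠ 0 := a.det_ne_zero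
  have hb : (b : Matrix (Fin 2) (Fin 2) F).det ≠ 0 := b.det_ne_zero
  have h4 : (z - 1) * (z + 1) = 0 := by
    have h5 : (z ^ 2 - 1) * ((a : Matrix (Fin 2) (Fin 2) F).det * (b : Matrix (Fin 2) (Fin 2) F).det) = 0 := by
      linear_combination -h3
    rcases mul_eq_zero.1 h5 with h | h
    · linear_combination h
    · exact absurd h (mul_ne_zero ha hb)
  rcases mul_eq_zero.1 h4 with h | h
  · left; rw [h2, sub_eq_zero.1 h, one_smul]
  · right; rw [h2, eq_neg_of_add_eq_zero_left h, neg_smul, one_smul]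

theorem anti_ns (h2 : (2 : F) ≠ 0) (a b : GL (Fin 2) F)
    (hab : (a : Matrix (Fin 2) (Fin 2) F) * b = - ((b : Matrix (Fin 2) (Fin 2) F) * a)) :
    a ∉ scal F (Matrix (Fin 2) (Fin 2) F) := by
  intro h
  have h1 := Subgroup.mem_center_iff.1 (scal_le_center _ _ h) b
  have h3 : (b : Matrix (Fin 2) (Fin 2) F) * a = a * b := by
    rw [← Units.val_mul, h1, Units.val_mul]
  rw [h3] at hab
  have h4 : (2 : F) • ((a * b : GL (Fin 2) F) : Matrix (Fin 2) (Fin 2) F) = 0 := by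
    rw [Units.val_mul]
    linear_combination (norm := module) (1 : F) • hab
  rw [smul_eq_zero] at h4
  rcases h4 with h | h
  · exact h2 h
  · exact (a * b).ne_zero h

theorem conj_scal {g c : GL (Fin 2) F}
    (h : g * c * g⁻¹ ∈ scal F (Matrix (Fin 2) (Fin 2) F)) : c ∈ scal F (Matrix (Fin 2) (Fin 2) F) := by
  have h1 := Subgroup.mem_center_iff.1 (scal_le_center _ _ h) g
  have h2 : c = g * c * g⁻¹ := by
    have h3 : g * c = g * (g * c * g⁻¹) := by rw [h1]; group
    exact mul_left_cancel h3
  rwa [h2]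

theorem structure_two [Finite F] (h2 : (2 : F) ≠ 0) (p : ℕ) [Fact p.Prime] [CharP F p]
    (L : Subgroup (GL (Fin 2) F)) (hs : Group.IsSolvable L) (hp : ¬ p ∣ Nat.card L)
    (hL : ¬ L ≤ scal F (Matrix (Fin 2) (Fin 2) F)) :
    (∃ a, CaseOne a (fun g => ∀ h ∈ L, g * h * g⁻¹ ∈ L)) ∨
    ∃ a b, a ∈ L ∧ b ∈ L ∧ CaseTwo a b (fun g => ∀ h ∈ L, g * h * g⁻¹ ∈ L) := by
  obtain ⟨A, hAL, hAZ, hcomm, hnorm⟩ := last_term L _ hs hL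
  by_cases hab : ∀ a ∈ A, ∀ b ∈ A, a * b = b * a
  · left
    obtain ⟨a0, ha0, hns⟩ := SetLike.not_le_iff_exists.1 hAZ
    set t : F := (a0 : Matrix (Fin 2) (Fin 2) F).trace / 2 with ht
    set a1 : Matrix (Fin 2) (Fin 2) F := (a0 : Matrix (Fin 2) (Fin 2) F) - t • 1 with ha1
    have hdec : (a0 : Matrix (Fin 2) (Fin 2) F) = t • 1 + a1 := by rw [ha1]; abel
    have htr : a1.trace = 0 := by
      rw [ha1, Matrix.trace_sub, Matrix.trace_smul, Matrix.trace_one, Fintype.card_fin, ht]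
      push_cast
      rw [smul_eq_mul, div_mul_cancel₀ _ h2, sub_self]
    have hns1 : ∀ z : F, a1 ≠ z • 1 := by
      intro z hz
      apply hns
      refine ⟨t + z, ?_⟩
      rw [hdec, hz, add_smul]
    have hdet : a1.det ≠ 0 := by
      intro hd
      have hsq : a1 * a1 = 0 := by rw [tr_sq a1 htr, hd]; simp
      have hpow : a0 ^ Nat.card L = 1 := by
        have := pow_card_eq_one' (x := (⟨a0, hAL ha0⟩ : L))
        exact congrArg Subtype.val this
      obtain ⟨m, hm⟩ := Nat.exists_eq_succ_of_ne_zero (Nat.card_pos (α := L)).ne'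
      have h3 := congrArg Units.val hpow
      rw [Units.val_pow_eq_pow_val, hm, hdec, Nat.succ_eq_add_one, one_add_pow t a1 hsq, Units.val_one] at h3
      have ht0 : t ≠ 0 := by
        intro h0
        have h4 : (a0 : Matrix (Fin 2) (Fin 2) F) * a0 = 0 := by
          rw [hdec, h0, zero_smul, zero_add, hsq]
        rw [← Units.val_mul] at h4
        exact (a0 * a0).ne_zero h4
      have hc : ((m + 1 : ℕ) : F) * t ^ m ≠ 0 := by
        refine mul_ne_zero ?_ (pow_ne_zero _ ht0)
        intro h5
        apply hp
        rw [hm]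
        exact (CharP.cast_eq_zero_iff F p _).1 h5
      set c := ((m + 1 : ℕ) : F) * t ^ m with hcdef
      apply hns1 (c⁻¹ * (1 - t ^ (m + 1)))
      have h6 : c • a1 = (1 - t ^ (m + 1)) • (1 : Matrix (Fin 2) (Fin 2) F) := by
        linear_combination (norm := module) (1 : F) • h3
      rw [mul_smul, ← h6, smul_smul, inv_mul_cancel₀ hc, one_smul]
    refine ⟨Matrix.GeneralLinearGroup.mkOfDetNeZero a1 hdet, ?_, htr, ?_⟩
    · rintro ⟨z, hz⟩
      exact hns1 z hz
    · intro g hg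
      have h3 : (g * a0 * g⁻¹) * a0 = a0 * (g * a0 * g⁻¹) := hab _ (hnorm g hg a0 ha0) _ ha0
      have h4 := congrArg Units.val h3
      simp only [Units.val_mul] at h4
      have h5 : (g : Matrix (Fin 2) (Fin 2) F) * a0 * (g⁻¹ : GL (Fin 2) F) =
          t • 1 + (g : Matrix (Fin 2) (Fin 2) F) * a1 * (g⁻¹ : GL (Fin 2) F) := by
        rw [hdec, mul_add, add_mul]
        congr 1
        rw [mul_smul_comm, smul_mul_assoc, mul_one, Units.mul_inv]
      rw [h5, hdec] at h4
      set b := (g : Matrix (Fin 2) (Fin 2) F) * a1 * (g⁻¹ : GL (Fin 2) F) with hb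
      have h6 : b * a1 = a1 * b := by
        simp only [add_mul, mul_add, smul_mul_assoc, mul_smul_comm, one_mul, mul_one] at h4
        linear_combination (norm := module) (1 : F) • h4
      rcases pm_of_comm h2 a1 b hns1 h6 htr (by rw [hb, tr_conj, htr]) hdet (by rw [hb, de_conj]) with h | h
      · left
        apply Units.ext
        rw [Units.val_mul, Units.val_mul]; exact h
      · right
        rw [Units.val_mul, Units.val_mul]; exact h
  · right
    push Not at hab
    obtain ⟨a, ha, b, hb, hne⟩ := hab
    have hanti : (a : Matrix (Fin 2) (Fin 2) F) * b = - ((b : Matrix (Fin 2) (Fin 2) F) * a) := by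
      rcases comm_sign a b (hcomm a ha b hb) with h | h
      · exact absurd (Units.ext (by simpa only [Units.val_mul] using h)) hne
      · exact h
    refine ⟨a, b, hAL ha, hAL hb, hanti, ?_⟩
    intro g hg c hc
    have hcA : c ∈ A ∧ c ∉ scal F (Matrix (Fin 2) (Fin 2) F) := by
      rcases hc with rfl | rfl | rfl
      · exact ⟨ha, anti_ns h2 _ _ hanti⟩
      · exact ⟨hb, anti_ns h2 _ a (by rw [hanti, neg_neg])⟩
      · refine ⟨mul_mem ha hb, anti_ns h2 _ a ?_⟩
        rw [Units.val_mul, mul_assoc]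
        rw [← neg_eq_iff_eq_neg.2 hanti]; simp
    have hk := hnorm g hg c hcA.1
    rcases mem_klein h2 a b (g * c * g⁻¹) hanti (comm_sign _ _ (hcomm _ hk _ ha))
      (comm_sign _ _ (hcomm _ hk _ hb)) with h | h | h | h
    · exact absurd (conj_scal h) hcA.2
    · exact ⟨a, by simp, h⟩
    · exact ⟨b, by simp, h⟩
    · exact ⟨a * b, by simp, h⟩

end PartTwelveA

section PartTwelveB

variable {F : Type*} [Field F]

theorem pm_of_line (g a : GL (Fin 2) F) (h : SameLine (g * a * g⁻¹) a) : PM g a := by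
  obtain ⟨w, ⟨z, hz⟩, h⟩ := h
  have h1 := congrArg Units.val h
  rw [Units.val_mul w, hz, smul_mul_assoc, one_mul] at h1
  have h3 := congrArg Matrix.det h1
  rw [Matrix.det_smul, Fintype.card_fin, Units.val_mul, Units.val_mul, de_conj] at h3
  have ha : (a : Matrix (Fin 2) (Fin 2) F).det ≠ 0 := a.det_ne_zero
  have h4 : (z - 1) * (z + 1) = 0 := by
    have h5 : (z ^ 2 - 1) * (a : Matrix (Fin 2) (Fin 2) F).det = 0 := by
      linear_combination -h3
    rcases mul_eq_zero.1 h5 with h | h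
    · linear_combination h
    · exact absurd h ha
  rcases mul_eq_zero.1 h4 with h | h
  · left; apply Units.ext; rw [h1, sub_eq_zero.1 h, one_smul]
  · right; rw [h1, eq_neg_of_add_eq_zero_left h, neg_smul, one_smul]

theorem pm_sq {g a : GL (Fin 2) F} (h : PM g a) : (g * g) * a = a * (g * g) := by
  rcases h with h | h
  · have h1 : g * a = a * g := by rw [← eq_mul_inv_iff_mul_eq.1 h.symm]
    rw [mul_assoc, h1, ← mul_assoc, h1, mul_assoc]
  · have h1 : (g : Matrix (Fin 2) (Fin 2) F) * a = -(a * g) := by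
      have h2 : g * a = (g * a * g⁻¹) * g := by group
      rw [← Units.val_mul, h2, Units.val_mul, h, neg_mul]
    apply Units.ext
    simp only [Units.val_mul]
    rw [mul_assoc, h1, mul_neg, ← mul_assoc, h1, neg_mul, neg_neg, mul_assoc]

theorem elem_comm (h2 : (2 : F) ≠ 0) (h3 : (3 : F) ≠ 0) (e : Matrix (Fin 2) (Fin 2) F) (he : e * e = 0)
    (a : GL (Fin 2) F) (u : GL (Fin 2) F) (hu : (u : Matrix (Fin 2) (Fin 2) F) = 1 + e)
    (h : ∃ j, 1 ≤ j ∧ j ≤ 3 ∧ PM (u ^ j) a) : e * a = a * e := by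
  obtain ⟨j, hj1, hj3, hj⟩ := h
  have h4 := pm_sq hj
  rw [← pow_add] at h4
  obtain ⟨m, hm⟩ : ∃ m, j + j = m + 1 := ⟨j + j - 1, by omega⟩
  rw [hm] at h4
  have h5 : (u : Matrix (Fin 2) (Fin 2) F) ^ (m + 1) = 1 + ((m + 1 : ℕ) : F) • e := by
    have := one_add_pow (1 : F) e he m
    simp only [one_smul, one_pow, mul_one] at this
    rw [hu, this]
  have h6 := congrArg Units.val h4
  simp only [Units.val_mul, Units.val_pow_eq_pow_val] at h6
  rw [h5] at h6
  have hc : ((m + 1 : ℕ) : F) ≠ 0 := by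
    rw [← hm]
    interval_cases j
    · simpa [one_add_one_eq_two] using h2
    · have : ((2 + 2 : ℕ) : F) = 2 * 2 := by norm_num
      rw [this]; exact mul_ne_zero h2 h2
    · have : ((3 + 3 : ℕ) : F) = 2 * 3 := by norm_num
      rw [this]; exact mul_ne_zero h2 h3
  have h7 : ((m + 1 : ℕ) : F) • (e * (a : Matrix (Fin 2) (Fin 2) F)) = ((m + 1 : ℕ) : F) • ((a : Matrix (Fin 2) (Fin 2) F) * e) := by
    simp only [add_mul, mul_add, smul_mul_assoc, mul_smul_comm, one_mul, mul_one] at h6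
    exact add_left_cancel h6
  exact smul_right_injective _ hc h7

theorem t_lemma (h2 : (2 : F) ≠ 0) (h3 : (3 : F) ≠ 0) (a : GL (Fin 2) F)
    (h : ∀ u : GL (Fin 2) F, (u : Matrix (Fin 2) (Fin 2) F).det = 1 → ∃ j, 1 ≤ j ∧ j ≤ 3 ∧ PM (u ^ j) a) :
    a ∈ scal F (Matrix (Fin 2) (Fin 2) F) := by
  have key : ∀ e : Matrix (Fin 2) (Fin 2) F, e * e = 0 → (1 + e).det = 1 → e * a = a * e := by
    intro e he hd
    have hd' : (1 + e).det ≠ 0 := by rw [hd]; exact one_ne_zero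
    exact elem_comm h2 h3 e he a (Matrix.GeneralLinearGroup.mkOfDetNeZero _ hd') rfl (h _ hd)
  have k1 := key !![0, 1; 0, 0] (by ext i j; fin_cases i <;> fin_cases j <;> simp [Matrix.mul_apply])
    (by simp [Matrix.det_fin_two])
  have k2 := key !![0, 0; 1, 0] (by ext i j; fin_cases i <;> fin_cases j <;> simp [Matrix.mul_apply])
    (by simp [Matrix.det_fin_two])
  have e1 := congrFun (congrFun k1 0) 0
  have e2 := congrFun (congrFun k1 0) 1
  have e3 := congrFun (congrFun k2 0) 0
  simp [Matrix.mul_apply] at e1 e2 e3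
  refine ⟨a 0 0, ?_⟩
  ext i j
  fin_cases i <;> fin_cases j <;> simp [e1, e2, e3.symm]

theorem sl_structure (h2 : (2 : F) ≠ 0) (h3 : (3 : F) ≠ 0) (P : GL (Fin 2) F → Prop)
    (hP : ∀ u : GL (Fin 2) F, (u : Matrix (Fin 2) (Fin 2) F).det = 1 → P u)
    (h : (∃ a, CaseOne a P) ∨ ∃ a b, CaseTwo a b P) : False := by
  rcases h with ⟨a, ha⟩ | ⟨a, b, hab⟩
  · apply ha.ns
    apply t_lemma h2 h3 a
    intro u hu
    exact ⟨1, le_rfl, by norm_num, by rw [pow_one]; exact ha.pm u (hP u hu)⟩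
  · apply anti_ns h2 a b hab.anti
    apply t_lemma h2 h3 a
    intro u hu
    have hl : ∀ i : Fin 4, ∃ d : Fin 3, SameLine (u ^ (i : ℕ) * a * (u ^ (i : ℕ))⁻¹) (![a, b, a * b] d) := by
      intro i
      have hdet : ((u ^ (i : ℕ) : GL (Fin 2) F) : Matrix (Fin 2) (Fin 2) F).det = 1 := by
        rw [Units.val_pow_eq_pow_val, Matrix.det_pow, hu, one_pow]
      obtain ⟨d, hd, hd'⟩ := hab.lines _ (hP _ hdet) a (by simp)
      rcases hd with rfl | rfl | rfl
      · exact ⟨0, hd'⟩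
      · exact ⟨1, hd'⟩
      · exact ⟨2, hd'⟩
    choose d hd using hl
    obtain ⟨i, k, hik, hdd⟩ := Fintype.exists_ne_map_eq_of_card_lt d (by simp)
    wlog hlt : i < k generalizing i k
    · exact this k i hik.symm hdd.symm (lt_of_le_of_ne (not_lt.1 hlt) hik.symm)
    have hlt' : (i : ℕ) < k := hlt
    refine ⟨k - i, by omega, by omega, pm_of_line _ _ ?_⟩
    obtain ⟨z, hz, ez⟩ := hd i
    obtain ⟨w, hw, ew⟩ := hd k
    rw [hdd] at ez
    refine ⟨w * z⁻¹, mul_mem hw (inv_mem hz), ?_⟩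
    have hc := Subgroup.mem_center_iff.1 (scal_le_center _ _ (mul_mem hw (inv_mem hz))) (u ^ (i : ℕ))⁻¹
    have hk : u ^ (k : ℕ) = u ^ (i : ℕ) * u ^ ((k : ℕ) - i) := by rw [← pow_add]; congr 1; omega
    have e1 : u ^ (k : ℕ) * a * (u ^ (k : ℕ))⁻¹ = (w * z⁻¹) * (u ^ (i : ℕ) * a * (u ^ (i : ℕ))⁻¹) := by
      rw [ew, ez]; group
    rw [hk] at e1
    generalize u ^ (i : ℕ) = v at *
    generalize u ^ ((k : ℕ) - i) = x at *
    generalize w * z⁻¹ = y at *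
    calc x * a * x⁻¹ = v⁻¹ * (v * x * a * (v * x)⁻¹) * v := by group
      _ = (v⁻¹ * y) * (v * a * v⁻¹) * v := by rw [e1]; group
      _ = y * a := by rw [hc]; group

theorem s_lemma [Finite F] (h2 : (2 : F) ≠ 0) (h3 : (3 : F) ≠ 0) (p : ℕ) [Fact p.Prime] [CharP F p]
    (H : Subgroup (GL (Fin 2) F)) (hs : Group.IsSolvable H) (hp : ¬ p ∣ Nat.card H)
    (k : GL (Fin 2) F) (hk : k ∉ scal F (Matrix (Fin 2) (Fin 2) F)) :
    ∃ y : GL (Fin 2) F, (y : Matrix (Fin 2) (Fin 2) F).det = 1 ∧ y * k * y⁻¹ ∉ H := by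
  by_contra hcon
  push Not at hcon
  let L : Subgroup (GL (Fin 2) F) :=
    { carrier := {k | ∀ y : GL (Fin 2) F, (y : Matrix (Fin 2) (Fin 2) F).det = 1 → y * k * y⁻¹ ∈ H}
      one_mem' := by intro y _; simp
      mul_mem' := by
        intro a b ha hb y hy
        have : y * (a * b) * y⁻¹ = (y * a * y⁻¹) * (y * b * y⁻¹) := by group
        rw [this]; exact mul_mem (ha y hy) (hb y hy)
      inv_mem' := by
        intro a ha y hy
        have : y * a⁻¹ * y⁻¹ = (y * a * y⁻¹)⁻¹ := by group
        rw [this]; exact inv_mem (ha y hy) }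
  have hL : ∀ k, k ∈ L ↔ ∀ y : GL (Fin 2) F, (y : Matrix (Fin 2) (Fin 2) F).det = 1 → y * k * y⁻¹ ∈ H :=
    fun _ => Iff.rfl
  have hLH : L ≤ H := by
    intro k hk
    have := (hL k).1 hk 1 (by simp)
    simpa using this
  have hLs : Group.IsSolvable L :=
    Group.isSolvable_of_isSolvable_injective (f := Subgroup.inclusion hLH) (Subgroup.inclusion_injective hLH)
  have hst := structure_two h2 p L hLs (fun h => hp (h.trans (Subgroup.card_dvd_of_le hLH)))
    (fun h => hk (h ((hL k).2 hcon)))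
  refine sl_structure h2 h3 _ ?_ (hst.imp id ?_)
  · intro u hu h hh y hy
    have : y * (u * h * u⁻¹) * y⁻¹ = (y * u) * h * (y * u)⁻¹ := by group
    rw [this]
    exact hh (y * u) (by rw [Units.val_mul, Matrix.det_mul, hy, hu, one_mul])
  · rintro ⟨a, b, _, _, h⟩
    exact ⟨a, b, h⟩

end PartTwelveB

section PartTwelveC

variable {F : Type*} [Field F]

theorem relIndex_le_of_map {G X : Type*} [Group G] [Finite X] (L K : Subgroup G) (f : G → X)
    (hf : ∀ g ∈ K, ∀ h ∈ K, f g = f h → g⁻¹ * h ∈ L) : L.relIndex K ≤ Nat.card X := by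
  rw [Subgroup.relIndex, Subgroup.index]
  apply Nat.card_le_card_of_injective (fun q : K ⧸ L.subgroupOf K => f (q.out : K))
  intro q r hqr
  have h1 := hf _ q.out.2 _ r.out.2 hqr
  rw [← QuotientGroup.out_eq' q, ← QuotientGroup.out_eq' r, QuotientGroup.eq]
  exact h1

theorem conj_fix_iff (g a : GL (Fin 2) F) : g * a * g⁻¹ = a ↔ g * a = a * g :=
  mul_inv_eq_iff_eq_mul

/-- two elements which fix `a` up to sign with the same sign -/
theorem pm_same {g h a : GL (Fin 2) F} (hg : PM g a) (hh : PM h a) (e : g * a = a * g ↔ h * a = a * h) :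
    (g⁻¹ * h) * a = a * (g⁻¹ * h) := by
  have key : g * a * g⁻¹ = h * a * h⁻¹ := by
    by_cases h1 : g * a = a * g
    · rw [(conj_fix_iff g a).2 h1, (conj_fix_iff h a).2 (e.1 h1)]
    · have h2 : ¬ h * a = a * h := fun h => h1 (e.2 h)
      rcases hg with hg | hg
      · exact absurd ((conj_fix_iff g a).1 hg) h1
      · rcases hh with hh | hh
        · exact absurd ((conj_fix_iff h a).1 hh) h2
        · exact Units.ext (hg.trans hh.symm)
  calc (g⁻¹ * h) * a = g⁻¹ * (h * a * h⁻¹) * h := by group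
    _ = g⁻¹ * (g * a * g⁻¹) * h := by rw [key]
    _ = a * (g⁻¹ * h) := by group

theorem comm_two_ns {a b c : GL (Fin 2) F} (ha : a ∉ scal F (Matrix (Fin 2) (Fin 2) F))
    (hab : a * b ≠ b * a) (h1 : c * a = a * c) (h3 : c * b = b * c) :
    c ∈ scal F (Matrix (Fin 2) (Fin 2) F) := by
  obtain ⟨s, t, h⟩ := comm_span _ _ (not_scal ha) (by simpa only [Units.val_mul] using congrArg Units.val h1)
  by_cases ht : t = 0
  · exact ⟨s, by rw [h, ht, zero_smul, add_zero]⟩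
  · exfalso
    apply hab
    apply Units.ext
    have h5 := congrArg Units.val h3
    simp only [Units.val_mul] at h5 ⊢
    rw [h] at h5
    simp only [add_mul, mul_add, smul_mul_assoc, mul_smul_comm, one_mul, mul_one] at h5
    exact smul_right_injective _ ht (add_left_cancel h5)

theorem bound_one {a b : GL (Fin 2) F} (K : Subgroup (GL (Fin 2) F))
    (ha : a ∉ scal F (Matrix (Fin 2) (Fin 2) F)) (hab : a * b ≠ b * a)
    (h1 : ∀ g ∈ K, PM g a) (h3 : ∀ g ∈ K, PM g b) :
    (scal F (Matrix (Fin 2) (Fin 2) F)).relIndex K ≤ 4 := by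
  classical
  have := relIndex_le_of_map (scal F (Matrix (Fin 2) (Fin 2) F)) K
    (fun g => (decide (g * a = a * g), decide (g * b = b * g))) (by
      intro g hg h hh e
      rw [Prod.mk.injEq, decide_eq_decide, decide_eq_decide] at e
      exact comm_two_ns ha hab (pm_same (h1 g hg) (h1 h hh) e.1) (pm_same (h3 g hg) (h3 h hh) e.2))
  simpa using this

theorem case_two_centr (h2 : (2 : F) ≠ 0) {a b : GL (Fin 2) F} (K : Subgroup (GL (Fin 2) F))
    (hZ : scal F (Matrix (Fin 2) (Fin 2) F) ≤ K) (haK : a ∉ K)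
    (hc : CaseTwo a b (fun g => g ∈ K)) {c : GL (Fin 2) F} (hcK : c ∈ K) (hca : c * a = a * c) :
    c ∈ scal F (Matrix (Fin 2) (Fin 2) F) := by
  have hanti := hc.anti
  have hba : (b : Matrix (Fin 2) (Fin 2) F) * a = - ((a : Matrix (Fin 2) (Fin 2) F) * b) := by rw [hanti, neg_neg]
  have hans := anti_ns h2 a b hanti
  have hne : a * b ≠ b * a := by
    intro h
    exact hans (comm_two_scalar h2 a b a hanti rfl (by simpa only [Units.val_mul] using congrArg Units.val h))
  -- `a * a` is scalar
  have haa : a * a ∈ scal F (Matrix (Fin 2) (Fin 2) F) := by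
    apply comm_two_scalar h2 a b _ hanti
    · rw [Units.val_mul, mul_assoc]
    · rw [Units.val_mul, mul_assoc, hanti, mul_neg, ← mul_assoc, hanti, neg_mul, neg_neg, mul_assoc]
  have hcc : PM (c * c) b := by
    obtain ⟨d, hd, z, hz, he⟩ := hc.lines c hcK b (by simp)
    have hzc := fun x => Subgroup.mem_center_iff.1 (scal_le_center _ _ hz) x
    rcases hd with rfl | rfl | rfl
    · exfalso
      apply hne
      have h5 : b = z * d := by
        calc b = c⁻¹ * (c * b * c⁻¹) * c := by group
          _ = c⁻¹ * z * (d * c) := by rw [he]; group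
          _ = z * d := by rw [← hca, hzc]; group
      rw [h5, ← mul_assoc, hzc, mul_assoc]
    · have h6 : PM c d := pm_of_line _ _ ⟨z, hz, he⟩
      left
      exact (conj_fix_iff _ _).2 (pm_sq h6)
    · apply pm_of_line
      refine ⟨z * z * (a * a), mul_mem (mul_mem hz hz) haa, ?_⟩
      calc c * c * b * (c * c)⁻¹ = c * (c * b * c⁻¹) * c⁻¹ := by group
        _ = (c * z) * a * b * c⁻¹ := by rw [he]; group
        _ = z * (c * a) * b * c⁻¹ := by rw [hzc]; group
        _ = (z * a) * (c * b * c⁻¹) := by rw [hca]; group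
        _ = z * (a * z) * a * b := by rw [he]; group
        _ = z * z * (a * a) * b := by rw [hzc]; group
  obtain ⟨s, t, h⟩ := comm_span _ _ (not_scal hans) (by simpa only [Units.val_mul] using congrArg Units.val hca)
  obtain ⟨δ, hδ⟩ := haa
  rw [Units.val_mul] at hδ
  have hsq : ((c * c : GL (Fin 2) F) : Matrix (Fin 2) (Fin 2) F) = (s * s + t * t * δ) • 1 + (2 * s * t) • (a : Matrix (Fin 2) (Fin 2) F) := by
    rw [Units.val_mul, h]
    simp only [add_mul, mul_add, smul_mul_assoc, mul_smul_comm, one_mul, mul_one, hδ]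
    module
  have hst : s * t = 0 ∨ s * s + t * t * δ = 0 := by
    have hcb : ((c * c : GL (Fin 2) F) : Matrix (Fin 2) (Fin 2) F) * b = b * (c * c : GL (Fin 2) F) ∨
        ((c * c : GL (Fin 2) F) : Matrix (Fin 2) (Fin 2) F) * b = - (b * (c * c : GL (Fin 2) F)) := by
      rcases hcc with h6 | h6
      · left; simpa only [Units.val_mul] using congrArg Units.val ((conj_fix_iff _ _).1 h6)
      · right
        have h7 : (c * c) * b = (c * c * b * (c * c)⁻¹) * (c * c) := by group
        rw [← Units.val_mul, h7, Units.val_mul, h6, neg_mul]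
    rw [hsq] at hcb
    simp only [add_mul, mul_add, smul_mul_assoc, mul_smul_comm, one_mul, mul_one, hba] at hcb
    rcases hcb with h6 | h6
    · left
      have h7 : (2 * 2 * (s * t)) • ((a * b : GL (Fin 2) F) : Matrix (Fin 2) (Fin 2) F) = 0 := by
        rw [Units.val_mul]
        linear_combination (norm := module) (1 : F) • h6
      rcases smul_eq_zero.1 h7 with h8 | h8
      · exact (mul_eq_zero.1 h8).resolve_left (mul_ne_zero h2 h2)
      · exact absurd h8 (a * b).ne_zero
    · right
      have h7 : (2 * (s * s + t * t * δ)) • (b : Matrix (Fin 2) (Fin 2) F) = 0 := by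
        linear_combination (norm := module) (1 : F) • h6
      rcases smul_eq_zero.1 h7 with h8 | h8
      · exact (mul_eq_zero.1 h8).resolve_left h2
      · exact absurd h8 b.ne_zero
  have kill : ∀ (x : GL (Fin 2) F) (r : F), x ∈ K → (x : Matrix (Fin 2) (Fin 2) F) = r • (a : Matrix (Fin 2) (Fin 2) F) → False := by
    intro x r hx hxa
    apply haK
    have h8 : x * a⁻¹ ∈ scal F (Matrix (Fin 2) (Fin 2) F) :=
      ⟨r, by rw [Units.val_mul, hxa, smul_mul_assoc, Units.mul_inv]⟩
    have h9 : a = (x * a⁻¹)⁻¹ * x := by group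
    rw [h9]
    exact mul_mem (inv_mem (hZ h8)) hx
  rcases hst with h6 | h6
  · rcases mul_eq_zero.1 h6 with h7 | h7
    · exact (kill c t hcK (by rw [h, h7, zero_smul, zero_add])).elim
    · exact ⟨s, by rw [h, h7, zero_smul, add_zero]⟩
  · exact (kill (c * c) _ (mul_mem hcK hcK) (by rw [hsq, h6, zero_smul, zero_add])).elim

theorem bound_two [Finite F] (h2 : (2 : F) ≠ 0) {a b : GL (Fin 2) F} (K : Subgroup (GL (Fin 2) F))
    (hZ : scal F (Matrix (Fin 2) (Fin 2) F) ≤ K) (haK : a ∉ K)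
    (hc : CaseTwo a b (fun g => g ∈ K)) :
    (scal F (Matrix (Fin 2) (Fin 2) F)).relIndex K ≤ 6 := by
  classical
  have hinv : ∀ {g h : GL (Fin 2) F} (d : GL (Fin 2) F), SameLine (g * a * g⁻¹) d → SameLine (h * a * h⁻¹) d →
      SameLine ((g⁻¹ * h) * a * (g⁻¹ * h)⁻¹) a := by
    rintro g h d ⟨z, hz, ez⟩ ⟨w, hw, ew⟩
    refine ⟨w * z⁻¹, mul_mem hw (inv_mem hz), ?_⟩
    have hcen := Subgroup.mem_center_iff.1 (scal_le_center _ _ (mul_mem hw (inv_mem hz))) g⁻¹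
    calc (g⁻¹ * h) * a * (g⁻¹ * h)⁻¹ = g⁻¹ * (h * a * h⁻¹) * g := by group
      _ = (g⁻¹ * (w * z⁻¹)) * (z * d) * g := by rw [ew]; group
      _ = (w * z⁻¹) * a := by rw [hcen, ← ez]; group
  let N : Subgroup (GL (Fin 2) F) :=
    { carrier := {g | g ∈ K ∧ SameLine (g * a * g⁻¹) a}
      one_mem' := ⟨one_mem K, 1, one_mem _, by simp⟩
      mul_mem' := by
        rintro g h ⟨hg, z, hz, ez⟩ ⟨hh, w, hw, ew⟩
        refine ⟨mul_mem hg hh, w * z, mul_mem hw hz, ?_⟩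
        have hcen := Subgroup.mem_center_iff.1 (scal_le_center _ _ hw) g
        calc (g * h) * a * (g * h)⁻¹ = g * (h * a * h⁻¹) * g⁻¹ := by group
          _ = (g * w) * a * g⁻¹ := by rw [ew]; group
          _ = w * (g * a * g⁻¹) := by rw [hcen]; group
          _ = w * z * a := by rw [ez]; group
      inv_mem' := by
        rintro g ⟨hg, hg'⟩
        refine ⟨inv_mem hg, ?_⟩
        have := hinv (g := g) (h := 1) a hg' ⟨1, one_mem _, by simp⟩
        simpa using this }
  have hN : ∀ g, g ∈ N ↔ g ∈ K ∧ SameLine (g * a * g⁻¹) a := fun _ => Iff.rfl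
  have hNK : N ≤ K := fun g hg => hg.1
  have hZN : scal F (Matrix (Fin 2) (Fin 2) F) ≤ N := by
    intro z hz
    refine ⟨hZ hz, 1, one_mem _, ?_⟩
    have hcen := Subgroup.mem_center_iff.1 (scal_le_center _ _ hz) a
    rw [← hcen]; group
  have b1 : (scal F (Matrix (Fin 2) (Fin 2) F)).relIndex N ≤ 2 := by
    have := relIndex_le_of_map (scal F (Matrix (Fin 2) (Fin 2) F)) N
      (fun g => decide (g * a = a * g)) (by
        intro g hg h hh e
        rw [decide_eq_decide] at e
        exact case_two_centr h2 K hZ haK hc (mul_mem (inv_mem (hNK hg)) (hNK hh))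
          (pm_same (pm_of_line _ _ hg.2) (pm_of_line _ _ hh.2) e))
    simpa using this
  have b2 : N.relIndex K ≤ 3 := by
    have hl : ∀ g : GL (Fin 2) F, ∃ d : Fin 3, g ∈ K → SameLine (g * a * g⁻¹) (![a, b, a * b] d) := by
      intro g
      by_cases hg : g ∈ K
      · obtain ⟨d, hd, hd'⟩ := hc.lines g hg a (by simp)
        rcases hd with rfl | rfl | rfl
        · exact ⟨0, fun _ => hd'⟩
        · exact ⟨1, fun _ => hd'⟩
        · exact ⟨2, fun _ => hd'⟩
      · exact ⟨0, fun h => absurd h hg⟩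
    choose d hd using hl
    have := relIndex_le_of_map N K d (by
        intro g hg h hh e
        refine ⟨mul_mem (inv_mem hg) hh, hinv _ (hd g hg) ?_⟩
        rw [e]
        exact hd h hh)
    simpa using this
  have := Subgroup.relIndex_mul_relIndex _ _ _ hZN hNK
  rw [← this]
  calc _ ≤ 2 * 3 := Nat.mul_le_mul b1 b2
    _ = 6 := rfl

end PartTwelveC

section PartTwelveD

variable {F : Type*} [Field F]

theorem two_step [Finite F] (h2 : (2 : F) ≠ 0) (h3 : (3 : F) ≠ 0) (p : ℕ) [Fact p.Prime] [CharP F p]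
    (H : Subgroup (GL (Fin 2) F)) (hs : Group.IsSolvable H) (hp : ¬ p ∣ Nat.card H)
    (hZ : scal F (Matrix (Fin 2) (Fin 2) F) ≤ H) (K : Subgroup (GL (Fin 2) F))
    (hZK : scal F (Matrix (Fin 2) (Fin 2) F) ≤ K) :
    ∃ (y : GL (Fin 2) F) (K' : Subgroup (GL (Fin 2) F)), (y : Matrix (Fin 2) (Fin 2) F).det = 1 ∧
      (∀ g, g ∈ K' ↔ g ∈ K ∧ y * g * y⁻¹ ∈ H) ∧ scal F (Matrix (Fin 2) (Fin 2) F) ≤ K' ∧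
      (K ≤ scal F (Matrix (Fin 2) (Fin 2) F) ∨ 2 * (scal F (Matrix (Fin 2) (Fin 2) F)).relIndex K' ≤
        (scal F (Matrix (Fin 2) (Fin 2) F)).relIndex K) := by
  have hK' : ∀ (y : GL (Fin 2) F), ∃ K' : Subgroup (GL (Fin 2) F), (∀ g, g ∈ K' ↔ g ∈ K ∧ y * g * y⁻¹ ∈ H) ∧
      scal F (Matrix (Fin 2) (Fin 2) F) ≤ K' := by
    intro y
    refine ⟨K ⊓ H.comap (MulAut.conj y).toMonoidHom, fun g => Iff.rfl, ?_⟩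
    intro z hz
    refine ⟨hZK hz, ?_⟩
    have hcen := Subgroup.mem_center_iff.1 (scal_le_center _ _ hz) y
    change y * z * y⁻¹ ∈ H
    rw [hcen, mul_inv_cancel_right]
    exact hZ hz
  by_cases hK : K ≤ scal F (Matrix (Fin 2) (Fin 2) F)
  · obtain ⟨K', h, h'⟩ := hK' 1
    exact ⟨1, K', by simp, h, h', Or.inl hK⟩
  · obtain ⟨k, hk, hns⟩ := SetLike.not_le_iff_exists.1 hK
    obtain ⟨y, hy, hyk⟩ := s_lemma h2 h3 p H hs hp k hns
    obtain ⟨K', h, h'⟩ := hK' y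
    refine ⟨y, K', hy, h, h', Or.inr ?_⟩
    have hle : K' ≤ K := fun g hg => ((h g).1 hg).1
    rw [← Subgroup.relIndex_mul_relIndex _ _ _ h' hle, mul_comm]
    apply Nat.mul_le_mul_left
    have h0 : K'.relIndex K ≠ 0 := Subgroup.index_ne_zero_of_finite
    have h1 : K'.relIndex K ≠ 1 := by
      rw [Ne, Subgroup.relIndex_eq_one]
      intro hle'
      exact hyk ((h k).1 (hle' hk)).2
    omega

theorem two_main_aux [Finite F] (h2 : (2 : F) ≠ 0) (h3 : (3 : F) ≠ 0) (p : ℕ) [Fact p.Prime] [CharP F p]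
    (H : Subgroup (GL (Fin 2) F)) (hs : Group.IsSolvable H) (hp : ¬ p ∣ Nat.card H)
    (hZ : scal F (Matrix (Fin 2) (Fin 2) F) ≤ H) :
    ∃ x y z : GL (Fin 2) F, (x : Matrix (Fin 2) (Fin 2) F).det = 1 ∧ (y : Matrix (Fin 2) (Fin 2) F).det = 1 ∧
      (z : Matrix (Fin 2) (Fin 2) F).det = 1 ∧ ∀ g ∈ H, x * g * x⁻¹ ∈ H → y * g * y⁻¹ ∈ H → z * g * z⁻¹ ∈ H →
        g ∈ scal F (Matrix (Fin 2) (Fin 2) F) := by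
  by_cases hH : H ≤ scal F (Matrix (Fin 2) (Fin 2) F)
  · exact ⟨1, 1, 1, by simp, by simp, by simp, fun g hg _ _ _ => hH hg⟩
  obtain ⟨x, hx, hx8⟩ : ∃ x : GL (Fin 2) F, (x : Matrix (Fin 2) (Fin 2) F).det = 1 ∧
      (scal F (Matrix (Fin 2) (Fin 2) F)).relIndex (H ⊓ H.comap (MulAut.conj x).toMonoidHom) ≤ 6 := by
    have hnorm : ∀ g ∈ H, ∀ h ∈ H, g * h * g⁻¹ ∈ H := fun g hg h hh => mul_mem (mul_mem hg hh) (inv_mem hg)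
    rcases structure_two h2 p H hs hp hH with ⟨a, ha⟩ | ⟨a, b, haH, hbH, hab⟩
    · obtain ⟨x, hx, hxa⟩ : ∃ x : GL (Fin 2) F, (x : Matrix (Fin 2) (Fin 2) F).det = 1 ∧
          (x⁻¹ * a * x) * a ≠ a * (x⁻¹ * a * x) := by
        by_contra hcon
        push Not at hcon
        apply ha.ns
        apply t_lemma h2 h3 a
        intro u hu
        refine ⟨1, le_rfl, by norm_num, ?_⟩
        rw [pow_one]
        have hu' : ((u⁻¹ : GL (Fin 2) F) : Matrix (Fin 2) (Fin 2) F).det = 1 := by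
          have h5 := congrArg Matrix.det u.mul_inv
          rwa [Matrix.det_mul, hu, one_mul, Matrix.det_one] at h5
        have h4 := hcon u⁻¹ hu'
        rw [inv_inv] at h4
        rcases pm_of_comm h2 a ((u * a * u⁻¹ : GL (Fin 2) F) : Matrix (Fin 2) (Fin 2) F) (not_scal ha.ns)
          (by rw [← Units.val_mul, h4, Units.val_mul]) ha.tr
          (by rw [Units.val_mul, Units.val_mul, tr_conj, ha.tr]) a.det_ne_zero
          (by rw [Units.val_mul, Units.val_mul, de_conj]) with h | h
        · left; exact Units.ext h
        · right; exact h
      refine ⟨x, hx, le_trans (bound_one (a := a) (b := x⁻¹ * a * x) _ ha.ns hxa.symm ?_ ?_) (by norm_num)⟩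
      · intro g hg
        exact ha.pm g (hnorm g hg.1)
      · intro g hg
        have h4 : PM (x * g * x⁻¹) a := ha.pm _ (hnorm _ hg.2)
        have e : g * (x⁻¹ * a * x) * g⁻¹ = x⁻¹ * ((x * g * x⁻¹) * a * (x * g * x⁻¹)⁻¹) * x := by group
        rcases h4 with h4 | h4
        · left; rw [e, h4]
        · right
          rw [e, Units.val_mul, Units.val_mul, h4, mul_neg, neg_mul, Units.val_mul, Units.val_mul]
    · obtain ⟨x, hx, hxa⟩ := s_lemma h2 h3 p H hs hp a (anti_ns h2 a b hab.anti)
      refine ⟨x, hx, bound_two h2 (a := a) (b := b) _ ?_ ?_ ⟨hab.anti, ?_⟩⟩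
      · intro z hz
        refine ⟨hZ hz, ?_⟩
        have hcen := Subgroup.mem_center_iff.1 (scal_le_center _ _ hz) x
        change x * z * x⁻¹ ∈ H
        rw [hcen, mul_inv_cancel_right]
        exact hZ hz
      · intro h
        exact hxa h.2
      · intro g hg
        exact hab.lines g (hnorm g hg.1)
  set K1 := H ⊓ H.comap (MulAut.conj x).toMonoidHom with hK1
  have hZK1 : scal F (Matrix (Fin 2) (Fin 2) F) ≤ K1 := by
    intro z hz
    refine ⟨hZ hz, ?_⟩
    have hcen := Subgroup.mem_center_iff.1 (scal_le_center _ _ hz) x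
    change x * z * x⁻¹ ∈ H
    rw [hcen, mul_inv_cancel_right]
    exact hZ hz
  obtain ⟨y, K2, hy, hK2, hZK2, hor2⟩ := two_step h2 h3 p H hs hp hZ K1 hZK1
  obtain ⟨z, K3, hz, hK3, hZK3, hor3⟩ := two_step h2 h3 p H hs hp hZ K2 hZK2
  refine ⟨x, y, z, hx, hy, hz, ?_⟩
  intro g hg h4 h5 h6
  have g1 : g ∈ K1 := ⟨hg, h4⟩
  have g2 : g ∈ K2 := (hK2 g).2 ⟨g1, h5⟩
  have g3 : g ∈ K3 := (hK3 g).2 ⟨g2, h6⟩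
  rcases hor2 with h | h
  · exact h g1
  rcases hor3 with h' | h'
  · exact h' g2
  have h0 : (scal F (Matrix (Fin 2) (Fin 2) F)).relIndex K3 ≠ 0 := Subgroup.index_ne_zero_of_finite
  have h1 : (scal F (Matrix (Fin 2) (Fin 2) F)).relIndex K3 = 1 := by omega
  exact (Subgroup.relIndex_eq_one.1 h1) g3

theorem scal_card [Finite F] (p : ℕ) [hpf : Fact p.Prime] [CharP F p] :
    ¬ p ∣ Nat.card (scal F (Matrix (Fin 2) (Fin 2) F)) := by
  intro h
  obtain ⟨⟨z, c, hc⟩, hz⟩ := exists_prime_orderOf_dvd_card' p h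
  have h1 : z ^ p = 1 := by
    have := pow_orderOf_eq_one (⟨z, c, hc⟩ : scal F (Matrix (Fin 2) (Fin 2) F))
    rw [hz] at this
    exact congrArg Subtype.val this
  have h2 : c ^ p = 1 := by
    have h3 := congrArg Units.val h1
    rw [Units.val_pow_eq_pow_val, hc, smul_pow, one_pow] at h3
    have := congrFun (congrFun h3 0) 0
    simpa using this
  have h4 : c = 1 := by
    have h5 : (c - 1) ^ p = 0 := by rw [sub_pow_char, h2, one_pow, sub_self]
    exact sub_eq_zero.1 (pow_eq_zero_iff hpf.out.ne_zero |>.1 h5)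
  have h6 : z = 1 := Units.ext (by rw [hc, h4, one_smul]; rfl)
  have h7 : orderOf (⟨z, c, hc⟩ : scal F (Matrix (Fin 2) (Fin 2) F)) = 1 := by
    rw [orderOf_eq_one_iff]
    exact Subtype.ext h6
  rw [hz] at h7
  exact hpf.out.one_lt.ne' h7

theorem two_main [Finite F] (h2 : (2 : F) ≠ 0) (h3 : (3 : F) ≠ 0) (p : ℕ) [hpf : Fact p.Prime] [CharP F p]
    (H : Subgroup (GL (Fin 2) F)) (hs : Group.IsSolvable H) (hp : ¬ p ∣ Nat.card H) :
    ∃ x y z : GL (Fin 2) F, (x : Matrix (Fin 2) (Fin 2) F).det = 1 ∧ (y : Matrix (Fin 2) (Fin 2) F).det = 1 ∧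
      (z : Matrix (Fin 2) (Fin 2) F).det = 1 ∧ ∀ g ∈ H, x * g * x⁻¹ ∈ H → y * g * y⁻¹ ∈ H → z * g * z⁻¹ ∈ H →
        g ∈ scal F (Matrix (Fin 2) (Fin 2) F) := by
  have hcen : ∀ z ∈ scal F (Matrix (Fin 2) (Fin 2) F), ∀ g, g * z = z * g := fun z hz g =>
    Subgroup.mem_center_iff.1 (scal_le_center _ _ hz) g
  let φ := MonoidHom.noncommCoprod H.subtype (scal F (Matrix (Fin 2) (Fin 2) F)).subtype
    (fun g z => hcen z z.2 g)
  have hle1 : H ≤ φ.range := by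
    intro g hg
    exact ⟨(⟨g, hg⟩, 1), mul_one g⟩
  have hle2 : scal F (Matrix (Fin 2) (Fin 2) F) ≤ φ.range := by
    intro g hg
    exact ⟨(1, ⟨g, hg⟩), one_mul g⟩
  have hsc : Group.IsSolvable (scal F (Matrix (Fin 2) (Fin 2) F)) :=
    Group.isSolvable_of_comm (fun a b => Subtype.ext (hcen b b.2 a))
  have hsol : Group.IsSolvable φ.range :=
    Group.isSolvable_of_surjective (f := φ.rangeRestrict) φ.rangeRestrict_surjective
  have hcard : ¬ p ∣ Nat.card φ.range := by
    intro h
    have h4 := h.trans (Subgroup.card_dvd_of_surjective φ.rangeRestrict φ.rangeRestrict_surjective)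
    rw [Nat.card_prod] at h4
    rcases hpf.out.dvd_mul.1 h4 with h5 | h5
    · exact hp h5
    · exact scal_card p h5
  obtain ⟨x, y, z, hx, hy, hz, h⟩ := two_main_aux h2 h3 p φ.range hsol hcard hle2
  exact ⟨x, y, z, hx, hy, hz, fun g hg h4 h5 h6 => h g (hle1 hg) (hle1 h4) (hle1 h5) (hle1 h6)⟩

end PartTwelveD

section PartThirteen

theorem many_main {F : Type*} [Field F] [Finite F] {n : ℕ} (hn : 3 ≤ n) (h2 : (2 : F) ≠ 0) (h3 : (3 : F) ≠ 0)
    (p : ℕ) [hpf : Fact p.Prime] [CharP F p]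
    (H : Subgroup (GL (Fin n) F)) (hs : Group.IsSolvable H) (hp : ¬ p ∣ Nat.card H) (hH : ¬ 2 ∣ H.index) :
    ∃ x y z : GL (Fin n) F, (x : Matrix (Fin n) (Fin n) F).det = 1 ∧ (y : Matrix (Fin n) (Fin n) F).det = 1 ∧
      (z : Matrix (Fin n) (Fin n) F).det = 1 ∧ ∀ g ∈ H, x * g * x⁻¹ ∈ H → y * g * y⁻¹ ∈ H → z * g * z⁻¹ ∈ H →
        ∃ c : F, (g : Matrix (Fin n) (Fin n) F) = c • 1 := by
  let φ : GL (Fin n) F ≃* (Module.End F (Fin n → F))ˣ :=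
    Units.mapEquiv (Matrix.toLinAlgEquiv' (R := F) (n := Fin n)).toMulEquiv
  have hφ : ∀ g : GL (Fin n) F, ((φ g : (Module.End F (Fin n → F))ˣ) : Module.End F (Fin n → F)) =
      Matrix.toLin' (g : Matrix (Fin n) (Fin n) F) := fun g => rfl
  let H' := H.map φ.toMonoidHom
  have hmem : ∀ g ∈ H, φ g ∈ H' := fun g hg => ⟨g, hg, rfl⟩
  have hs' : Group.IsSolvable H' :=
    Group.isSolvable_of_surjective (f := φ.toMonoidHom.subgroupMap H) (MonoidHom.subgroupMap_surjective _ _)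
  have hp' : ¬ p ∣ Nat.card H' := fun h => hp (h.trans (Subgroup.card_map_dvd _ _))
  have hH' : ¬ 2 ∣ H'.index := fun h => hH (h.trans (Subgroup.index_map_dvd _ φ.surjective))
  obtain ⟨m, e, hm, he, hr, hblock⟩ := exists_blocks p (by simpa using hn) h2 h3 H' hs' hp' hH'
  obtain ⟨x, hx, hmain⟩ := base_lemma p hm e he hr
  have hdet : ∀ s, ((φ.symm (x s) : GL (Fin n) F) : Matrix (Fin n) (Fin n) F).det = 1 := by
    intro s
    have := hx s
    rw [← φ.apply_symm_apply (x s), hφ, LinearMap.det_toLin'] at this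
    exact this
  refine ⟨_, _, _, hdet 0, hdet 1, hdet 2, ?_⟩
  intro g hg g0 g1 g2
  have key : ∀ s, φ.symm (x s) * g * (φ.symm (x s))⁻¹ ∈ H := by
    intro s
    fin_cases s
    · exact g0
    · exact g1
    · exact g2
  obtain ⟨c, hc⟩ := hmain (φ g) (hblock _ (hmem g hg)) (by
    intro s
    have := hmem _ (key s)
    rw [map_mul, map_mul, map_inv, φ.apply_symm_apply] at this
    exact hblock _ this)
  refine ⟨c, ?_⟩
  rw [hφ] at hc
  apply Matrix.toLin'.injective
  rw [hc, map_smul, Matrix.toLin'_one]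
  rfl

theorem all_main {F : Type*} [Field F] [Finite F] {n : ℕ} (hn : 2 ≤ n) (h2 : (2 : F) ≠ 0) (h3 : (3 : F) ≠ 0)
    (p : ℕ) [hpf : Fact p.Prime] [CharP F p]
    (H : Subgroup (GL (Fin n) F)) (hs : Group.IsSolvable H) (hp : ¬ p ∣ Nat.card H) (hH : ¬ 2 ∣ H.index) :
    ∃ x y z : GL (Fin n) F, (x : Matrix (Fin n) (Fin n) F).det = 1 ∧ (y : Matrix (Fin n) (Fin n) F).det = 1 ∧
      (z : Matrix (Fin n) (Fin n) F).det = 1 ∧ ∀ g ∈ H, x * g * x⁻¹ ∈ H → y * g * y⁻¹ ∈ H → z * g * z⁻¹ ∈ H →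
        ∃ c : F, (g : Matrix (Fin n) (Fin n) F) = c • 1 := by
  rcases hn.eq_or_lt with rfl | hn
  · exact two_main h2 h3 p H hs hp
  · exact many_main hn h2 h3 p H hs hp hH

end PartThirteen

theorem stmt9 (p f q n : ℕ) (hp : p.Prime) (hf : 1 ≤ f) (hq : q = p ^ f)
    (F : Type) [Field F] [Fintype F] (hcard : Fintype.card F = q)
    (hn : 2 ≤ n) (hnonsolv : ¬ IsSolvable (GL (Fin n) F))
    (π : Set ℕ) (hπ : ∀ r ∈ π, r.Prime) (h2pi : 2 ∈ π) (h3pi : 3 ∈ π) (hppi : p ∉ π)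
    (H : Subgroup (GL (Fin n) F)) (hH : IsHallSubgroup π H)
    (hsolv : IsSolvable ↥H)
    :
    ∃ x y z : GL (Fin n) F,
      x ∈ (H : Set (GL (Fin n) F)) * (SLsub n F : Set (GL (Fin n) F)) ∧
      y ∈ (H : Set (GL (Fin n) F)) * (SLsub n F : Set (GL (Fin n) F)) ∧
      z ∈ (H : Set (GL (Fin n) F)) * (SLsub n F : Set (GL (Fin n) F)) ∧
    ∀ g ∈ H ⊓ conjBy H x ⊓ conjBy H y ⊓ conjBy H z,
      ∃ c : F, (g : Matrix (Fin n) (Fin n) F) = c • (1 : Matrix (Fin n) (Fin n) F) := by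
  classical
  have hpf : Fact p.Prime := ⟨hp⟩
  have hchar : CharP F p := by
    obtain ⟨r, hr⟩ := CharP.exists F
    have hrp : r.Prime := CharP.char_is_prime F r
    obtain ⟨k, _, hk⟩ := FiniteField.card F r
    have h1 : r ∣ p ^ f := by
      rw [← hq, ← hcard, hk]
      exact dvd_pow_self r k.pos.ne'
    have h4 : r = p := (Nat.prime_dvd_prime_iff_eq hrp hp).1 (hrp.dvd_of_dvd_pow h1)
    rwa [← h4]
  have hne : ∀ r ∈ π, ((r : ℕ) : F) ≠ 0 := by
    intro r hr h0
    have h1 := (CharP.cast_eq_zero_iff F p r).1 h0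
    have h4 : p = r := (Nat.prime_dvd_prime_iff_eq hp (hπ r hr)).1 h1
    rw [h4] at hppi
    exact hppi hr
  have h2 : (2 : F) ≠ 0 := by exact_mod_cast hne 2 h2pi
  have h3 : (3 : F) ≠ 0 := by exact_mod_cast hne 3 h3pi
  obtain ⟨x, y, z, hx, hy, hz, h⟩ := all_main hn h2 h3 p H hsolv
    (fun hd => hppi (hH.1 p hp hd)) (hH.2 2 h2pi)
  have hmem : ∀ x : GL (Fin n) F, (x : Matrix (Fin n) (Fin n) F).det = 1 →
      x ∈ (H : Set (GL (Fin n) F)) * (SLsub n F : Set (GL (Fin n) F)) :=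
    fun x hx => ⟨1, one_mem H, x, hx, one_mul x⟩
  have hconj : ∀ x g : GL (Fin n) F, g ∈ conjBy H x → x * g * x⁻¹ ∈ H := by
    rintro x g ⟨k, hk, rfl⟩
    have h4 : x * ((MulAut.conj x⁻¹).toMonoidHom k) * x⁻¹ = k := by
      change x * (x⁻¹ * k * x⁻¹⁻¹) * x⁻¹ = k
      group
    rw [h4]
    exact hk
  refine ⟨x, y, z, hmem x hx, hmem y hy, hmem z hz, ?_⟩
  rintro g ⟨⟨⟨g0, g1⟩, g2⟩, g3⟩
  exact h g g0 (hconj x g g1) (hconj y g g2) (hconj z g g3)
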